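/- Assume the Riemann Hypothesis. Then for all x ≥ 10^13 and all δ ∈ (0, 10^{-13}], one has J_θ(x,δ) ≤ 2.5571 · δ · (log(2.0001/δ))² · x². -/

import Mathlib

/-- The Chebyshev theta function `θ(x) = ∑_{p ≤ x} log p`. -/
noncomputable def chebyshevTheta (x : ℝ) : ℝ :=
  ∑ p ∈ (Finset.Iic ⌊x⌋₊).filter Nat.Prime, Real.log p

/-
Under the Riemann Hypothesis the Hadamard partial fractions of `ξ'/ξ`, with Stirling-type bounds for
the digamma function, control `∑ 1 / (A² + γ²)` over the ordinates of the zeros, hence their density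
near every height. The average of `ψ(a u) - ψ(u) - (a - 1) u` over `u ∈ [y, b y]` is, by the
explicit formula, an absolutely convergent sum over the zeros plus a small error. Its mean square
against the weight `x² exp (-2 |log (y / x)|) / y` is a quadratic form in the coefficients with a
positive kernel of Cauchy type in the differences of ordinates, so Schur's test and the density
bound reduce it to a diagonal sum. Letting `b → 1` gives the mean square for `ψ`, and the proper
prime powers contribute less because `ψ - θ` is monotone and `O(√z)`.
-/

open Filter Topology MeasureTheory Set

/-! ### Partial fractions for entire functions of order less than two -/

theorem exists_differentiable_eq_pow_mul {f : ℂ → ℂ} (hf : Differentiable ℂ f) {a : ℂ}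
    (hord : analyticOrderAt f a ≠ ⊤) :
    ∃ h : ℂ → ℂ, Differentiable ℂ h ∧ h a ≠ 0 ∧
      ∀ z, f z = (z - a) ^ analyticOrderNatAt f a * h z := by
  obtain ⟨g, hg, hga, hfg⟩ := (hf.analyticAt a).analyticOrderAt_ne_top.1 hord
  set m := analyticOrderNatAt f a
  have hpow {z : ℂ} (hz : z ≠ a) : (z - a) ^ m ≠ 0 := pow_ne_zero _ (sub_ne_zero.2 hz)
  classical
  set h := Function.update (fun z => f z / (z - a) ^ m) a (g a)
  have hh {z : ℂ} (hz : z ≠ a) : h z = f z / (z - a) ^ m := Function.update_of_ne hz ..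
  have hha : h a = g a := Function.update_self ..
  refine ⟨h, fun z => ?_, hha ▸ hga, fun z => ?_⟩ <;> rcases eq_or_ne z a with rfl | hz
  · refine hg.differentiableAt.congr_of_eventuallyEq ?_
    filter_upwards [hfg] with w hw
    rcases eq_or_ne w z with rfl | hwz
    · exact hha
    · rw [hh hwz, hw, smul_eq_mul, mul_div_cancel_left₀ _ (hpow hwz)]
  · have hquot : DifferentiableAt ℂ (fun z => f z / (z - a) ^ m) z :=
      (hf z).div (by fun_prop) (hpow hz)
    refine hquot.congr_of_eventuallyEq ?_
    filter_upwards [isOpen_ne.mem_nhds hz] with w hw using hh hw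
  · rw [hha, ← smul_eq_mul]
    exact hfg.self_of_nhds
  · rw [hh hz, mul_div_cancel₀ _ (hpow hz)]

theorem exists_differentiable_eq_prod_pow_mul {f : ℂ → ℂ} (hf : Differentiable ℂ f)
    (hord : ∀ a, analyticOrderAt f a ≠ ⊤) (S : Finset ℂ) :
    ∃ h : ℂ → ℂ, Differentiable ℂ h ∧ (∀ a ∈ S, h a ≠ 0) ∧
      ∀ z, f z = (∏ a ∈ S, (z - a) ^ analyticOrderNatAt f a) * h z := by
  classical
  induction S using Finset.induction_on with
  | empty => exact ⟨f, hf, by simp, by simp⟩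
  | insert b S hb ih =>
    obtain ⟨h, hh, hne, hfac⟩ := ih
    set P : ℂ → ℂ := fun z => ∏ a ∈ S, (z - a) ^ analyticOrderNatAt f a
    have hPd : Differentiable ℂ P := by fun_prop
    have hPb : P b ≠ 0 := Finset.prod_ne_zero_iff.2 fun a ha =>
      pow_ne_zero _ (sub_ne_zero.2 fun hba => hb (hba ▸ ha))
    have hordb : analyticOrderAt f b = analyticOrderAt h b := by
      rw [show f = P * h from funext hfac, analyticOrderAt_mul (hPd.analyticAt b) (hh.analyticAt b),
        (hPd.analyticAt b).analyticOrderAt_eq_zero.2 hPb, zero_add]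
    obtain ⟨k, hk, hkb, hkf⟩ := exists_differentiable_eq_pow_mul hh (hordb ▸ hord b)
    refine ⟨k, hk, fun a ha => ?_, fun z => ?_⟩
    · rcases Finset.mem_insert.1 ha with rfl | ha
      · exact hkb
      · exact right_ne_zero_of_mul (hkf a ▸ hne a ha)
    · rw [hfac z, hkf z, Finset.prod_insert hb, analyticOrderNatAt, analyticOrderNatAt, hordb]
      ring

theorem exists_hasDerivAt_logDeriv_of_ne_zero {h : ℂ → ℂ} (hh : Differentiable ℂ h) {R : ℝ}
    (hR : 0 < R) (hne : ∀ z ∈ Metric.ball (0 : ℂ) R, h z ≠ 0) :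
    ∃ φ : ℂ → ℂ, φ 0 = 0 ∧ ∀ z ∈ Metric.ball (0 : ℂ) R,
      HasDerivAt φ (logDeriv h z) z ∧ h z = h 0 * Complex.exp (φ z) := by
  have hld : DifferentiableOn ℂ (logDeriv h) (Metric.ball 0 R) := fun z hz =>
    ((hh.analyticAt z).deriv.differentiableAt.div (hh z) (hne z hz)).differentiableWithinAt
  obtain ⟨p, hp⟩ := hld.isExactOn_ball
  have hφ : ∀ z ∈ Metric.ball (0 : ℂ) R, HasDerivAt (fun z => p z - p 0) (logDeriv h z) z :=
    fun z hz => (hp z hz).sub_const _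
  refine ⟨fun z => p z - p 0, sub_self _, fun z hz => ⟨hφ z hz, ?_⟩⟩
  set F : ℂ → ℂ := fun z => h z * Complex.exp (-(p z - p 0))
  have hF : ∀ z ∈ Metric.ball (0 : ℂ) R, HasDerivAt F 0 z := fun z hz => by
    refine ((hh z).hasDerivAt.mul (hφ z hz).neg.cexp).congr_deriv ?_
    rw [logDeriv_apply, Pi.neg_apply]
    field_simp [hne z hz]
    ring
  have hconst : F z = F 0 := Metric.isOpen_ball.is_const_of_deriv_eq_zero
    (convex_ball (0 : ℂ) R).isPreconnected
    (fun w hw => (hF w hw).differentiableAt.differentiableWithinAt)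
    (fun w hw => (hF w hw).deriv) hz (Metric.mem_ball_self hR)
  have hF0 : F 0 = h 0 := by simp [F]
  rw [← hF0, ← hconst, mul_assoc, ← Complex.exp_add, neg_add_cancel, Complex.exp_zero, mul_one]

theorem norm_deriv_le_of_forall_closedBall_norm_le {f : ℂ → ℂ} {r s R C : ℝ} (hs : 0 < s)
    (hsR : r + s < R) (hf : DifferentiableOn ℂ f (Metric.ball 0 R))
    (hC : ∀ z, ‖z‖ ≤ r + s → ‖f z‖ ≤ C) {z : ℂ} (hz : ‖z‖ ≤ r) : ‖deriv f z‖ ≤ C / s := by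
  have hball {w : ℂ} (hw : w ∈ Metric.closedBall z s) : ‖w‖ ≤ r + s := by
    have := norm_le_norm_add_norm_sub' w z
    rw [mem_closedBall_iff_norm] at hw
    linarith
  refine Complex.norm_deriv_le_of_forall_mem_sphere_norm_le hs
    (DifferentiableOn.diffContOnCl (hf.mono fun w hw => ?_)) fun w hw =>
    hC w (hball (Metric.sphere_subset_closedBall hw))
  rw [mem_ball_zero_iff]
  exact (hball (Metric.closure_ball_subset_closedBall hw)).trans_lt hsR

-- Borel–Carathéodory bounds a logarithm of `h`; two Cauchy estimates then bound `(h' / h)'`.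
theorem norm_logDeriv_sub_le_of_ne_zero {h : ℂ → ℂ} (hh : Differentiable ℂ h) {R E : ℝ}
    (hR : 0 < R) (hE : 0 < E) (hne : ∀ z ∈ Metric.ball (0 : ℂ) R, h z ≠ 0)
    (hbd : ∀ z ∈ Metric.ball (0 : ℂ) R, ‖h z‖ ≤ ‖h 0‖ * Real.exp E)
    {z w : ℂ} (hz : ‖z‖ ≤ R / 8) (hw : ‖w‖ ≤ R / 8) :
    ‖logDeriv h z - logDeriv h w‖ ≤ 64 * E / R ^ 2 * ‖z - w‖ := by
  obtain ⟨φ, hφ0, hφ⟩ := exists_hasDerivAt_logDeriv_of_ne_zero hh hR hne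
  have hφd : DifferentiableOn ℂ φ (Metric.ball 0 R) := fun x hx =>
    (hφ x hx).1.differentiableAt.differentiableWithinAt
  have hre : Set.MapsTo φ (Metric.ball 0 R) {z | z.re ≤ E} := fun x hx => by
    have hx' := hbd x hx
    rw [(hφ x hx).2, norm_mul, Complex.norm_exp] at hx'
    exact Real.exp_le_exp.1
      (le_of_mul_le_mul_left hx' (norm_pos_iff.2 (hne 0 (Metric.mem_ball_self hR))))
  have hφ_le : ∀ x : ℂ, ‖x‖ ≤ R / 4 + R / 4 → ‖φ x‖ ≤ 2 * E := fun x hx => by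
    have hxR : ‖x‖ < R := by linarith
    refine (Complex.borelCaratheodory_zero hE hφd hre hR (mem_ball_zero_iff.2 hxR) hφ0).trans ?_
    rw [div_le_iff₀ (by linarith)]
    nlinarith
  have hld_le : ∀ x : ℂ, ‖x‖ ≤ R / 8 + R / 8 → ‖logDeriv h x‖ ≤ 8 * E / R := fun x hx => by
    rw [← (hφ x (mem_ball_zero_iff.2 (by linarith))).1.deriv]
    refine (norm_deriv_le_of_forall_closedBall_norm_le (by positivity) (by linarith) hφd hφ_le
      (by linarith : ‖x‖ ≤ R / 4)).trans_eq ?_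
    field_simp
    norm_num
  have hld : DifferentiableOn ℂ (logDeriv h) (Metric.ball 0 R) := fun x hx =>
    ((hh.analyticAt x).deriv.differentiableAt.div (hh x) (hne x hx)).differentiableWithinAt
  refine (convex_closedBall (0 : ℂ) (R / 8)).norm_image_sub_le_of_norm_deriv_le
    (fun x hx => ?_) (fun x hx => ?_) (mem_closedBall_zero_iff.2 hw) (mem_closedBall_zero_iff.2 hz)
    <;> rw [mem_closedBall_zero_iff] at hx
  · exact hld.differentiableAt (Metric.isOpen_ball.mem_nhds (mem_ball_zero_iff.2 (by linarith)))
  · refine (norm_deriv_le_of_forall_closedBall_norm_le (by positivity) (by linarith) hld hld_le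
      hx).trans_eq ?_
    field_simp
    norm_num

theorem finite_zeros_inter_closedBall {f : ℂ → ℂ} (hf : Differentiable ℂ f) (h0 : f 0 ≠ 0)
    (R : ℝ) : ({z | f z = 0} ∩ Metric.closedBall 0 R).Finite := by
  have hA : AnalyticOnNhd ℂ f Set.univ := fun x _ => hf.analyticAt x
  have hdisc := (mem_codiscrete'.1 (hA.preimage_zero_mem_codiscrete h0)).2
  rw [Set.preimage_compl, compl_compl] at hdisc
  have hcl : IsClosed {z | f z = 0} := isClosed_eq hf.continuous continuous_const
  rw [Set.inter_comm]
  exact ((isCompact_closedBall (0 : ℂ) R).inter_right hcl).finite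
    (hdisc.mono Set.inter_subset_right)

theorem logDeriv_prod_pow_mul {h : ℂ → ℂ} (hh : Differentiable ℂ h) (S : Finset ℂ) (m : ℂ → ℕ)
    {z : ℂ} (hS : ∀ a ∈ S, z ≠ a) (hz : h z ≠ 0) :
    logDeriv (fun z => (∏ a ∈ S, (z - a) ^ m a) * h z) z =
      ∑ a ∈ S, (m a : ℂ) * (1 / (z - a)) + logDeriv h z := by
  have hpow : ∀ a ∈ S, (z - a) ^ m a ≠ 0 := fun a ha => pow_ne_zero _ (sub_ne_zero.2 (hS a ha))
  rw [logDeriv_mul z (Finset.prod_ne_zero_iff.2 hpow) hz (by fun_prop) (hh z),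
    logDeriv_prod (f := fun a z => (z - a) ^ m a) hpow fun a _ => by fun_prop]
  congr 1
  refine Finset.sum_congr rfl fun a _ => ?_
  rw [logDeriv_fun_pow (by fun_prop), logDeriv_apply, deriv_sub_const, deriv_id'']

-- On the circle of radius `3 R` each factor `z - a` with `‖a‖ ≤ R` is larger than at `0`, so the
-- maximum principle transfers the growth of the product to the cofactor `h`.
theorem norm_le_of_prod_pow_mul_norm_le {h : ℂ → ℂ} (hh : Differentiable ℂ h) {S : Finset ℂ}
    {m : ℂ → ℕ} {R B : ℝ} (hR : 0 < R) (hS : ∀ a ∈ S, ‖a‖ ≤ R) (h0 : (0 : ℂ) ∉ S)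
    (hB : ∀ z : ℂ, ‖z‖ = 3 * R → ‖(∏ a ∈ S, (z - a) ^ m a) * h z‖ ≤
      ‖(∏ a ∈ S, (0 - a) ^ m a) * h 0‖ * B) {z : ℂ} (hz : ‖z‖ ≤ 3 * R) :
    ‖h z‖ ≤ ‖h 0‖ * B := by
  refine Complex.norm_le_of_forall_mem_frontier_norm_le (U := Metric.ball (0 : ℂ) (3 * R))
    Metric.isBounded_ball hh.diffContOnCl (fun w hw => ?_) ?_
  · rw [frontier_ball _ (by positivity), mem_sphere_zero_iff_norm] at hw
    have hprod : ‖∏ a ∈ S, (0 - a) ^ m a‖ ≤ ‖∏ a ∈ S, (w - a) ^ m a‖ := by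
      simp only [norm_prod, norm_pow]
      gcongr with a ha
      rw [zero_sub, norm_neg]
      linarith [hS a ha, norm_sub_norm_le w a]
    have hpos : 0 < ‖∏ a ∈ S, (0 - a) ^ m a‖ := norm_pos_iff.2 <| Finset.prod_ne_zero_iff.2
      fun a ha => pow_ne_zero _ (sub_ne_zero.2 fun h0a => h0 (h0a ▸ ha))
    refine le_of_mul_le_mul_left ?_ hpos
    calc _ ≤ ‖∏ a ∈ S, (w - a) ^ m a‖ * ‖h w‖ := by gcongr
      _ ≤ ‖∏ a ∈ S, (0 - a) ^ m a‖ * ‖h 0‖ * B := by simpa only [norm_mul] using hB w hw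
      _ = _ := mul_assoc ..
  · rwa [closure_ball _ (by positivity), mem_closedBall_zero_iff]

theorem norm_sum_zeros_sub_logDeriv_le {f : ℂ → ℂ} (hf : Differentiable ℂ f) (h0 : f 0 ≠ 0)
    {R E : ℝ} (hR : 0 < R) (hE : 0 < E)
    (hgrowth : ∀ z, ‖z‖ = 3 * R → ‖f z‖ ≤ ‖f 0‖ * Real.exp E) {z w : ℂ} (hz : f z ≠ 0)
    (hw : f w ≠ 0) (hzR : ‖z‖ ≤ R / 8) (hwR : ‖w‖ ≤ R / 8) :
    ‖∑ a ∈ (finite_zeros_inter_closedBall hf h0 R).toFinset,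
      (analyticOrderNatAt f a : ℂ) * (1 / (z - a) - 1 / (w - a)) -
      (logDeriv f z - logDeriv f w)‖ ≤ 64 * E / R ^ 2 * ‖z - w‖ := by
  have hA : AnalyticOnNhd ℂ f Set.univ := fun x _ => hf.analyticAt x
  have hord : ∀ a, analyticOrderAt f a ≠ ⊤ := fun a =>
    hA.analyticOrderAt_ne_top_of_isPreconnected isPreconnected_univ (mem_univ 0) (mem_univ a)
      (by rw [(hf.analyticAt 0).analyticOrderAt_eq_zero.2 h0]; exact ENat.zero_ne_top)
  set S := (finite_zeros_inter_closedBall hf h0 R).toFinset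
  have hS : ∀ a, a ∈ S ↔ f a = 0 ∧ ‖a‖ ≤ R := fun a => by simp [S]
  obtain ⟨h, hh, hne, hfac⟩ := exists_differentiable_eq_prod_pow_mul hf hord S
  have hh_ne : ∀ x ∈ Metric.ball (0 : ℂ) R, h x ≠ 0 := fun x hx hx0 =>
    hne x ((hS x).2 ⟨by rw [hfac x, hx0, mul_zero], (mem_ball_zero_iff.1 hx).le⟩) hx0
  have hh_le : ∀ x ∈ Metric.ball (0 : ℂ) R, ‖h x‖ ≤ ‖h 0‖ * Real.exp E := fun x hx => by
    rw [mem_ball_zero_iff] at hx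
    refine norm_le_of_prod_pow_mul_norm_le (m := analyticOrderNatAt f) hh hR
      (fun a ha => ((hS a).1 ha).2)
      (fun hmem => h0 ((hS 0).1 hmem).1) (fun y hy => ?_) (by linarith : ‖x‖ ≤ 3 * R)
    rw [← hfac y, ← hfac 0]
    exact hgrowth y hy
  have hld : ∀ x, f x ≠ 0 → logDeriv f x =
      ∑ a ∈ S, (analyticOrderNatAt f a : ℂ) * (1 / (x - a)) + logDeriv h x := fun x hx => by
    have hxS : ∀ a ∈ S, x ≠ a := by
      rintro a ha rfl
      exact hx ((hS x).1 ha).1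
    rw [← logDeriv_prod_pow_mul hh S _ hxS (right_ne_zero_of_mul (hfac x ▸ hx))]
    exact congrArg (logDeriv · x) (funext hfac)
  refine le_of_eq_of_le ?_
    (norm_logDeriv_sub_le_of_ne_zero hh hR hE hh_ne hh_le hzR hwR)
  rw [hld z hz, hld w hw, ← norm_neg]
  simp only [mul_sub, Finset.sum_sub_distrib]
  congr 1
  ring

theorem tendsto_mul_rpow_add_div_sq (C K : ℝ) {b α : ℝ} (hb : 0 < b) (hα : α < 2) :
    Tendsto (fun R : ℝ => (C * (1 + b * R) ^ α + K) / R ^ 2) atTop (𝓝 0) := by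
  have hbase : Tendsto (fun R : ℝ => (R⁻¹ + b) ^ α) atTop (𝓝 (b ^ α)) := by
    simpa only [zero_add] using
      (tendsto_inv_atTop_zero.add_const b).rpow_const (Or.inl (by rw [zero_add]; exact hb.ne'))
  have hpow : Tendsto (fun R : ℝ => R ^ (α - 2)) atTop (𝓝 0) := by
    simpa only [neg_sub] using tendsto_rpow_neg_atTop (sub_pos.2 hα)
  have hsq : Tendsto (fun R : ℝ => K / R ^ 2) atTop (𝓝 0) :=
    tendsto_const_nhds.div_atTop (tendsto_pow_atTop two_ne_zero)
  have hlim := ((hbase.mul hpow).const_mul C).add hsq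
  rw [mul_zero, mul_zero, zero_add] at hlim
  refine hlim.congr' ?_
  filter_upwards [eventually_gt_atTop 0] with R hR
  have hfactor : 1 + b * R = (R⁻¹ + b) * R := by field_simp
  rw [hfactor, Real.mul_rpow (by positivity) hR.le, Real.rpow_sub hR, Real.rpow_two]
  ring

theorem tendsto_sum_zeros_logDeriv_sub {f : ℂ → ℂ} (hf : Differentiable ℂ f) (h0 : f 0 ≠ 0)
    {C α : ℝ} (hα : α < 2) (hgrowth : ∀ z, ‖f z‖ ≤ Real.exp (C * (1 + ‖z‖) ^ α))
    {z w : ℂ} (hz : f z ≠ 0) (hw : f w ≠ 0) :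
    Tendsto (fun R : ℝ => ∑ a ∈ (finite_zeros_inter_closedBall hf h0 R).toFinset,
      (analyticOrderNatAt f a : ℂ) * (1 / (z - a) - 1 / (w - a))) atTop
      (𝓝 (logDeriv f z - logDeriv f w)) := by
  set E : ℝ → ℝ := fun R => |C| * (1 + 3 * R) ^ α + (|Real.log ‖f 0‖| + 1)
  have hsphere : ∀ R, 0 < R → ∀ z : ℂ, ‖z‖ = 3 * R → ‖f z‖ ≤ ‖f 0‖ * Real.exp (E R) := by
    intro R hR z hz
    refine (hgrowth z).trans ?_
    rw [hz, ← Real.exp_log (norm_pos_iff.2 h0), ← Real.exp_add]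
    have hC : C * (1 + 3 * R) ^ α ≤ |C| * (1 + 3 * R) ^ α := by gcongr; exact le_abs_self C
    exact Real.exp_le_exp.2 (by linarith [neg_abs_le (Real.log ‖f 0‖)])
  have hlim : Tendsto (fun R : ℝ => 64 * E R / R ^ 2 * ‖z - w‖) atTop (𝓝 0) := by
    simpa only [mul_zero, zero_mul, mul_div_assoc] using
      ((tendsto_mul_rpow_add_div_sq |C| (|Real.log ‖f 0‖| + 1) three_pos hα).const_mul
        64).mul_const ‖z - w‖
  rw [tendsto_iff_norm_sub_tendsto_zero]
  refine squeeze_zero' (Eventually.of_forall fun _ => norm_nonneg _) ?_ hlim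
  filter_upwards [eventually_ge_atTop (8 * ‖z‖), eventually_ge_atTop (8 * ‖w‖),
    eventually_gt_atTop 0] with R hRz hRw hR
  exact norm_sum_zeros_sub_logDeriv_le hf h0 hR (by positivity) (hsphere R hR) hz hw
    (by linarith) (by linarith)

/-! ### Growth and zeros of `ξ` -/

theorem norm_mellin_le_integral (f : ℝ → ℂ) (s : ℂ) :
    ‖mellin f s‖ ≤ ∫ t in Ioi (0 : ℝ), t ^ (s.re - 1) * ‖f t‖ := by
  refine (norm_integral_le_integral_norm _).trans_eq
    (setIntegral_congr_fun measurableSet_Ioi fun t ht => ?_)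
  rw [norm_smul, Complex.norm_cpow_eq_rpow_re_of_pos ht, Complex.sub_re, Complex.one_re]

theorem integrableOn_rpow_mul_norm {f : ℝ → ℂ} {u : ℝ} (hf : MellinConvergent f u) :
    IntegrableOn (fun t : ℝ => t ^ (u - 1) * ‖f t‖) (Ioi 0) := by
  refine (integrableOn_congr_fun (fun t ht => ?_) measurableSet_Ioi).1 hf.norm
  rw [norm_smul, Complex.norm_cpow_eq_rpow_re_of_pos ht, Complex.sub_re, Complex.one_re,
    Complex.ofReal_re]

theorem integrableOn_pow_mul_exp_neg_mul (n : ℕ) {p : ℝ} (hp : 0 < p) :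
    IntegrableOn (fun t : ℝ => t ^ n * Real.exp (-p * t)) (Ioi 0) := by
  have hn : (-1 : ℝ) < n := neg_one_lt_zero.trans_le n.cast_nonneg
  simpa only [Real.rpow_natCast, Real.rpow_one] using
    integrableOn_rpow_mul_exp_neg_mul_rpow hn one_pos hp

theorem integral_pow_mul_exp_neg_mul (n : ℕ) {p : ℝ} (hp : 0 < p) :
    ∫ t in Ioi (0 : ℝ), t ^ n * Real.exp (-p * t) = n.factorial / p ^ (n + 1) := by
  have h := Real.integral_rpow_mul_exp_neg_mul_Ioi (a := n + 1) (r := p) (by positivity) hp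
  rw [Real.Gamma_nat_eq_factorial, ← Nat.cast_succ, Real.rpow_natCast, one_div_pow,
    one_div_mul_eq_div] at h
  simpa only [Nat.cast_succ, add_sub_cancel_right, Real.rpow_natCast, neg_mul] using h

theorem exists_norm_mellin_le_of_isBigO_exp {f : ℝ → ℂ} {a p : ℝ} (hf : ∀ s, MellinConvergent f s)
    (hp : 0 < p) (hO : f =O[atTop] fun t => Real.exp (-p * t)) :
    ∃ T K C : ℝ, 0 ≤ K ∧ 0 ≤ C ∧ 1 ≤ T ∧ ∀ (n : ℕ) (s : ℂ), a ≤ s.re → s.re - a ≤ n →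
      s.re - 1 ≤ n → ‖mellin f s‖ ≤ K * T ^ n + C * (n.factorial / p ^ (n + 1)) := by
  obtain ⟨C, hC0, hC⟩ := hO.exists_pos
  obtain ⟨T₀, hT₀⟩ := eventually_atTop.1 hC.bound
  set T := max T₀ 1
  have hT1 : 1 ≤ T := le_max_right ..
  refine ⟨T, ∫ t in Ioi (0 : ℝ), t ^ (a - 1) * ‖f t‖, C,
    setIntegral_nonneg measurableSet_Ioi fun t ht => ?_, hC0.le, hT1, fun n s hs hn hn' => ?_⟩
  · have : (0 : ℝ) < t := ht
    positivity
  have hhead := (integrableOn_rpow_mul_norm (hf a)).const_mul (T ^ n)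
  have htail := (integrableOn_pow_mul_exp_neg_mul n hp).const_mul C
  refine (norm_mellin_le_integral f s).trans ?_
  rw [← integral_pow_mul_exp_neg_mul n hp, mul_comm _ (T ^ n), ← integral_const_mul,
    ← integral_const_mul, ← integral_add hhead htail]
  refine setIntegral_mono_on (integrableOn_rpow_mul_norm (hf _)) (hhead.add htail)
    measurableSet_Ioi fun t ht => ?_
  have ht0 : (0 : ℝ) < t := ht
  rcases le_or_gt t T with htT | htT
  · have hpow : t ^ (s.re - 1) ≤ T ^ n * t ^ (a - 1) := by
      calc t ^ (s.re - 1) = t ^ (s.re - a) * t ^ (a - 1) := by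
            rw [← Real.rpow_add ht0, sub_add_sub_cancel]
        _ ≤ T ^ (s.re - a) * t ^ (a - 1) := by gcongr
        _ ≤ T ^ (n : ℝ) * t ^ (a - 1) := by gcongr
        _ = T ^ n * t ^ (a - 1) := by rw [Real.rpow_natCast]
    calc t ^ (s.re - 1) * ‖f t‖ ≤ T ^ n * t ^ (a - 1) * ‖f t‖ := by gcongr
      _ = T ^ n * (t ^ (a - 1) * ‖f t‖) := mul_assoc ..
      _ ≤ _ := le_add_of_nonneg_right (by positivity)
  · have hbound : ‖f t‖ ≤ C * Real.exp (-p * t) := by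
      simpa only [Real.norm_eq_abs, Real.abs_exp] using hT₀ t ((le_max_left ..).trans htT.le)
    have hpow : t ^ (s.re - 1) ≤ t ^ n := by
      rw [← Real.rpow_natCast]
      exact Real.rpow_le_rpow_of_exponent_le (hT1.trans htT.le) hn'
    calc t ^ (s.re - 1) * ‖f t‖ ≤ t ^ n * (C * Real.exp (-p * t)) := by gcongr
      _ = C * (t ^ n * Real.exp (-p * t)) := mul_left_comm ..
      _ ≤ _ := le_add_of_nonneg_left (by positivity)

theorem factorial_le_exp_rpow {n : ℕ} {x : ℝ} (hx : 1 ≤ x) (hn : n ≤ x) :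
    (n.factorial : ℝ) ≤ Real.exp (2 * x ^ (3 / 2 : ℝ)) := by
  have hx0 : 0 < x := one_pos.trans_le hx
  have hlog : Real.log x * x ≤ 2 * x ^ (3 / 2 : ℝ) := by
    have h := Real.log_le_rpow_div hx0.le (ε := 1 / 2) (by norm_num)
    calc Real.log x * x ≤ x ^ (1 / 2 : ℝ) / (1 / 2) * x := by gcongr
      _ = 2 * (x ^ (1 / 2 : ℝ) * x) := by ring
      _ = 2 * x ^ (3 / 2 : ℝ) := by rw [← Real.rpow_add_one hx0.ne']; norm_num
  calc (n.factorial : ℝ) ≤ (n : ℝ) ^ n := mod_cast Nat.factorial_le_pow n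
    _ ≤ x ^ (n : ℝ) := by rw [Real.rpow_natCast]; gcongr
    _ ≤ x ^ x := Real.rpow_le_rpow_of_exponent_le hx hn
    _ = Real.exp (Real.log x * x) := Real.rpow_def_of_pos hx0 x
    _ ≤ _ := Real.exp_le_exp.2 hlog

theorem exists_mul_pow_add_mul_factorial_div_le_exp {T K C p : ℝ} (hT : 1 ≤ T) (hK : 0 ≤ K)
    (hC : 0 ≤ C) (hp : 0 < p) :
    ∃ B : ℝ, 0 ≤ B ∧ ∀ (n : ℕ) (x : ℝ), 1 ≤ x → n ≤ x →
      K * T ^ n + C * (n.factorial / p ^ (n + 1)) ≤ Real.exp (B * x ^ (3 / 2 : ℝ)) := by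
  set M := max T p⁻¹
  have : 0 < M := one_pos.trans_le (hT.trans (le_max_left ..))
  refine ⟨K + C * M + M + 2, by positivity, fun n x hx hn => ?_⟩
  set G := x ^ (3 / 2 : ℝ)
  have hxG : x ≤ G := Real.self_le_rpow_of_one_le hx (by norm_num)
  have hfac1 : (1 : ℝ) ≤ n.factorial := mod_cast n.factorial_pos
  have hconst : K + C * M ≤ Real.exp ((K + C * M) * G) := by
    have hKM : 0 ≤ K + C * M := by positivity
    calc K + C * M ≤ (K + C * M) * G := le_mul_of_one_le_right hKM (hx.trans hxG)
      _ ≤ _ := by linarith [Real.add_one_le_exp ((K + C * M) * G)]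
  have hpow : M ^ n ≤ Real.exp (M * G) := by
    calc M ^ n ≤ Real.exp M ^ n := by gcongr; linarith [Real.add_one_le_exp M]
      _ = Real.exp (n * M) := (Real.exp_nat_mul ..).symm
      _ ≤ Real.exp (M * G) := by rw [mul_comm]; gcongr; exact hn.trans hxG
  calc K * T ^ n + C * (n.factorial / p ^ (n + 1))
      = K * T ^ n * 1 + C * (p⁻¹ ^ (n + 1) * n.factorial) := by rw [inv_pow]; ring
    _ ≤ K * M ^ n * n.factorial + C * (M ^ (n + 1) * n.factorial) := by
      gcongr
      exacts [le_max_left .., le_max_right ..]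
    _ = (K + C * M) * M ^ n * n.factorial := by ring
    _ ≤ Real.exp ((K + C * M) * G) * Real.exp (M * G) * Real.exp (2 * G) := by
      gcongr
      exact factorial_le_exp_rpow hx hn
    _ = _ := by rw [← Real.exp_add, ← Real.exp_add]; ring_nf

theorem hurwitzEvenFEPair_zero_f_modif_isBigO_exp :
    ∃ p : ℝ, 0 < p ∧
      (HurwitzZeta.hurwitzEvenFEPair 0).f_modif =O[atTop] fun t => Real.exp (-p * t) := by
  obtain ⟨p, hp, hO⟩ := HurwitzZeta.isBigO_atTop_evenKernel_sub 0
  refine ⟨p, hp, Asymptotics.IsBigO.congr' (Complex.isBigO_ofReal_left.2 hO) ?_ .rfl⟩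
  filter_upwards [eventually_gt_atTop 1] with t ht
  rw [WeakFEPair.f_modif, Pi.add_apply, indicator_of_mem (mem_Ioi.2 ht),
    indicator_of_notMem (notMem_Ioo_of_ge ht.le), add_zero]
  simp [HurwitzZeta.hurwitzEvenFEPair]

theorem exists_norm_completedRiemannZeta₀_le_exp :
    ∃ B : ℝ, 0 ≤ B ∧ ∀ s : ℂ, 1 / 2 ≤ s.re →
      ‖completedRiemannZeta₀ s‖ ≤ Real.exp (B * (1 + ‖s‖) ^ (3 / 2 : ℝ)) := by
  obtain ⟨p, hp, hO⟩ := hurwitzEvenFEPair_zero_f_modif_isBigO_exp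
  set P := HurwitzZeta.hurwitzEvenFEPair 0
  obtain ⟨T, K, C, hK, hC, hT, hmellin⟩ := exists_norm_mellin_le_of_isBigO_exp (a := 1 / 4)
    (fun s => (P.isStrongFEPair_toStrongFEPair.hasMellin s).1) hp hO
  obtain ⟨B, hB, hexp⟩ := exists_mul_pow_add_mul_factorial_div_le_exp hT hK hC hp
  refine ⟨B, hB, fun s hs => ?_⟩
  have hre : (s / 2).re = s.re / 2 := Complex.div_ofNat_re s 2
  have hceil : s.re ≤ ⌈‖s‖⌉₊ := (Complex.re_le_norm s).trans (Nat.le_ceil _)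
  calc ‖completedRiemannZeta₀ s‖ = ‖mellin P.f_modif (s / 2)‖ / 2 := by
        rw [← Complex.norm_ofNat, ← norm_div]; rfl
    _ ≤ ‖mellin P.f_modif (s / 2)‖ := half_le_self (norm_nonneg _)
    _ ≤ _ := hmellin ⌈‖s‖⌉₊ (s / 2) (by linarith) (by linarith) (by linarith)
    _ ≤ _ := hexp _ _ (by linarith [norm_nonneg s])
      (by linarith [Nat.ceil_lt_add_one (norm_nonneg s)])

/-- The entire function `ξ(s) = s(s-1)Λ₀(s) + 1`, equal to `s(s-1)Λ(s)` off `{0, 1}`; this is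
twice Riemann's `ξ`, normalized so that `ξ(0) = 1`. -/
noncomputable def entireXi (s : ℂ) : ℂ := s * (s - 1) * completedRiemannZeta₀ s + 1

theorem differentiable_entireXi : Differentiable ℂ entireXi := by
  unfold entireXi
  have := differentiable_completedZeta₀
  fun_prop

theorem entireXi_zero : entireXi 0 = 1 := by simp [entireXi]

theorem entireXi_zero_ne_zero : entireXi 0 ≠ 0 := entireXi_zero ▸ one_ne_zero

theorem entireXi_one_sub (s : ℂ) : entireXi (1 - s) = entireXi s := by
  simp only [entireXi, completedRiemannZeta₀_one_sub]
  ring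

theorem entireXi_eq {s : ℂ} (h0 : s ≠ 0) (h1 : s ≠ 1) :
    entireXi s = s * (s - 1) * completedRiemannZeta s := by
  have : 1 - s ≠ 0 := sub_ne_zero.2 h1.symm
  rw [completedRiemannZeta_eq, entireXi]
  field_simp
  ring

theorem exists_norm_entireXi_le_of_half_le_re :
    ∃ B : ℝ, 0 ≤ B ∧ ∀ s : ℂ, 1 / 2 ≤ s.re →
      ‖entireXi s‖ ≤ Real.exp (B * (1 + ‖s‖) ^ (3 / 2 : ℝ)) := by
  obtain ⟨B, hB, hzeta⟩ := exists_norm_completedRiemannZeta₀_le_exp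
  refine ⟨B + 3, by positivity, fun s hs => ?_⟩
  set x := 1 + ‖s‖
  set G := x ^ (3 / 2 : ℝ)
  have hx : 1 ≤ x := le_add_of_nonneg_right (norm_nonneg s)
  have hxG : x ≤ G := Real.self_le_rpow_of_one_le hx (by norm_num)
  have hxe : x ≤ Real.exp G := by linarith [Real.add_one_le_exp G]
  have hs1 : ‖s - 1‖ ≤ x := by
    simpa only [norm_one, add_comm ‖s‖] using norm_sub_le s 1
  set E := G + G + B * G
  have hE : 1 ≤ Real.exp E := Real.one_le_exp (by positivity)
  calc ‖entireXi s‖ ≤ ‖s * (s - 1) * completedRiemannZeta₀ s‖ + ‖(1 : ℂ)‖ := norm_add_le ..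
    _ = ‖s‖ * ‖s - 1‖ * ‖completedRiemannZeta₀ s‖ + 1 := by rw [norm_mul, norm_mul, norm_one]
    _ ≤ Real.exp G * Real.exp G * Real.exp (B * G) + 1 := by
      gcongr
      exacts [(le_add_of_nonneg_left zero_le_one).trans hxe, hs1.trans hxe, hzeta s hs]
    _ = Real.exp E + 1 := by rw [Real.exp_add, Real.exp_add]
    _ ≤ Real.exp E * Real.exp 1 := by nlinarith [Real.add_one_le_exp 1]
    _ ≤ Real.exp ((B + 3) * G) := by
      rw [← Real.exp_add]
      exact Real.exp_le_exp.2 (by linarith)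

theorem exists_norm_entireXi_le :
    ∃ C : ℝ, ∀ s : ℂ, ‖entireXi s‖ ≤ Real.exp (C * (1 + ‖s‖) ^ (3 / 2 : ℝ)) := by
  obtain ⟨B, hB, hright⟩ := exists_norm_entireXi_le_of_half_le_re
  refine ⟨B * 2 ^ (3 / 2 : ℝ), fun s => ?_⟩
  have hgrow {y : ℝ} (hy0 : 0 ≤ y) (hy : y ≤ 1 + ‖s‖) :
      Real.exp (B * (1 + y) ^ (3 / 2 : ℝ)) ≤
        Real.exp (B * 2 ^ (3 / 2 : ℝ) * (1 + ‖s‖) ^ (3 / 2 : ℝ)) := by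
    rw [mul_assoc, ← Real.mul_rpow (by norm_num) (by positivity)]
    gcongr
    linarith [norm_nonneg s]
  rcases le_or_gt (1 / 2) s.re with hs | hs
  · exact (hright s hs).trans (hgrow (norm_nonneg s) (by linarith))
  · rw [← entireXi_one_sub]
    have hre : 1 / 2 ≤ (1 - s).re := by rw [Complex.sub_re, Complex.one_re]; linarith
    have hnorm : ‖1 - s‖ ≤ 1 + ‖s‖ := by simpa only [norm_one] using norm_sub_le 1 s
    exact (hright (1 - s) hre).trans (hgrow (norm_nonneg _) hnorm)

theorem riemannZeta_eq_zero_of_entireXi_eq_zero {s : ℂ} (h : entireXi s = 0) :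
    s ≠ 0 ∧ s ≠ 1 ∧ riemannZeta s = 0 := by
  have h0 : s ≠ 0 := by
    rintro rfl
    exact entireXi_zero_ne_zero h
  have h1 : s ≠ 1 := by
    rintro rfl
    rw [← entireXi_one_sub, sub_self] at h
    exact entireXi_zero_ne_zero h
  have hΛ : completedRiemannZeta s = 0 := by
    simpa [entireXi_eq h0 h1, h0, sub_ne_zero.2 h1] using h
  exact ⟨h0, h1, by rw [riemannZeta_def_of_ne_zero h0, hΛ, zero_div]⟩

theorem re_eq_half_of_entireXi_eq_zero (hRH : RiemannHypothesis) {s : ℂ} (h : entireXi s = 0) :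
    s.re = 1 / 2 := by
  obtain ⟨-, h1, hz⟩ := riemannZeta_eq_zero_of_entireXi_eq_zero h
  refine hRH s hz ?_ h1
  rintro ⟨n, hn⟩
  obtain ⟨-, -, hz'⟩ := riemannZeta_eq_zero_of_entireXi_eq_zero ((entireXi_one_sub s).trans h)
  refine riemannZeta_ne_zero_of_one_le_re ?_ hz'
  have hre : (1 - s).re = 1 + 2 * (n + 1) := by simp [hn]
  rw [hre]
  linarith [n.cast_nonneg (α := ℝ)]

theorem logDeriv_entireXi_one_sub (s : ℂ) : logDeriv entireXi (1 - s) = -logDeriv entireXi s := by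
  have hderiv : deriv entireXi s = -deriv entireXi (1 - s) := by
    rw [← deriv_comp_const_sub, funext entireXi_one_sub]
  rw [logDeriv_apply, logDeriv_apply, hderiv, entireXi_one_sub, neg_div, neg_neg]

/-- The zeros of `ξ`, each repeated according to its multiplicity. -/
abbrev XiZero : Type :=
  Σ ρ : {ρ : ℂ // entireXi ρ = 0}, Fin (analyticOrderNatAt entireXi ρ)

/-- The ordinate `γ` of a zero of `ξ`, so that the zero is `1/2 + iγ` under the Riemann
hypothesis. -/
def XiZero.ordinate (i : XiZero) : ℝ := i.1.1.im

/-- The zeros of `ξ` of modulus at most `R`, as a finite set of indices. -/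
noncomputable def xiZerosUpTo (R : ℝ) : Finset XiZero :=
  ((finite_zeros_inter_closedBall differentiable_entireXi entireXi_zero_ne_zero
    R).toFinset.subtype fun ρ => entireXi ρ = 0).sigma fun _ => Finset.univ

theorem mem_xiZerosUpTo {R : ℝ} {i : XiZero} : i ∈ xiZerosUpTo R ↔ ‖i.1.1‖ ≤ R := by
  have := i.1.2
  simp_all [xiZerosUpTo]

theorem tendsto_xiZerosUpTo_atTop : Tendsto xiZerosUpTo atTop atTop :=
  tendsto_atTop_finset_of_monotone
    (fun _ _ h _ hi => mem_xiZerosUpTo.2 ((mem_xiZerosUpTo.1 hi).trans h))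
    fun _ => ⟨_, mem_xiZerosUpTo.2 le_rfl⟩

theorem sum_xiZerosUpTo (R : ℝ) (g : ℂ → ℂ) :
    ∑ i ∈ xiZerosUpTo R, g i.1.1 =
      ∑ a ∈ (finite_zeros_inter_closedBall differentiable_entireXi entireXi_zero_ne_zero
        R).toFinset, analyticOrderNatAt entireXi a * g a := by
  rw [xiZerosUpTo, Finset.sum_sigma, ← Finset.sum_subtype_of_mem (p := fun ρ => entireXi ρ = 0)
    fun a => (analyticOrderNatAt entireXi a : ℂ) * g a]
  · simp
  · intro a ha
    exact ((Set.Finite.mem_toFinset _).1 ha).1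

theorem inv_sub_sub_inv_sub_of_re_eq_half {ρ w : ℂ} (hρ : ρ.re = 1 / 2) (hw : w.re ≠ 0) :
    1 / (1 / 2 + w - ρ) - 1 / (1 / 2 + -w - ρ) = 2 * (w / (w ^ 2 + (ρ.im : ℂ) ^ 2)) := by
  have hρ' : ρ = 1 / 2 + ρ.im * Complex.I := by
    apply Complex.ext <;> simp [hρ]
  have hminus : w - ρ.im * Complex.I ≠ 0 := fun h => hw (by simpa using congrArg Complex.re h)
  have hplus : w + ρ.im * Complex.I ≠ 0 := fun h => hw (by simpa using congrArg Complex.re h)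
  have hsub : 1 / 2 + w - ρ = w - ρ.im * Complex.I := by linear_combination -hρ'
  have hsub' : 1 / 2 + -w - ρ = -(w + ρ.im * Complex.I) := by linear_combination -hρ'
  have hfactor : w ^ 2 + (ρ.im : ℂ) ^ 2 = (w - ρ.im * Complex.I) * (w + ρ.im * Complex.I) := by
    linear_combination (ρ.im : ℂ) ^ 2 * Complex.I_sq
  rw [hsub, hsub', hfactor]
  field_simp
  ring

theorem tendsto_sum_xiZerosUpTo (hRH : RiemannHypothesis) {w : ℂ} (hw : w.re ≠ 0) :
    Tendsto (fun R => ∑ i ∈ xiZerosUpTo R, w / (w ^ 2 + (i.ordinate : ℂ) ^ 2)) atTop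
      (𝓝 (logDeriv entireXi (1 / 2 + w))) := by
  have hne {w : ℂ} (hw : w.re ≠ 0) : entireXi (1 / 2 + w) ≠ 0 := fun h =>
    hw (by simpa using re_eq_half_of_entireXi_eq_zero hRH h)
  obtain ⟨C, hC⟩ := exists_norm_entireXi_le
  have hlim := (tendsto_sum_zeros_logDeriv_sub differentiable_entireXi entireXi_zero_ne_zero
    (by norm_num) hC (hne hw) (hne (w := -w) (by simpa using hw))).div_const 2
  have hodd : (logDeriv entireXi (1 / 2 + w) - logDeriv entireXi (1 / 2 + -w)) / 2 =
      logDeriv entireXi (1 / 2 + w) := by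
    rw [show (1 / 2 : ℂ) + -w = 1 - (1 / 2 + w) by ring, logDeriv_entireXi_one_sub]
    ring
  rw [hodd] at hlim
  refine hlim.congr fun R => ?_
  refine Eq.trans ?_ (sum_xiZerosUpTo R fun a => w / (w ^ 2 + (a.im : ℂ) ^ 2)).symm
  rw [Finset.sum_div]
  refine Finset.sum_congr rfl fun a ha => ?_
  have ha0 : entireXi a = 0 := ((Set.Finite.mem_toFinset _).1 ha).1
  rw [inv_sub_sub_inv_sub_of_re_eq_half (re_eq_half_of_entireXi_eq_zero hRH ha0) hw]
  ring

theorem summable_of_tendsto_sum_of_nonneg {ι β : Type*} {l : Filter β} [l.NeBot] {f : ι → ℝ}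
    (hf : ∀ i, 0 ≤ f i) {T : β → Finset ι} (hT : Tendsto T l atTop) {c : ℝ}
    (h : Tendsto (fun b => ∑ i ∈ T b, f i) l (𝓝 c)) : Summable f := by
  refine summable_of_sum_le hf fun u => ge_of_tendsto h ?_
  filter_upwards [hT.eventually_ge_atTop u] with b hb
  exact Finset.sum_le_sum_of_subset_of_nonneg hb fun i _ _ => hf i

theorem summable_one_div_one_add_ordinate_sq (hRH : RiemannHypothesis) :
    Summable fun i : XiZero => 1 / (1 + i.ordinate ^ 2) := by
  have hre := (Complex.continuous_re.tendsto _).comp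
    (tendsto_sum_xiZerosUpTo hRH (w := 1) (by simp))
  refine summable_of_tendsto_sum_of_nonneg (fun i => by positivity) tendsto_xiZerosUpTo_atTop
    (hre.congr fun R => ?_)
  simp only [Function.comp_apply, Complex.re_sum]
  refine Finset.sum_congr rfl fun i _ => ?_
  rw [← Complex.ofReal_re (1 / (1 + i.ordinate ^ 2))]
  push_cast
  rw [one_pow]

theorem one_add_sq_le_mul_norm_sq_add_sq {w : ℂ} (hw : 0 < w.re) (γ : ℝ) :
    1 + γ ^ 2 ≤ (1 + (1 + ‖w‖ ^ 2) / w.re ^ 2) * ‖w ^ 2 + (γ : ℂ) ^ 2‖ := by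
  set N := ‖w ^ 2 + (γ : ℂ) ^ 2‖ with hN
  have hγ : γ ^ 2 ≤ N + ‖w‖ ^ 2 := by
    have h := norm_sub_le (w ^ 2 + (γ : ℂ) ^ 2) (w ^ 2)
    rwa [add_sub_cancel_left, norm_pow, norm_pow, Complex.norm_real, Real.norm_eq_abs,
      sq_abs] at h
  have hre : w.re ^ 2 ≤ N := by
    have hfactor : w ^ 2 + (γ : ℂ) ^ 2 = (w - γ * Complex.I) * (w + γ * Complex.I) := by
      linear_combination (γ : ℂ) ^ 2 * Complex.I_sq
    have hminus : w.re ≤ ‖w - γ * Complex.I‖ := by simpa using (w - γ * Complex.I).re_le_norm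
    have hplus : w.re ≤ ‖w + γ * Complex.I‖ := by simpa using (w + γ * Complex.I).re_le_norm
    rw [hN, hfactor, norm_mul, sq]
    gcongr
  have hone : (1 + ‖w‖ ^ 2) ≤ (1 + ‖w‖ ^ 2) / w.re ^ 2 * N := by
    rw [div_mul_eq_mul_div, le_div_iff₀ (by positivity)]
    gcongr
  linarith

theorem summable_div_sq_add_sq {ι : Type*} {γ : ι → ℝ} (hγ : Summable fun i => 1 / (1 + γ i ^ 2))
    {w : ℂ} (hw : 0 < w.re) : Summable fun i => w / (w ^ 2 + (γ i : ℂ) ^ 2) := by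
  refine .of_norm_bounded (hγ.mul_left (‖w‖ * (1 + (1 + ‖w‖ ^ 2) / w.re ^ 2))) fun i => ?_
  have hle := one_add_sq_le_mul_norm_sq_add_sq hw (γ i)
  have hpos : 0 < ‖w ^ 2 + (γ i : ℂ) ^ 2‖ :=
    pos_of_mul_pos_right ((by positivity : 0 < 1 + γ i ^ 2).trans_le hle) (by positivity)
  rw [norm_div, mul_one_div, div_le_div_iff₀ hpos (by positivity), mul_assoc]
  gcongr

/-- The sum runs over the zeros once each, so that `γ` and `-γ` both occur. -/
theorem hasSum_logDeriv_entireXi (hRH : RiemannHypothesis) {w : ℂ} (hw : 0 < w.re) :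
    HasSum (fun i : XiZero => w / (w ^ 2 + (i.ordinate : ℂ) ^ 2))
      (logDeriv entireXi (1 / 2 + w)) := by
  have hsum := summable_div_sq_add_sq (summable_one_div_one_add_ordinate_sq hRH) hw
  exact tendsto_nhds_unique (hsum.hasSum.comp tendsto_xiZerosUpTo_atTop)
    (tendsto_sum_xiZerosUpTo hRH hw.ne') ▸ hsum.hasSum

/-! ### The digamma function -/

theorem ne_neg_natCast_of_re_pos {z : ℂ} (hz : 0 < z.re) (m : ℕ) : z ≠ -m := by
  rintro rfl
  rw [Complex.neg_re, Complex.natCast_re] at hz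
  linarith [m.cast_nonneg (α := ℝ)]

theorem differentiableAt_Gamma_of_pos {x : ℝ} (hx : 0 < x) : DifferentiableAt ℝ Real.Gamma x :=
  Real.differentiableAt_Gamma fun m => by linarith [m.cast_nonneg (α := ℝ)]

theorem hasDerivAt_log_Gamma {x : ℝ} (hx : 0 < x) :
    HasDerivAt (Real.log ∘ Real.Gamma) (logDeriv Real.Gamma x) x :=
  (differentiableAt_Gamma_of_pos hx).hasDerivAt.log (Real.Gamma_pos_of_pos hx).ne'

theorem digamma_ofReal {x : ℝ} (hx : 0 < x) :
    Complex.digamma x = (logDeriv Real.Gamma x : ℝ) := by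
  have hcomplex : HasDerivAt (fun y : ℝ => Complex.Gamma y) (deriv Complex.Gamma x) x :=
    (Complex.differentiableAt_Gamma _
      (ne_neg_natCast_of_re_pos (by simpa using hx))).hasDerivAt.comp_ofReal
  have hreal : HasDerivAt (fun y : ℝ => Complex.Gamma y) ((deriv Real.Gamma x : ℝ) : ℂ) x := by
    simpa only [Complex.Gamma_ofReal] using
      (differentiableAt_Gamma_of_pos hx).hasDerivAt.ofReal_comp
  rw [Complex.digamma_def, logDeriv_apply, logDeriv_apply, hcomplex.unique hreal,
    Complex.Gamma_ofReal, Complex.ofReal_div]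

theorem log_Gamma_add_one_sub {x : ℝ} (hx : 0 < x) :
    Real.log (Real.Gamma (x + 1)) - Real.log (Real.Gamma x) = Real.log x := by
  rw [Real.Gamma_add_one hx.ne', Real.log_mul hx.ne' (Real.Gamma_pos_of_pos hx).ne',
    add_sub_cancel_right]

theorem logDeriv_Gamma_le_log {x : ℝ} (hx : 0 < x) : logDeriv Real.Gamma x ≤ Real.log x := by
  have h := Real.convexOn_log_Gamma.deriv_le_slope hx (mem_Ioi.2 (add_pos hx one_pos))
    (lt_add_one x) (hasDerivAt_log_Gamma hx).differentiableAt
  rwa [(hasDerivAt_log_Gamma hx).deriv, slope_def_field, Function.comp_apply, Function.comp_apply,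
    log_Gamma_add_one_sub hx, add_sub_cancel_left, div_one] at h

theorem log_le_logDeriv_Gamma_add_one {x : ℝ} (hx : 0 < x) :
    Real.log x ≤ logDeriv Real.Gamma (x + 1) := by
  have hx1 : 0 < x + 1 := add_pos hx one_pos
  have h := Real.convexOn_log_Gamma.slope_le_deriv hx (mem_Ioi.2 hx1) (lt_add_one x)
    (hasDerivAt_log_Gamma hx1).differentiableAt
  rwa [(hasDerivAt_log_Gamma hx1).deriv, slope_def_field, Function.comp_apply,
    Function.comp_apply, log_Gamma_add_one_sub hx, add_sub_cancel_left, div_one] at h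

theorem logDeriv_Gamma_add_one {x : ℝ} (hx : 0 < x) :
    logDeriv Real.Gamma (x + 1) = logDeriv Real.Gamma x + 1 / x := by
  have h := Complex.digamma_apply_add_one x (ne_neg_natCast_of_re_pos (by simpa using hx))
  rw [digamma_ofReal hx, ← Complex.ofReal_one, ← Complex.ofReal_add,
    digamma_ofReal (add_pos hx one_pos)] at h
  rw [one_div]
  exact_mod_cast h

theorem logDeriv_Gamma_add_natCast {x : ℝ} (hx : 0 < x) (N : ℕ) :
    logDeriv Real.Gamma (x + N) =
      logDeriv Real.Gamma x + ∑ j ∈ Finset.range N, 1 / (x + j) := by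
  induction N with
  | zero => simp
  | succ N ih =>
    rw [Finset.sum_range_succ, ← add_assoc, ← ih, ← logDeriv_Gamma_add_one (by positivity),
      Nat.cast_succ, add_assoc]

theorem tendsto_logDeriv_Gamma_add_sub_log (a : ℝ) :
    Tendsto (fun x : ℝ => logDeriv Real.Gamma (x + a) - Real.log x) atTop (𝓝 0) := by
  refine tendsto_of_tendsto_of_tendsto_of_le_of_le' (Real.tendsto_log_comp_add_sub_log (a - 1))
    (Real.tendsto_log_comp_add_sub_log a) ?_ ?_
  · filter_upwards [eventually_gt_atTop (1 - a)] with x hx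
    have h := log_le_logDeriv_Gamma_add_one (x := x + (a - 1)) (by linarith)
    rw [add_assoc, sub_add_cancel] at h
    linarith
  · filter_upwards [eventually_gt_atTop (-a)] with x hx
    linarith [logDeriv_Gamma_le_log (x := x + a) (by linarith)]

theorem tendsto_sum_one_div_sub_one_div {x : ℝ} (hx : 0 < x) :
    Tendsto (fun N : ℕ => ∑ j ∈ Finset.range N, (1 / (1 + (j : ℝ)) - 1 / (x + j))) atTop
      (𝓝 (logDeriv Real.Gamma x - logDeriv Real.Gamma 1)) := by
  have hdiff := ((tendsto_logDeriv_Gamma_add_sub_log 1).sub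
    (tendsto_logDeriv_Gamma_add_sub_log x)).comp tendsto_natCast_atTop_atTop
  have hlim := hdiff.const_add (logDeriv Real.Gamma x - logDeriv Real.Gamma 1)
  rw [sub_zero, add_zero] at hlim
  refine hlim.congr fun N => ?_
  rw [Finset.sum_sub_distrib, Function.comp_apply, add_comm _ 1, add_comm _ x,
    logDeriv_Gamma_add_natCast hx, logDeriv_Gamma_add_natCast one_pos]
  ring

theorem norm_one_div_sub_one_div_le {z : ℂ} {ε R : ℝ} (hε : 0 < ε) (hε1 : ε ≤ 1) (hz : ε ≤ z.re)
    (hR : ‖z‖ ≤ R) (j : ℕ) :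
    ‖1 / (1 + (j : ℂ)) - 1 / (z + j)‖ ≤ (R + 1) / ε * (1 / ((j : ℝ) + 1) ^ 2) := by
  have : (0 : ℝ) ≤ j := j.cast_nonneg
  have hzj : ε * (j + 1) ≤ ‖z + j‖ := by
    calc ε * (j + 1) ≤ z.re + j := by nlinarith
      _ = (z + j).re := by rw [Complex.add_re, Complex.natCast_re]
      _ ≤ ‖z + j‖ := Complex.re_le_norm _
  have hone : ‖1 + (j : ℂ)‖ = j + 1 := by
    rw [add_comm]
    exact_mod_cast Complex.norm_natCast (j + 1)
  have hone_ne : 1 + (j : ℂ) ≠ 0 := norm_pos_iff.1 (by rw [hone]; positivity)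
  have hzj_ne : z + (j : ℂ) ≠ 0 := norm_pos_iff.1 (hzj.trans_lt' (by positivity))
  have hdiff : 1 / (1 + (j : ℂ)) - 1 / (z + j) = (z - 1) / ((1 + j) * (z + j)) := by
    field_simp
    ring
  have hz1 : ‖z - 1‖ ≤ R + 1 := (norm_sub_le z 1).trans (by rw [norm_one]; gcongr)
  have hR0 : 0 ≤ R := (norm_nonneg _).trans hR
  rw [hdiff, norm_div, norm_mul, hone]
  calc ‖z - 1‖ / ((j + 1) * ‖z + j‖) ≤ (R + 1) / ((j + 1) * (ε * (j + 1))) := by gcongr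
    _ = _ := by field_simp

theorem summable_one_div_natCast_add_one_sq : Summable fun j : ℕ => 1 / ((j : ℝ) + 1) ^ 2 := by
  simpa only [Nat.cast_add, Nat.cast_one] using
    (summable_nat_add_iff 1).2 (Real.summable_one_div_nat_pow.2 one_lt_two)

theorem summable_one_div_sub_one_div {z : ℂ} (hz : 0 < z.re) :
    Summable fun j : ℕ => 1 / (1 + (j : ℂ)) - 1 / (z + j) :=
  .of_norm_bounded (summable_one_div_natCast_add_one_sq.mul_left _)
    (norm_one_div_sub_one_div_le (lt_min hz one_pos) (min_le_right ..) (min_le_left ..) le_rfl)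

theorem differentiableOn_tsum_one_div_sub_one_div :
    DifferentiableOn ℂ (fun z => ∑' j : ℕ, (1 / (1 + (j : ℂ)) - 1 / (z + j))) {z | 0 < z.re} := by
  intro w hw
  obtain ⟨ε, hε, hεw⟩ := exists_between (lt_min (show 0 < w.re from hw) one_pos)
  obtain ⟨R, hR⟩ := exists_gt ‖w‖
  set V : Set ℂ := {z | ε < z.re} ∩ Metric.ball 0 R
  have hV : IsOpen V :=
    (isOpen_lt continuous_const Complex.continuous_re).inter Metric.isOpen_ball
  have hwV : w ∈ V := ⟨hεw.trans_le (min_le_left ..), mem_ball_zero_iff.2 hR⟩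
  have hdiff : DifferentiableOn ℂ (fun z => ∑' j : ℕ, (1 / (1 + (j : ℂ)) - 1 / (z + j))) V := by
    refine Complex.differentiableOn_tsum_of_summable_norm
      (summable_one_div_natCast_add_one_sq.mul_left ((R + 1) / ε)) (fun j z hz => ?_) hV
      fun j z hz => norm_one_div_sub_one_div_le hε (hεw.le.trans (min_le_right ..)) (le_of_lt hz.1)
        (mem_ball_zero_iff.1 hz.2).le j
    have hne : z + j ≠ 0 := fun h =>
      ne_neg_natCast_of_re_pos (hε.trans hz.1) j (eq_neg_of_add_eq_zero_left h)
    have hadd : DifferentiableAt ℂ (fun y : ℂ => y + j) z := by fun_prop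
    exact ((differentiableAt_const _).sub
      ((differentiableAt_const _).fun_div hadd hne)).differentiableWithinAt
  exact (hdiff.differentiableAt (hV.mem_nhds hwV)).differentiableWithinAt

theorem differentiableOn_digamma : DifferentiableOn ℂ Complex.digamma {z | 0 < z.re} := by
  have hopen : IsOpen {z : ℂ | 0 < z.re} := isOpen_lt continuous_const Complex.continuous_re
  have hΓ : DifferentiableOn ℂ Complex.Gamma {z | 0 < z.re} := fun z hz =>
    (Complex.differentiableAt_Gamma z (ne_neg_natCast_of_re_pos hz)).differentiableWithinAt
  exact (hΓ.deriv hopen).div hΓ fun z hz => Complex.Gamma_ne_zero_of_re_pos hz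

theorem hasSum_digamma_sub_digamma_one_of_real {x : ℝ} (hx : 0 < x) :
    HasSum (fun j : ℕ => 1 / (1 + (j : ℂ)) - 1 / (x + j))
      (Complex.digamma x - Complex.digamma 1) := by
  have hsum := summable_one_div_sub_one_div (z := x) (by simpa using hx)
  have hlim := (Complex.continuous_ofReal.tendsto _).comp (tendsto_sum_one_div_sub_one_div hx)
  rw [Complex.ofReal_sub, ← digamma_ofReal hx, ← digamma_ofReal one_pos,
    Complex.ofReal_one] at hlim
  refine tendsto_nhds_unique hsum.hasSum.tendsto_sum_nat (hlim.congr fun N => ?_) ▸ hsum.hasSum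
  simp

theorem hasSum_digamma_sub_digamma_one {z : ℂ} (hz : 0 < z.re) :
    HasSum (fun j : ℕ => 1 / (1 + (j : ℂ)) - 1 / (z + j))
      (Complex.digamma z - Complex.digamma 1) := by
  have hopen : IsOpen {z : ℂ | 0 < z.re} := isOpen_lt continuous_const Complex.continuous_re
  have hseq : Tendsto (fun n : ℕ => 1 + 1 / ((n : ℂ) + 1)) atTop (𝓝[≠] 1) := by
    refine tendsto_nhdsWithin_iff.2 ⟨?_, Eventually.of_forall fun n => ?_⟩
    · simpa only [add_zero] using
        (tendsto_one_div_add_atTop_nhds_zero_nat (𝕜 := ℂ)).const_add 1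
    · have : (n : ℂ) + 1 ≠ 0 := Nat.cast_add_one_ne_zero n
      simp [this]
  have heq : EqOn (fun z => ∑' j : ℕ, (1 / (1 + (j : ℂ)) - 1 / (z + j)))
      (fun z => Complex.digamma z - Complex.digamma 1) {z | 0 < z.re} := by
    refine (differentiableOn_tsum_one_div_sub_one_div.analyticOnNhd
      hopen).eqOn_of_preconnected_of_frequently_eq
      ((differentiableOn_digamma.sub_const _).analyticOnNhd hopen)
      (convex_halfSpace_re_gt 0).isPreconnected (z₀ := 1) (by simp)
      (hseq.frequently (Frequently.of_forall fun n => ?_))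
    have h := (hasSum_digamma_sub_digamma_one_of_real (x := 1 + 1 / ((n : ℝ) + 1))
      (by positivity)).tsum_eq
    push_cast at h
    exact h
  exact (summable_one_div_sub_one_div hz).hasSum_iff.2 (heq hz)

theorem hasSum_digamma_sub_digamma {z w : ℂ} (hz : 0 < z.re) (hw : 0 < w.re) :
    HasSum (fun j : ℕ => 1 / (w + j) - 1 / (z + j)) (Complex.digamma z - Complex.digamma w) := by
  simpa only [sub_sub_sub_cancel_left, sub_sub_sub_cancel_right] using
    (hasSum_digamma_sub_digamma_one hz).sub (hasSum_digamma_sub_digamma_one hw)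

theorem log_norm_add_one_sub_log_norm_le {z : ℂ} (hz : 0 < z.re) :
    Real.log ‖z + 1‖ - Real.log ‖z‖ ≤ (1 / z).re + 1 / (2 * z.re ^ 2) := by
  have hnorm : 0 < ‖z‖ := hz.trans_le (Complex.re_le_norm z)
  have hsq : ‖z + 1‖ ^ 2 = ‖z‖ ^ 2 + 2 * z.re + 1 := by
    rw [Complex.sq_norm, Complex.sq_norm, Complex.normSq_add, map_one, map_one, mul_one]
    ring
  have hre1 : 0 < (z + 1).re := by
    rw [Complex.add_re, Complex.one_re]
    positivity
  have : 0 < ‖z + 1‖ := hre1.trans_le (Complex.re_le_norm _)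
  have hlog : 2 * (Real.log ‖z + 1‖ - Real.log ‖z‖) = Real.log (‖z + 1‖ ^ 2 / ‖z‖ ^ 2) := by
    rw [Real.log_div (by positivity) (by positivity), Real.log_pow, Real.log_pow]
    push_cast
    ring
  have hquot : ‖z + 1‖ ^ 2 / ‖z‖ ^ 2 - 1 = 2 * (1 / z).re + 1 / ‖z‖ ^ 2 := by
    rw [hsq, one_div z, Complex.inv_re, Complex.normSq_eq_norm_sq]
    field_simp
    ring
  have hre : 1 / ‖z‖ ^ 2 ≤ 1 / z.re ^ 2 := by
    gcongr
    exact Complex.re_le_norm z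
  have hhalf : 1 / (2 * z.re ^ 2) = 1 / z.re ^ 2 / 2 := by field_simp
  linarith [Real.log_le_sub_one_of_pos (x := ‖z + 1‖ ^ 2 / ‖z‖ ^ 2) (by positivity)]

theorem log_norm_add_natCast_sub_log_norm_le {z : ℂ} (hz : 1 < z.re) (N : ℕ) :
    Real.log ‖z + N‖ - Real.log ‖z‖ ≤ ∑ j ∈ Finset.range N, (1 / (z + j)).re +
      (1 / (2 * z.re - 1) - 1 / (2 * (z.re + N) - 1)) := by
  induction N with
  | zero => simp
  | succ N ih =>
    have hre : (z + N).re = z.re + N := by rw [Complex.add_re, Complex.natCast_re]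
    have : 1 < z.re + N := by linarith [N.cast_nonneg (α := ℝ)]
    have hstep := log_norm_add_one_sub_log_norm_le (z := z + N) (by linarith)
    have htele : 1 / (2 * (z + N).re ^ 2) ≤
        1 / (2 * (z.re + N) - 1) - 1 / (2 * (z.re + (N + 1)) - 1) := by
      have h₀ : 0 < 2 * (z.re + N) - 1 := by linarith
      have h₁ : 0 < 2 * (z.re + (N + 1)) - 1 := by linarith
      rw [hre, div_sub_div _ _ h₀.ne' h₁.ne',
        div_le_div_iff₀ (by positivity) (mul_pos h₀ h₁)]
      nlinarith
    rw [Finset.sum_range_succ, Nat.cast_succ, Nat.cast_succ, ← add_assoc]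
    linarith

theorem re_digamma_le {z : ℂ} (hz : 1 < z.re) :
    (Complex.digamma z).re ≤ Real.log ‖z‖ + 1 / (2 * z.re - 1) := by
  have hre : 0 < z.re := one_pos.trans hz
  have hlim := (Complex.continuous_re.tendsto _).comp
    (hasSum_digamma_sub_digamma hre (w := z.re) (by simpa using hre)).tendsto_sum_nat
  suffices hpart : (Complex.digamma z - Complex.digamma z.re).re ≤
      Real.log ‖z‖ + 1 / (2 * z.re - 1) - logDeriv Real.Gamma z.re by
    rw [Complex.sub_re, digamma_ofReal hre, Complex.ofReal_re] at hpart
    linarith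
  refine le_of_tendsto hlim (Eventually.of_forall fun N => ?_)
  have : 1 < z.re + N := by linarith [N.cast_nonneg (α := ℝ)]
  have hterm (j : ℕ) : (1 / ((z.re : ℂ) + j)).re = 1 / (z.re + j) := by
    rw [← Complex.ofReal_natCast, ← Complex.ofReal_add, ← Complex.ofReal_one,
      ← Complex.ofReal_div, Complex.ofReal_re]
  simp only [Function.comp_apply, Complex.re_sum, Complex.sub_re, hterm, Finset.sum_sub_distrib]
  have hnorm : Real.log (z.re + N) ≤ Real.log ‖z + N‖ := by
    refine Real.log_le_log (by linarith) ?_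
    simpa only [Complex.add_re, Complex.natCast_re] using Complex.re_le_norm (z + N)
  have hlast : 0 ≤ 1 / (2 * (z.re + N) - 1) := one_div_nonneg.2 (by linarith)
  linarith [log_norm_add_natCast_sub_log_norm_le hz N, logDeriv_Gamma_add_natCast hre N,
    logDeriv_Gamma_le_log (x := z.re + N) (by linarith)]

theorem logDeriv_pi_cpow_neg_div_two (s : ℂ) :
    logDeriv (fun z : ℂ => (Real.pi : ℂ) ^ (-z / 2)) s = -(Real.log Real.pi / 2) := by
  have hπ : (Real.pi : ℂ) ≠ 0 := mod_cast Real.pi_ne_zero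
  have hlin : HasDerivAt (fun z : ℂ => -z / 2) (-1 / 2) s := (hasDerivAt_neg s).div_const 2
  have : (Real.pi : ℂ) ^ (-s / 2) ≠ 0 := by simp [Complex.cpow_eq_zero_iff, hπ]
  rw [logDeriv_apply, (hlin.const_cpow (Or.inl hπ)).deriv, ← Complex.ofReal_log Real.pi_pos.le]
  field_simp

theorem logDeriv_Gammaℝ {s : ℂ} (hs : 0 < s.re) :
    logDeriv Complex.Gammaℝ s = -(Real.log Real.pi / 2) + Complex.digamma (s / 2) / 2 := by
  have hπ : (Real.pi : ℂ) ≠ 0 := mod_cast Real.pi_ne_zero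
  have hs2 : 0 < (s / 2).re := by rw [Complex.div_ofNat_re]; positivity
  have hΓ := Complex.differentiableAt_Gamma (s / 2) (ne_neg_natCast_of_re_pos hs2)
  have hhalf : DifferentiableAt ℂ (fun z : ℂ => z / 2) s := by fun_prop
  have hpow : DifferentiableAt ℂ (fun z : ℂ => (Real.pi : ℂ) ^ (-z / 2)) s :=
    .const_cpow (by fun_prop) (Or.inl hπ)
  have hcomp : logDeriv (fun z : ℂ => Complex.Gamma (z / 2)) s = Complex.digamma (s / 2) / 2 := by
    have h := logDeriv_comp (g := fun z : ℂ => z / 2) (x := s) hΓ hhalf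
    rw [deriv_div_const, deriv_id''] at h
    rw [Complex.digamma_def, ← mul_one_div]
    exact h
  have hfactor : Complex.Gammaℝ =
      fun z : ℂ => (Real.pi : ℂ) ^ (-z / 2) * Complex.Gamma (z / 2) :=
    funext Complex.Gammaℝ_def
  rw [hfactor, logDeriv_mul (f := fun z : ℂ => (Real.pi : ℂ) ^ (-z / 2))
    (g := fun z : ℂ => Complex.Gamma (z / 2)) s (by simp [Complex.cpow_eq_zero_iff, hπ])
    (Complex.Gamma_ne_zero_of_re_pos hs2) hpow (hΓ.comp s hhalf), hcomp,
    logDeriv_pi_cpow_neg_div_two]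

theorem logDeriv_entireXi_eq {s : ℂ} (hs : 1 < s.re) :
    logDeriv entireXi s = 1 / (s - 1) - Real.log Real.pi / 2 + Complex.digamma (s / 2 + 1) / 2 +
      deriv riemannZeta s / riemannZeta s := by
  have hs0 : 0 < s.re := one_pos.trans hs
  have hne0 : s ≠ 0 := Complex.ne_zero_of_re_pos hs0
  have hne1 : s - 1 ≠ 0 := Complex.ne_zero_of_re_pos (by simpa using hs)
  have hfactor : entireXi =ᶠ[𝓝 s] fun z => z * ((z - 1) * (Complex.Gammaℝ z * riemannZeta z)) := by
    have hopen : IsOpen {z : ℂ | 1 < z.re} := isOpen_lt continuous_const Complex.continuous_re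
    filter_upwards [hopen.mem_nhds hs] with z (hz : 1 < z.re)
    have h0 : z ≠ 0 := Complex.ne_zero_of_re_pos (one_pos.trans hz)
    have h1 : z ≠ 1 := by rintro rfl; simp at hz
    have hΓ : Complex.Gammaℝ z ≠ 0 := Complex.Gammaℝ_ne_zero_of_re_pos (one_pos.trans hz)
    simp only [entireXi_eq h0 h1, riemannZeta_def_of_ne_zero h0, mul_div_cancel₀ _ hΓ, mul_assoc]
  have hΓ : Complex.Gammaℝ s ≠ 0 := Complex.Gammaℝ_ne_zero_of_re_pos hs0
  have hζ : riemannZeta s ≠ 0 := riemannZeta_ne_zero_of_one_lt_re hs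
  have hdΓ : DifferentiableAt ℂ Complex.Gammaℝ s := by
    simpa only [inv_inv] using (Complex.differentiable_Gammaℝ_inv s).fun_inv (inv_ne_zero hΓ)
  have hdζ : DifferentiableAt ℂ riemannZeta s := differentiableAt_riemannZeta (sub_ne_zero.1 hne1)
  have hds : DifferentiableAt ℂ (fun z : ℂ => z - 1) s := by fun_prop
  have hlds : logDeriv (fun z : ℂ => z - 1) s = 1 / (s - 1) := by simp [logDeriv_apply]
  have hs2 : 0 < (s / 2).re := by rw [Complex.div_ofNat_re]; positivity
  rw [logDeriv_apply, hfactor.deriv_eq, hfactor.eq_of_nhds, ← logDeriv_apply,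
    logDeriv_mul (f := fun z => z)
      (g := fun z => (z - 1) * (Complex.Gammaℝ z * riemannZeta z)) s hne0
      (mul_ne_zero hne1 (mul_ne_zero hΓ hζ)) differentiableAt_id (hds.mul (hdΓ.mul hdζ)),
    logDeriv_mul (f := fun z => z - 1) (g := fun z => Complex.Gammaℝ z * riemannZeta z) s hne1
      (mul_ne_zero hΓ hζ) hds (hdΓ.mul hdζ),
    logDeriv_mul s hΓ hζ hdΓ hdζ,
    logDeriv_id', hlds, logDeriv_Gammaℝ hs0,
    Complex.digamma_apply_add_one _ (ne_neg_natCast_of_re_pos hs2), logDeriv_apply riemannZeta]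
  field_simp
  ring

/-! ### Sums over the zeros -/

theorem log_le_sqrt {x : ℝ} (hx : 0 < x) : Real.log x ≤ √x := by
  have hsqrt : 0 < √x := Real.sqrt_pos.2 hx
  have hlog : Real.log x = 2 * Real.log √x := by
    rw [Real.log_sqrt hx.le]
    ring
  have htangent := Real.log_le_sub_one_of_pos (half_pos hsqrt)
  rw [Real.log_div hsqrt.ne' two_ne_zero] at htangent
  linarith [Real.log_two_lt_d9]

theorem norm_term_vonMangoldt_le {s : ℂ} (hs : 5 / 2 ≤ s.re) (n : ℕ) :
    ‖LSeries.term (fun n => (ArithmeticFunction.vonMangoldt n : ℂ)) s n‖ ≤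
      if n = 1 then 0 else 1 / (n : ℝ) ^ 2 := by
  rw [LSeries.norm_term_eq]
  split_ifs with h0 h1 h1
  · exact le_rfl
  · positivity
  · simp [h1]
  · have hn : (1 : ℝ) ≤ n := mod_cast Nat.one_le_iff_ne_zero.2 h0
    have hn0 : (0 : ℝ) < n := one_pos.trans_le hn
    rw [Complex.norm_real, Real.norm_of_nonneg ArithmeticFunction.vonMangoldt_nonneg,
      div_le_div_iff₀ (by positivity) (by positivity), one_mul]
    calc ArithmeticFunction.vonMangoldt n * (n : ℝ) ^ 2
        ≤ √(n : ℝ) * (n : ℝ) ^ 2 := by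
          gcongr
          exact ArithmeticFunction.vonMangoldt_le_log.trans (log_le_sqrt hn0)
      _ = (n : ℝ) ^ (5 / 2 : ℝ) := by
          rw [Real.sqrt_eq_rpow, ← Real.rpow_natCast, ← Real.rpow_add hn0]
          norm_num
      _ ≤ (n : ℝ) ^ s.re := Real.rpow_le_rpow_of_exponent_le hn hs

theorem norm_deriv_riemannZeta_div_le {s : ℂ} (hs : 5 / 2 ≤ s.re) :
    ‖deriv riemannZeta s / riemannZeta s‖ ≤ 0.645 := by
  have hzeta : HasSum (fun n : ℕ => if n = 1 then 0 else 1 / (n : ℝ) ^ 2)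
      (Real.pi ^ 2 / 6 - 1) := by
    convert! hasSum_zeta_two.update 1 0 using 1
    · ext n
      rw [Function.update_apply]
    · norm_num
      ring
  rw [← norm_neg, ← neg_div,
    ← ArithmeticFunction.LSeries_vonMangoldt_eq_deriv_riemannZeta_div (by linarith)]
  refine (tsum_of_norm_bounded hzeta (norm_term_vonMangoldt_le hs)).trans ?_
  nlinarith [Real.pi_lt_d4, Real.pi_pos]

theorem re_deriv_riemannZeta_div_nonpos {σ : ℝ} (hσ : 1 < σ) :
    (deriv riemannZeta σ / riemannZeta σ).re ≤ 0 := by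
  have hs : 1 < (σ : ℂ).re := by rwa [Complex.ofReal_re]
  rw [← neg_neg (_ / _), ← neg_div,
    ← ArithmeticFunction.LSeries_vonMangoldt_eq_deriv_riemannZeta_div hs, Complex.neg_re,
    neg_nonpos, LSeries, Complex.re_tsum (ArithmeticFunction.LSeriesSummable_vonMangoldt hs)]
  refine tsum_nonneg fun n => ?_
  rcases eq_or_ne n 0 with rfl | hn
  · simp
  · rw [LSeries.term_of_ne_zero hn, ← Complex.ofReal_natCast,
      ← Complex.ofReal_cpow n.cast_nonneg, ← Complex.ofReal_div, Complex.ofReal_re]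
    have := ArithmeticFunction.vonMangoldt_nonneg (n := n)
    positivity

theorem one_le_log_pi : 1 ≤ Real.log Real.pi := by
  rw [Real.le_log_iff_exp_le Real.pi_pos]
  linarith [Real.exp_one_lt_d9, Real.pi_gt_three]

theorem re_logDeriv_entireXi_eq {s : ℂ} (hs : 1 < s.re) :
    (logDeriv entireXi s).re = (1 / (s - 1)).re - Real.log Real.pi / 2 +
      (Complex.digamma (s / 2 + 1)).re / 2 + (deriv riemannZeta s / riemannZeta s).re := by
  rw [logDeriv_entireXi_eq hs, Complex.add_re, Complex.add_re, Complex.sub_re,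
    Complex.div_ofNat_re, Complex.div_ofNat_re, Complex.ofReal_re]

theorem re_logDeriv_entireXi_le_log {A : ℝ} (hA : 20 ≤ A) :
    (logDeriv entireXi (1 / 2 + A)).re ≤ 1 / 2 * Real.log A := by
  have hcast : (1 / 2 + A : ℂ) = ((1 / 2 + A : ℝ) : ℂ) := by push_cast; rfl
  have hpole : (1 / ((1 / 2 + A : ℂ) - 1)).re ≤ 1 / 19 := by
    rw [hcast, ← Complex.ofReal_one, ← Complex.ofReal_sub, ← Complex.ofReal_div,
      Complex.ofReal_re]
    exact one_div_le_one_div_of_le (by norm_num) (by linarith)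
  have hdigamma : (Complex.digamma ((1 / 2 + A : ℂ) / 2 + 1)).re ≤ Real.log A := by
    have hhalf : ((1 / 2 + A : ℂ) / 2 + 1) = ((A / 2 + 5 / 4 : ℝ) : ℂ) := by push_cast; ring
    rw [hhalf, digamma_ofReal (by linarith), Complex.ofReal_re]
    exact (logDeriv_Gamma_le_log (by linarith)).trans
      (Real.log_le_log (by linarith) (by linarith))
  have hζ : (deriv riemannZeta (1 / 2 + A) / riemannZeta (1 / 2 + A)).re ≤ 0 := by
    rw [hcast]
    exact re_deriv_riemannZeta_div_nonpos (by linarith)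
  rw [re_logDeriv_entireXi_eq (by rw [hcast, Complex.ofReal_re]; linarith)]
  linarith [one_le_log_pi]

theorem log_norm_le_half_log_sub {A : ℝ} (hA : 5 ≤ A) {z : ℂ} (hz : z.re = 9 / 4) :
    Real.log ‖z‖ ≤ 1 / 2 * Real.log (A ^ 2 + (2 * z.im) ^ 2) - Real.log 2 := by
  have hnorm : 0 < ‖z‖ := (show 0 < z.re by rw [hz]; norm_num).trans_le (Complex.re_le_norm z)
  have hsq : ‖z‖ ^ 2 = (9 / 4) ^ 2 + z.im ^ 2 := by
    rw [Complex.sq_norm, Complex.normSq_apply, hz]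
    ring
  have hlog : Real.log ((2 * ‖z‖) ^ 2) ≤ Real.log (A ^ 2 + (2 * z.im) ^ 2) :=
    Real.log_le_log (by positivity) (by nlinarith)
  rw [Real.log_pow, Real.log_mul two_ne_zero hnorm.ne'] at hlog
  push_cast at hlog
  linarith

theorem two_mul_re_logDeriv_entireXi_le {A : ℝ} (hA : 5 ≤ A) (t : ℝ) :
    2 * (logDeriv entireXi (1 / 2 + (2 + t * Complex.I))).re ≤
      1 / 2 * Real.log (A ^ 2 + t ^ 2) + 1.22 := by
  set s : ℂ := 1 / 2 + (2 + t * Complex.I) with hs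
  have hre : s.re = 5 / 2 := by
    rw [hs]
    norm_num [Complex.add_re]
  have him : s.im = t := by simp [hs]
  have hpole : (1 / (s - 1)).re ≤ 2 / 3 := by
    have hnorm : 3 / 2 ≤ ‖s - 1‖ := by
      refine le_trans ?_ (Complex.re_le_norm _)
      rw [Complex.sub_re, hre, Complex.one_re]
      norm_num
    calc (1 / (s - 1)).re ≤ ‖1 / (s - 1)‖ := Complex.re_le_norm _
      _ = 1 / ‖s - 1‖ := by rw [norm_div, norm_one]
      _ ≤ 1 / (3 / 2) := by gcongr
      _ = 2 / 3 := by norm_num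
  have hdigamma : (Complex.digamma (s / 2 + 1)).re ≤
      1 / 2 * Real.log (A ^ 2 + t ^ 2) - Real.log 2 + 2 / 7 := by
    have hre' : (s / 2 + 1).re = 9 / 4 := by
      rw [Complex.add_re, Complex.div_ofNat_re, hre, Complex.one_re]
      norm_num
    have him' : 2 * (s / 2 + 1).im = t := by
      rw [Complex.add_im, Complex.div_ofNat_im, him, Complex.one_im]
      ring
    have hle := re_digamma_le (z := s / 2 + 1) (by rw [hre']; norm_num)
    have hlog := log_norm_le_half_log_sub hA hre'
    rw [him'] at hlog
    rw [hre'] at hle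
    norm_num at hle ⊢
    linarith
  have hζ := (Complex.re_le_norm _).trans (norm_deriv_riemannZeta_div_le (s := s) hre.ge)
  rw [re_logDeriv_entireXi_eq (by rw [hre]; norm_num)]
  linarith [one_le_log_pi, Real.log_two_gt_d9]

theorem re_inv_two_add_mul_I (u : ℝ) : ((2 + (u : ℂ) * Complex.I)⁻¹).re = 2 / (4 + u ^ 2) := by
  rw [Complex.inv_re, Complex.normSq_apply]
  norm_num
  ring

theorem re_div_sq_add_sq (t γ : ℝ) :
    2 * ((2 + t * Complex.I) / ((2 + t * Complex.I) ^ 2 + (γ : ℂ) ^ 2)).re =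
      2 / (4 + (t - γ) ^ 2) + 2 / (4 + (t + γ) ^ 2) := by
  have hne (u : ℝ) : 2 + (u : ℂ) * Complex.I ≠ 0 := Complex.ne_zero_of_re_pos (by simp)
  have hfactor : (2 + t * Complex.I) ^ 2 + (γ : ℂ) ^ 2 =
      (2 + (t - γ : ℝ) * Complex.I) * (2 + (t + γ : ℝ) * Complex.I) := by
    push_cast
    linear_combination (γ : ℂ) ^ 2 * Complex.I_sq
  have hsplit : (2 + t * Complex.I) / ((2 + t * Complex.I) ^ 2 + (γ : ℂ) ^ 2) =
      (1 / 2 : ℝ) *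
        ((2 + (t - γ : ℝ) * Complex.I)⁻¹ + (2 + (t + γ : ℝ) * Complex.I)⁻¹) := by
    rw [hfactor, inv_add_inv (hne _) (hne _), div_eq_mul_inv, div_eq_mul_inv]
    push_cast
    ring
  rw [hsplit, Complex.re_ofReal_mul, Complex.add_re, re_inv_two_add_mul_I, re_inv_two_add_mul_I]
  ring

theorem hasSum_div_sq_add_ordinate_sq (hRH : RiemannHypothesis) {A : ℝ} (hA : 0 < A) :
    HasSum (fun i : XiZero => A / (A ^ 2 + i.ordinate ^ 2))
      (logDeriv entireXi (1 / 2 + A)).re := by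
  convert Complex.hasSum_re (hasSum_logDeriv_entireXi hRH (w := A) hA) using 2 with i
  exact_mod_cast (Complex.ofReal_re _).symm

theorem sum_one_div_sq_add_ordinate_sq_le (hRH : RiemannHypothesis) {A : ℝ} (hA : 20 ≤ A)
    (S : Finset XiZero) :
    ∑ i ∈ S, 1 / (A ^ 2 + i.ordinate ^ 2) ≤ 1 / 2 * Real.log A / A := by
  have hA0 : 0 < A := by linarith
  rw [le_div_iff₀ hA0, Finset.sum_mul]
  refine (Finset.sum_congr rfl fun i _ => one_div_mul_eq_div _ _).trans_le ?_
  exact (sum_le_hasSum S (fun i _ => by positivity)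
    (hasSum_div_sq_add_ordinate_sq hRH hA0)).trans (re_logDeriv_entireXi_le_log hA)

theorem hasSum_two_div_four_add (hRH : RiemannHypothesis) (t : ℝ) :
    HasSum (fun i : XiZero => 2 / (4 + (t - i.ordinate) ^ 2) + 2 / (4 + (t + i.ordinate) ^ 2))
      (2 * (logDeriv entireXi (1 / 2 + (2 + t * Complex.I))).re) := by
  simpa only [re_div_sq_add_sq] using (Complex.hasSum_re
    (hasSum_logDeriv_entireXi hRH (w := 2 + t * Complex.I) (by simp))).mul_left 2

theorem sum_two_div_four_add_le (hRH : RiemannHypothesis) {A : ℝ} (hA : 5 ≤ A) (t : ℝ)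
    (S : Finset XiZero) :
    ∑ i ∈ S, (2 / (4 + (t - i.ordinate) ^ 2) + 2 / (4 + (t + i.ordinate) ^ 2)) ≤
      1 / 2 * Real.log (A ^ 2 + t ^ 2) + 1.22 :=
  (sum_le_hasSum S (fun i _ => by positivity) (hasSum_two_div_four_add hRH t)).trans
    (two_mul_re_logDeriv_entireXi_le hA t)

/-! ### Termwise Mellin transforms and uniqueness -/

theorem hasMellin_add_of_hasMellin {f g : ℝ → ℂ} {s a b : ℂ} (hf : HasMellin f s a)
    (hg : HasMellin g s b) : HasMellin (fun t => f t + g t) s (a + b) := by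
  simpa only [hf.2, hg.2] using hasMellin_add hf.1 hg.1

theorem hasMellin_sub_of_hasMellin {f g : ℝ → ℂ} {s a b : ℂ} (hf : HasMellin f s a)
    (hg : HasMellin g s b) : HasMellin (fun t => f t - g t) s (a - b) := by
  simpa only [hf.2, hg.2] using hasMellin_sub hf.1 hg.1

theorem hasMellin_const_mul_of_hasMellin {f : ℝ → ℂ} {s a : ℂ} (hf : HasMellin f s a) (c : ℂ) :
    HasMellin (fun t => c * f t) s (c * a) := by
  simpa only [hf.2, smul_eq_mul] using hasMellin_const_smul hf.1 c

theorem hasMellin_comp_mul_left_of_hasMellin {f : ℝ → ℂ} {s m : ℂ} (hf : HasMellin f s m) {a : ℝ}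
    (ha : 0 < a) : HasMellin (fun t => f (a * t)) s ((a : ℂ) ^ (-s) * m) :=
  ⟨(MellinConvergent.comp_mul_left ha).2 hf.1,
    by rw [mellin_comp_mul_left f s ha, hf.2, smul_eq_mul]⟩

theorem integrable_of_hasSum_of_summable_integral_norm {α ι E : Type*} [Countable ι]
    [MeasurableSpace α] {μ : Measure α} [NormedAddCommGroup E]
    {F : ι → α → E} {f : α → E} (hF : ∀ i, Integrable (F i) μ)
    (hsum : Summable fun i => ∫ a, ‖F i a‖ ∂μ) (hf : ∀ᵐ a ∂μ, HasSum (fun i => F i a) (f a)) :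
    Integrable f μ := by
  refine ⟨aestronglyMeasurable_of_tendsto_ae (atTop : Filter (Finset ι))
    (fun S => (integrable_finsetSum S fun i _ => hF i).1) hf, ?_⟩
  have hnorm (i : ι) : ∫⁻ a, ‖F i a‖ₑ ∂μ = ENNReal.ofReal (∫ a, ‖F i a‖ ∂μ) :=
    (ofReal_integral_norm_eq_lintegral_enorm (hF i)).symm
  calc ∫⁻ a, ‖f a‖ₑ ∂μ ≤ ∫⁻ a, ∑' i, ‖F i a‖ₑ ∂μ := by
        refine lintegral_mono_ae (hf.mono fun a ha => ?_)
        rw [← ha.tsum_eq]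
        exact enorm_tsum_le_tsum_enorm
    _ = ENNReal.ofReal (∑' i, ∫ a, ‖F i a‖ ∂μ) := by
        rw [lintegral_tsum fun i => (hF i).1.enorm, tsum_congr hnorm,
          ENNReal.ofReal_tsum_of_nonneg (fun i => integral_nonneg fun _ => norm_nonneg _) hsum]
    _ < ⊤ := ENNReal.ofReal_lt_top

theorem hasMellin_of_hasSum {ι : Type*} [Countable ι] {g : ι → ℝ → ℂ} {f : ℝ → ℂ} {m : ι → ℂ}
    {s : ℂ} (hg : ∀ i, HasMellin (g i) s (m i))
    (hsum : Summable fun i => ∫ t in Ioi (0 : ℝ), ‖(t : ℂ) ^ (s - 1) • g i t‖)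
    (hf : ∀ t > 0, HasSum (fun i => g i t) (f t)) : HasMellin f s (∑' i, m i) := by
  have hint (i : ι) : IntegrableOn (fun t : ℝ => (t : ℂ) ^ (s - 1) • g i t) (Ioi 0) := (hg i).1
  have hlim : ∀ t > (0 : ℝ), HasSum (fun i => (t : ℂ) ^ (s - 1) • g i t)
      ((t : ℂ) ^ (s - 1) • f t) := fun t ht => (hf t ht).const_smul _
  refine ⟨integrable_of_hasSum_of_summable_integral_norm hint hsum
    (ae_restrict_of_forall_mem measurableSet_Ioi hlim), ?_⟩
  rw [tsum_congr fun i => (hg i).2.symm]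
  exact (setIntegral_congr_fun measurableSet_Ioi fun t ht => (hlim t ht).tsum_eq.symm).trans
    (hasSum_integral_of_summable_integral_norm hint hsum).tsum_eq.symm

theorem integral_norm_cpow_smul_comp_mul_left (f : ℝ → ℂ) (s : ℂ) {a : ℝ} (ha : 0 < a) :
    ∫ t in Ioi (0 : ℝ), ‖(t : ℂ) ^ (s - 1) • f (a * t)‖ =
      a ^ (-s.re) * ∫ t in Ioi (0 : ℝ), ‖(t : ℂ) ^ (s - 1) • f t‖ := by
  have hscale : ∀ t ∈ Ioi (0 : ℝ), ‖(t : ℂ) ^ (s - 1) • f (a * t)‖ =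
      a ^ (1 - s.re) * ‖((a * t : ℝ) : ℂ) ^ (s - 1) • f (a * t)‖ := by
    intro t ht
    have ht : 0 < t := ht
    rw [norm_smul, norm_smul, Complex.norm_cpow_eq_rpow_re_of_pos ht,
      Complex.norm_cpow_eq_rpow_re_of_pos (mul_pos ha ht), Real.mul_rpow ha.le ht.le, ← mul_assoc,
      ← mul_assoc, ← Real.rpow_add ha, Complex.sub_re, Complex.one_re, sub_add_sub_cancel,
      sub_self, Real.rpow_zero, one_mul]
  rw [setIntegral_congr_fun measurableSet_Ioi hscale, integral_const_mul,
    integral_comp_mul_left_Ioi (fun u : ℝ => ‖(u : ℂ) ^ (s - 1) • f u‖) 0 ha, mul_zero,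
    smul_eq_mul, ← mul_assoc, ← Real.rpow_neg_one, ← Real.rpow_add ha]
  ring_nf

theorem eq_zero_of_hasMellin_zero {h : ℝ → ℂ} {σ : ℝ}
    (hh : ∀ s : ℂ, s.re = σ → HasMellin h s 0) {x : ℝ} (hx : 0 < x) (hc : ContinuousAt h x) :
    h x = 0 := by
  have hzero (y : ℝ) : mellin h (σ + y * Complex.I) = 0 := (hh _ (by simp)).2
  rw [← mellinInv_mellin_eq σ h hx (hh σ (by simp)).1 ?_ hc]
  · simp [mellinInv, hzero]
  · simp [Complex.VerticalIntegrable, hzero]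

theorem norm_cpow_smul_le_of_norm_le_rpow {z s : ℂ} {C a t : ℝ} (hC : 0 ≤ C) (hs : a + 1 ≤ s.re)
    (ht0 : 0 < t) (ht1 : t ≤ 1) (hz : ‖z‖ ≤ C * t ^ (-a)) : ‖(t : ℂ) ^ (s - 1) • z‖ ≤ C := by
  have hexp : 0 ≤ s.re - 1 + -a := by linarith
  calc ‖(t : ℂ) ^ (s - 1) • z‖ ≤ t ^ (s.re - 1) * (C * t ^ (-a)) := by
        rw [norm_smul, Complex.norm_cpow_eq_rpow_re_of_pos ht0, Complex.sub_re, Complex.one_re]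
        gcongr
    _ = C * t ^ (s.re - 1 + -a) := by rw [mul_left_comm, ← Real.rpow_add ht0]
    _ ≤ C := mul_le_of_le_one_right hC (Real.rpow_le_one ht0.le ht1 hexp)

theorem integral_norm_cpow_smul_le {g : ℝ → ℂ} {C a : ℝ} {s : ℂ} (hC : 0 ≤ C)
    (hs : a + 1 ≤ s.re) (hg_zero : ∀ t > 1, g t = 0)
    (hg_le : ∀ t > 0, t ≤ 1 → ‖g t‖ ≤ C * t ^ (-a)) :
    ∫ t in Ioi (0 : ℝ), ‖(t : ℂ) ^ (s - 1) • g t‖ ≤ C := by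
  have hle : ∀ t ∈ Ioi (0 : ℝ), ‖(t : ℂ) ^ (s - 1) • g t‖ ≤ indicator (Ioc 0 1) (fun _ => C) t := by
    intro t (ht : 0 < t)
    rcases le_or_gt t 1 with ht1 | ht1
    · rw [indicator_of_mem (mem_Ioc.2 ⟨ht, ht1⟩)]
      exact norm_cpow_smul_le_of_norm_le_rpow hC hs ht ht1 (hg_le t ht ht1)
    · rw [hg_zero t ht1, smul_zero, norm_zero]
      exact indicator_nonneg (fun _ _ => hC) t
  have hint : IntegrableOn (indicator (Ioc (0 : ℝ) 1) fun _ => C) (Ioi 0) :=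
    ((integrable_indicator_iff measurableSet_Ioc).2 (by simp)).integrableOn
  calc _ ≤ ∫ t in Ioi (0 : ℝ), indicator (Ioc 0 1) (fun _ => C) t :=
        integral_mono_of_nonneg (Eventually.of_forall fun _ => norm_nonneg _) hint
          (ae_restrict_of_forall_mem measurableSet_Ioi hle)
    _ = C := by
        rw [setIntegral_indicator measurableSet_Ioc, inter_eq_right.2 Ioc_subset_Ioi_self]
        simp

/-! ### The explicit formula -/

/-- The power function `t ↦ t ^ a` cut off to `(0, 1]`; its Mellin transform is `1 / (s + a)`. -/
noncomputable def cutPow (a : ℂ) (t : ℝ) : ℂ := indicator (Ioc 0 1) (fun u : ℝ => (u : ℂ) ^ a) t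

theorem cutPow_of_mem {t : ℝ} (ht0 : 0 < t) (ht1 : t ≤ 1) (a : ℂ) : cutPow a t = (t : ℂ) ^ a :=
  indicator_of_mem (mem_Ioc.2 ⟨ht0, ht1⟩) _

theorem cutPow_of_one_lt {t : ℝ} (ht : 1 < t) (a : ℂ) : cutPow a t = 0 :=
  indicator_of_notMem (fun h => ht.not_ge h.2) _

theorem hasMellin_cutPow (a : ℂ) {s : ℂ} (hs : 0 < s.re + a.re) :
    HasMellin (cutPow a) s (1 / (s + a)) := hasMellin_cpow_Ioc a hs

theorem continuousAt_cutPow (a : ℂ) {t : ℝ} (ht0 : 0 < t) (ht1 : t < 1) :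
    ContinuousAt (cutPow a) t := by
  refine (Complex.continuousAt_ofReal_cpow_const t a (Or.inr ht0.ne')).congr ?_
  filter_upwards [Ioo_mem_nhds ht0 ht1] with u hu
  exact (cutPow_of_mem hu.1 hu.2.le a).symm

/-- The hat function `(1 - t)₊` on `(0, ∞)`. -/
noncomputable def cutHat (t : ℝ) : ℂ := cutPow 0 t - cutPow 1 t

theorem cutHat_eq {t : ℝ} (ht : 0 < t) : cutHat t = ((max (1 - t) 0 : ℝ) : ℂ) := by
  rcases le_or_gt t 1 with h | h
  · simp [cutHat, cutPow_of_mem ht h, max_eq_left (sub_nonneg.2 h)]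
  · rw [cutHat, cutPow_of_one_lt h, cutPow_of_one_lt h, max_eq_right (by linarith)]
    simp

theorem hasMellin_cutHat {s : ℂ} (hs : 0 < s.re) : HasMellin cutHat s (1 / (s * (s + 1))) := by
  have hne0 : s ≠ 0 := Complex.ne_zero_of_re_pos hs
  have hne1 : s + 1 ≠ 0 := Complex.ne_zero_of_re_pos (by simpa using hs.trans (lt_add_one _))
  have hsplit : 1 / (s * (s + 1)) = 1 / (s + 0) - 1 / (s + 1) := by
    rw [add_zero]
    field_simp
    ring
  rw [hsplit]
  exact hasMellin_sub_of_hasMellin (hasMellin_cutPow 0 (by simpa using hs))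
    (hasMellin_cutPow 1 (by simpa using hs.trans (lt_add_one _)))

theorem continuousAt_cutHat {t : ℝ} (ht0 : 0 < t) (ht1 : t < 1) : ContinuousAt cutHat t :=
  (continuousAt_cutPow 0 ht0 ht1).sub (continuousAt_cutPow 1 ht0 ht1)

/-- The function on `(0, 1]` with Mellin transform `1 / ((s - ρ) s (s + 1))`: what a simple pole
at `ρ` of a logarithmic derivative contributes to the explicit formula. -/
noncomputable def polePiece (ρ : ℂ) (t : ℝ) : ℂ :=
  1 / (ρ * (ρ + 1)) * cutPow (-ρ) t - 1 / ρ * cutPow 0 t + 1 / (ρ + 1) * cutPow 1 t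

theorem polePiece_of_one_lt (ρ : ℂ) {t : ℝ} (ht : 1 < t) : polePiece ρ t = 0 := by
  simp [polePiece, cutPow_of_one_lt ht]

theorem polePiece_of_mem (ρ : ℂ) {t : ℝ} (ht0 : 0 < t) (ht1 : t ≤ 1) :
    polePiece ρ t = 1 / (ρ * (ρ + 1)) * (t : ℂ) ^ (-ρ) - 1 / ρ + 1 / (ρ + 1) * t := by
  simp only [polePiece, cutPow_of_mem ht0 ht1, Complex.cpow_zero, Complex.cpow_one, mul_one]

theorem continuousAt_polePiece (ρ : ℂ) {t : ℝ} (ht0 : 0 < t) (ht1 : t < 1) :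
    ContinuousAt (polePiece ρ) t :=
  ((continuousAt_const.mul (continuousAt_cutPow _ ht0 ht1)).sub
    (continuousAt_const.mul (continuousAt_cutPow _ ht0 ht1))).add
    (continuousAt_const.mul (continuousAt_cutPow _ ht0 ht1))

theorem hasMellin_polePiece {ρ s : ℂ} (hρ : 0 < ρ.re) (hs : ρ.re < s.re) :
    HasMellin (polePiece ρ) s (1 / (s - ρ) / (s * (s + 1))) := by
  have hs0 : 0 < s.re := hρ.trans hs
  have hs1 : 0 < s.re + 1 := by linarith
  have hne : ρ ≠ 0 := Complex.ne_zero_of_re_pos hρ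
  have hne' : ρ + 1 ≠ 0 := Complex.ne_zero_of_re_pos (by simpa using hρ.trans (lt_add_one _))
  have hs_ne : s ≠ 0 := Complex.ne_zero_of_re_pos hs0
  have hs_ne' : s + 1 ≠ 0 := Complex.ne_zero_of_re_pos (by simpa using hs1)
  have hsub : s - ρ ≠ 0 := Complex.ne_zero_of_re_pos (by simpa using hs)
  have hsplit : 1 / (s - ρ) / (s * (s + 1)) = 1 / (ρ * (ρ + 1)) * (1 / (s + -ρ)) -
      1 / ρ * (1 / (s + 0)) + 1 / (ρ + 1) * (1 / (s + 1)) := by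
    rw [← sub_eq_add_neg, add_zero]
    field_simp
    ring
  rw [hsplit]
  exact hasMellin_add_of_hasMellin (hasMellin_sub_of_hasMellin
    (hasMellin_const_mul_of_hasMellin (hasMellin_cutPow (-ρ) (by simpa using hs)) _)
    (hasMellin_const_mul_of_hasMellin (hasMellin_cutPow 0 (by simpa using hs0)) _))
    (hasMellin_const_mul_of_hasMellin (hasMellin_cutPow 1 (by simpa using hs1)) _)

/-- A function supported in `(0, 1]`, continuous inside, of size at most `C t ^ (-1/2)`. Series of
such functions with summable constants may be integrated against `t ^ (s - 1)` termwise. -/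
structure IsCutoffPiece (g : ℝ → ℂ) (C : ℝ) : Prop where
  eq_zero : ∀ t > 1, g t = 0
  continuousAt : ∀ t > 0, t < 1 → ContinuousAt g t
  norm_le : ∀ t > 0, t ≤ 1 → ‖g t‖ ≤ C * t ^ (-(1 / 2) : ℝ)

namespace IsCutoffPiece

variable {ι : Type*} {g : ι → ℝ → ℂ} {C : ι → ℝ}

theorem nonneg {g : ℝ → ℂ} {C : ℝ} (hg : IsCutoffPiece g C) : 0 ≤ C := by
  simpa using (norm_nonneg _).trans (hg.norm_le 1 one_pos le_rfl)

theorem hasSum (hg : ∀ i, IsCutoffPiece (g i) (C i)) (hC : Summable C) {t : ℝ} (ht : 0 < t) :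
    HasSum (fun i => g i t) (∑' i, g i t) := by
  rcases le_or_gt t 1 with h | h
  · exact (Summable.of_norm_bounded (hC.mul_right _) fun i => (hg i).norm_le t ht h).hasSum
  · simp [(hg _).eq_zero t h]

theorem hasMellin_tsum [Countable ι] (hg : ∀ i, IsCutoffPiece (g i) (C i)) (hC : Summable C)
    {s : ℂ} (hs : 3 / 2 ≤ s.re) {m : ι → ℂ} (hm : ∀ i, HasMellin (g i) s (m i)) :
    HasMellin (fun t => ∑' i, g i t) s (∑' i, m i) :=
  hasMellin_of_hasSum hm
    (.of_nonneg_of_le (fun _ => integral_nonneg fun _ => norm_nonneg _)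
      (fun i => integral_norm_cpow_smul_le (hg i).nonneg (by linarith) (hg i).eq_zero
        (hg i).norm_le) hC)
    fun _ => hasSum hg hC

theorem continuousAt_tsum (hg : ∀ i, IsCutoffPiece (g i) (C i)) (hC : Summable C) {t : ℝ}
    (ht0 : 0 < t) (ht1 : t < 1) : ContinuousAt (fun t => ∑' i, g i t) t := by
  have hcont : ContinuousOn (fun t => ∑' i, g i t) (Ioo (t / 2) 1) := by
    refine continuousOn_tsum (u := fun i => C i * (t / 2) ^ (-(1 / 2) : ℝ))
      (fun i u hu => ((hg i).continuousAt u ((half_pos ht0).trans hu.1) hu.2).continuousWithinAt)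
      (hC.mul_right _) fun i u hu => ?_
    exact ((hg i).norm_le u ((half_pos ht0).trans hu.1) hu.2.le).trans (mul_le_mul_of_nonneg_left
      (Real.rpow_le_rpow_of_nonpos (half_pos ht0) hu.1.le (by norm_num)) (hg i).nonneg)
  exact hcont.continuousAt (Ioo_mem_nhds (half_lt_self ht0) ht1)

end IsCutoffPiece

theorem norm_le_norm_add_one {z : ℂ} (hz : 0 ≤ z.re) : ‖z‖ ≤ ‖z + 1‖ := by
  rw [← sq_le_sq₀ (norm_nonneg _) (norm_nonneg _), Complex.sq_norm, Complex.sq_norm,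
    Complex.normSq_apply, Complex.normSq_apply, Complex.add_re, Complex.add_im, Complex.one_re,
    Complex.one_im]
  nlinarith

theorem norm_one_div_mul_add_one_le {ρ : ℂ} (hρ : 0 < ρ.re) :
    ‖1 / (ρ * (ρ + 1))‖ ≤ 1 / ‖ρ‖ ^ 2 := by
  have : 0 < ‖ρ‖ := norm_pos_iff.2 (Complex.ne_zero_of_re_pos hρ)
  rw [norm_div, norm_one, norm_mul, sq]
  gcongr
  exact norm_le_norm_add_one hρ.le

theorem norm_one_sub_of_re_eq_half {ρ : ℂ} (hρ : ρ.re = 1 / 2) : ‖1 - ρ‖ = ‖ρ‖ := by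
  have hconj : 1 - ρ = (starRingEnd ℂ) ρ := by
    apply Complex.ext
    · norm_num [hρ]
    · simp
  rw [hconj, Complex.norm_conj]

theorem polePiece_add_polePiece_one_sub {ρ : ℂ} (hρ0 : 0 < ρ.re) (hρ1 : ρ.re < 1) {t : ℝ}
    (ht0 : 0 < t) (ht1 : t ≤ 1) :
    polePiece ρ t + polePiece (1 - ρ) t =
      1 / (ρ * (ρ + 1)) * (t : ℂ) ^ (-ρ) +
        1 / ((1 - ρ) * (1 - ρ + 1)) * (t : ℂ) ^ (-(1 - ρ)) -
        1 / (ρ * (1 - ρ)) + 3 / ((ρ + 1) * (1 - ρ + 1)) * t := by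
  have hne : ρ ≠ 0 := Complex.ne_zero_of_re_pos hρ0
  have hne' : 1 - ρ ≠ 0 := Complex.ne_zero_of_re_pos (by simpa using hρ1)
  have hadd : ρ + 1 ≠ 0 := Complex.ne_zero_of_re_pos (by simpa using hρ0.trans (lt_add_one _))
  have hadd' : 1 - ρ + 1 ≠ 0 := Complex.ne_zero_of_re_pos (by
    rw [Complex.add_re, Complex.sub_re, Complex.one_re]
    linarith)
  have hzero : 1 / ρ + 1 / (1 - ρ) = 1 / (ρ * (1 - ρ)) := by
    field_simp
    ring
  have hone : 1 / (ρ + 1) + 1 / (1 - ρ + 1) = 3 / ((ρ + 1) * (1 - ρ + 1)) := by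
    field_simp
    ring
  rw [polePiece_of_mem _ ht0 ht1, polePiece_of_mem _ ht0 ht1, ← hzero, ← hone]
  ring

theorem norm_polePiece_add_polePiece_one_sub_le {ρ : ℂ} (hρ : ρ.re = 1 / 2) {t : ℝ}
    (ht0 : 0 < t) (ht1 : t ≤ 1) :
    ‖polePiece ρ t + polePiece (1 - ρ) t‖ ≤ 6 / ‖ρ‖ ^ 2 * t ^ (-(1 / 2) : ℝ) := by
  have hρ0 : 0 < ρ.re := by norm_num [hρ]
  have hρ' : (1 - ρ).re = 1 / 2 := by norm_num [hρ]
  have hρ0' : 0 < (1 - ρ).re := by norm_num [hρ']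
  have hnorm := norm_one_sub_of_re_eq_half hρ
  have hpos : 0 < ‖ρ‖ := norm_pos_iff.2 (Complex.ne_zero_of_re_pos hρ0)
  set T : ℝ := t ^ (-(1 / 2) : ℝ)
  have hT : 1 ≤ T := Real.one_le_rpow_of_pos_of_le_one_of_nonpos ht0 ht1 (by norm_num)
  have hcpow {z : ℂ} (hz : z.re = 1 / 2) : ‖(t : ℂ) ^ (-z)‖ = T := by
    rw [Complex.norm_cpow_eq_rpow_re_of_pos ht0, Complex.neg_re, hz]
  have hmain : ‖1 / (ρ * (ρ + 1)) * (t : ℂ) ^ (-ρ)‖ ≤ 1 / ‖ρ‖ ^ 2 * T := by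
    rw [norm_mul, hcpow hρ]
    gcongr
    exact norm_one_div_mul_add_one_le hρ0
  have hmain' : ‖1 / ((1 - ρ) * (1 - ρ + 1)) * (t : ℂ) ^ (-(1 - ρ))‖ ≤ 1 / ‖ρ‖ ^ 2 * T := by
    rw [norm_mul, hcpow hρ', ← hnorm]
    gcongr
    exact norm_one_div_mul_add_one_le hρ0'
  have hconst : ‖1 / (ρ * (1 - ρ))‖ ≤ 1 / ‖ρ‖ ^ 2 * T := by
    rw [norm_div, norm_one, norm_mul, hnorm, ← sq]
    exact le_mul_of_one_le_right (by positivity) hT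
  have hlinear : ‖3 / ((ρ + 1) * (1 - ρ + 1)) * (t : ℂ)‖ ≤ 3 / ‖ρ‖ ^ 2 * T := by
    rw [norm_mul, norm_div, Complex.norm_ofNat, norm_mul, Complex.norm_real,
      Real.norm_of_nonneg ht0.le, sq]
    have hle := norm_le_norm_add_one hρ0.le
    have hle' := hnorm ▸ norm_le_norm_add_one hρ0'.le
    have := ht1.trans hT
    gcongr
  rw [polePiece_add_polePiece_one_sub hρ0 (by norm_num [hρ]) ht0 ht1]
  calc _ ≤ 1 / ‖ρ‖ ^ 2 * T + 1 / ‖ρ‖ ^ 2 * T + 1 / ‖ρ‖ ^ 2 * T + 3 / ‖ρ‖ ^ 2 * T :=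
        norm_add_le_of_le (norm_sub_le_of_le (norm_add_le_of_le hmain hmain') hconst) hlinear
    _ = 6 / ‖ρ‖ ^ 2 * T := by ring

/-- The contribution of the pair of zeros `1/2 ± iγ`, halved because a sum over all zeros meets
the pair twice. -/
noncomputable def zeroPair (γ t : ℝ) : ℂ :=
  1 / 2 * (polePiece (1 / 2 + γ * Complex.I) t + polePiece (1 / 2 - γ * Complex.I) t)

theorem isCutoffPiece_zeroPair (γ : ℝ) : IsCutoffPiece (zeroPair γ) (12 * (1 / (1 + γ ^ 2))) where
  eq_zero t ht := by simp [zeroPair, polePiece_of_one_lt _ ht]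
  continuousAt t ht0 ht1 := continuousAt_const.mul
    ((continuousAt_polePiece _ ht0 ht1).add (continuousAt_polePiece _ ht0 ht1))
  norm_le t ht0 ht1 := by
    set ρ : ℂ := 1 / 2 + γ * Complex.I with hρ
    have hre : ρ.re = 1 / 2 := by simp [hρ]
    have hnormSq : ‖ρ‖ ^ 2 = 1 / 4 + γ ^ 2 := by
      have him : ρ.im = γ := by simp [hρ]
      rw [Complex.sq_norm, Complex.normSq_apply, hre, him]
      ring
    have hle := norm_polePiece_add_polePiece_one_sub_le hre ht0 ht1
    rw [hnormSq] at hle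
    have hconst : 1 / 2 * (6 / (1 / 4 + γ ^ 2)) ≤ 12 * (1 / (1 + γ ^ 2)) := by
      rw [mul_div, mul_div, div_le_div_iff₀ (by positivity) (by positivity)]
      linarith [sq_nonneg γ]
    rw [zeroPair, norm_mul, ← hρ, show 1 / 2 - γ * Complex.I = 1 - ρ by rw [hρ]; ring]
    calc _ ≤ 1 / 2 * (6 / (1 / 4 + γ ^ 2) * t ^ (-(1 / 2) : ℝ)) := by
          gcongr
          simp
      _ ≤ _ := by
          rw [← mul_assoc]
          gcongr

theorem hasMellin_zeroPair (γ : ℝ) {s : ℂ} (hs : 1 / 2 < s.re) :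
    HasMellin (zeroPair γ) s ((s - 1 / 2) / ((s - 1 / 2) ^ 2 + (γ : ℂ) ^ 2) / (s * (s + 1))) := by
  have hne : s - (1 / 2 + γ * Complex.I) ≠ 0 := Complex.ne_zero_of_re_pos (by simpa using hs)
  have hne' : s - (1 / 2 - γ * Complex.I) ≠ 0 := Complex.ne_zero_of_re_pos (by simpa using hs)
  have hfactor : (s - 1 / 2) ^ 2 + (γ : ℂ) ^ 2 =
      (s - (1 / 2 + γ * Complex.I)) * (s - (1 / 2 - γ * Complex.I)) := by
    linear_combination (γ : ℂ) ^ 2 * Complex.I_sq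
  have hsplit : (s - 1 / 2) / ((s - 1 / 2) ^ 2 + (γ : ℂ) ^ 2) / (s * (s + 1)) =
      1 / 2 * (1 / (s - (1 / 2 + γ * Complex.I)) / (s * (s + 1)) +
        1 / (s - (1 / 2 - γ * Complex.I)) / (s * (s + 1))) := by
    rw [← add_div, div_add_div _ _ hne hne', ← hfactor]
    ring
  rw [hsplit]
  exact hasMellin_const_mul_of_hasMellin (hasMellin_add_of_hasMellin
    (hasMellin_polePiece (by simp) (by simpa using hs))
    (hasMellin_polePiece (by simp) (by simpa using hs))) _

/-- The contribution of the trivial zero `-2 (j + 1)`. -/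
noncomputable def trivialPiece (j : ℕ) (t : ℝ) : ℂ :=
  1 / ((2 * (j + 1)) * (2 * j + 1)) * (cutPow 1 t - cutPow (2 * (j + 1)) t)

theorem trivialPiece_of_mem (j : ℕ) {t : ℝ} (ht0 : 0 < t) (ht1 : t ≤ 1) :
    trivialPiece j t =
      ((1 / ((2 * (j + 1)) * (2 * j + 1)) * (t - t ^ (2 * (j + 1))) : ℝ) : ℂ) := by
  have hexp : 2 * ((j : ℂ) + 1) = ((2 * (j + 1) : ℕ) : ℂ) := by push_cast; ring
  rw [trivialPiece, cutPow_of_mem ht0 ht1, cutPow_of_mem ht0 ht1, Complex.cpow_one, hexp,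
    Complex.cpow_natCast]
  push_cast
  ring

theorem isCutoffPiece_trivialPiece (j : ℕ) :
    IsCutoffPiece (trivialPiece j) (1 / ((j : ℝ) + 1) ^ 2) where
  eq_zero t ht := by simp [trivialPiece, cutPow_of_one_lt ht]
  continuousAt t ht0 ht1 := continuousAt_const.mul
    ((continuousAt_cutPow _ ht0 ht1).sub (continuousAt_cutPow _ ht0 ht1))
  norm_le t ht0 ht1 := by
    have hT : 1 ≤ t ^ (-(1 / 2) : ℝ) :=
      Real.one_le_rpow_of_pos_of_le_one_of_nonpos ht0 ht1 (by norm_num)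
    have hpow0 : 0 ≤ t ^ (2 * (j + 1)) := by positivity
    have hpow1 : t ^ (2 * (j + 1)) ≤ 1 := pow_le_one₀ ht0.le ht1
    have : (0 : ℝ) ≤ j := j.cast_nonneg
    rw [trivialPiece_of_mem j ht0 ht1, Complex.norm_real, norm_mul,
      Real.norm_of_nonneg (by positivity)]
    gcongr
    · nlinarith
    · exact (abs_le.2 ⟨by linarith, by linarith⟩).trans hT

theorem hasMellin_trivialPiece (j : ℕ) {s : ℂ} (hs : 0 < s.re) :
    HasMellin (trivialPiece j) s
      (1 / 2 * (1 / (1 + j) - 1 / (s / 2 + 1 + j)) / (s * (s + 1))) := by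
  have hs0 : s ≠ 0 := Complex.ne_zero_of_re_pos hs
  have hs1 : s + 1 ≠ 0 := Complex.ne_zero_of_re_pos (by simpa using hs.trans (lt_add_one _))
  have hj1 : (j + 1 : ℂ) ≠ 0 := Nat.cast_add_one_ne_zero j
  have hj2 : (2 * j + 1 : ℂ) ≠ 0 := by exact_mod_cast (2 * j).succ_ne_zero
  have hsj : 0 < (s + 2 * (j + 1)).re := by
    simp only [Complex.add_re, Complex.mul_re, Complex.re_ofNat, Complex.natCast_re,
      Complex.one_re, Complex.im_ofNat, zero_mul, sub_zero]
    positivity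
  have hne : s + 2 * (j + 1) ≠ 0 := Complex.ne_zero_of_re_pos hsj
  have hsplit : 1 / 2 * (1 / (1 + j) - 1 / (s / 2 + 1 + j)) / (s * (s + 1)) =
      1 / ((2 * (j + 1)) * (2 * j + 1)) * (1 / (s + 1) - 1 / (s + 2 * (j + 1))) := by
    rw [show s / 2 + 1 + j = (s + 2 * (j + 1)) / 2 by ring, add_comm (1 : ℂ)]
    field_simp
    ring
  rw [hsplit]
  exact hasMellin_const_mul_of_hasMellin (hasMellin_sub_of_hasMellin
    (hasMellin_cutPow 1 (by simpa using hs.trans (lt_add_one _)))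
    (hasMellin_cutPow _ (by rwa [← Complex.add_re]))) _

/-- The Riesz mean `∑ₙ Λ(n) (1 - n t)₊` of the von Mangoldt function. -/
noncomputable def mangoldtHat (t : ℝ) : ℝ :=
  ∑' n : ℕ, ArithmeticFunction.vonMangoldt n * max (1 - n * t) 0

theorem max_one_sub_mul_eq_zero {N n : ℕ} {t : ℝ} (ht : 0 ≤ t) (hN : 1 ≤ N * t) (hn : N ≤ n) :
    max (1 - n * t) 0 = 0 :=
  max_eq_right (sub_nonpos.2 (hN.trans (by gcongr)))

theorem mangoldtHat_eq_sum {N : ℕ} {t : ℝ} (ht : 0 ≤ t) (hN : 1 ≤ N * t) :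
    mangoldtHat t =
      ∑ n ∈ Finset.range N, ArithmeticFunction.vonMangoldt n * max (1 - n * t) 0 :=
  tsum_eq_sum fun n hn => by
    rw [max_one_sub_mul_eq_zero ht hN (not_lt.1 (mt Finset.mem_range.2 hn)), mul_zero]

theorem hasSum_mangoldtHat {t : ℝ} (ht : 0 < t) :
    HasSum (fun n : ℕ => ArithmeticFunction.vonMangoldt n * max (1 - n * t) 0)
      (mangoldtHat t) := by
  obtain ⟨N, hN⟩ := exists_nat_ge (1 / t)
  rw [div_le_iff₀ ht] at hN
  refine (summable_of_ne_finset_zero (s := Finset.range N) fun n hn => ?_).hasSum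
  rw [max_one_sub_mul_eq_zero ht.le hN (not_lt.1 (mt Finset.mem_range.2 hn)), mul_zero]

theorem continuousAt_mangoldtHat {t : ℝ} (ht : 0 < t) : ContinuousAt mangoldtHat t := by
  obtain ⟨N, hN⟩ := exists_nat_ge (1 / (t / 2))
  rw [div_le_iff₀ (half_pos ht)] at hN
  have hcont : Continuous fun t : ℝ => ∑ n ∈ Finset.range N,
      ArithmeticFunction.vonMangoldt n * max (1 - n * t) 0 :=
    continuous_finsetSum _ fun n _ => by fun_prop
  refine hcont.continuousAt.congr ?_
  filter_upwards [lt_mem_nhds (half_lt_self ht)] with u hu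
  exact (mangoldtHat_eq_sum ((half_pos ht).trans hu).le (hN.trans (by gcongr))).symm

theorem hasMellin_mangoldt_mul_cutHat {s : ℂ} (hs : 0 < s.re) (n : ℕ) :
    HasMellin (fun t : ℝ => (ArithmeticFunction.vonMangoldt n : ℂ) * cutHat (n * t)) s
      (LSeries.term (fun n => (ArithmeticFunction.vonMangoldt n : ℂ)) s n *
        (1 / (s * (s + 1)))) := by
  rcases eq_or_ne n 0 with rfl | hn
  · simpa using hasMellin_const_mul_of_hasMellin (hasMellin_cutHat hs) 0
  · have hn0 : (0 : ℝ) < n := Nat.cast_pos.2 (Nat.pos_of_ne_zero hn)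
    rw [LSeries.term_of_ne_zero hn, div_eq_mul_inv, ← Complex.cpow_neg, mul_assoc]
    exact_mod_cast hasMellin_const_mul_of_hasMellin
      (hasMellin_comp_mul_left_of_hasMellin (hasMellin_cutHat hs) hn0) _

theorem integral_norm_mangoldt_mul_cutHat (s : ℂ) (n : ℕ) :
    ∫ t in Ioi (0 : ℝ),
        ‖(t : ℂ) ^ (s - 1) • ((ArithmeticFunction.vonMangoldt n : ℂ) * cutHat (n * t))‖ =
      ‖LSeries.term (fun n => (ArithmeticFunction.vonMangoldt n : ℂ)) s n‖ *
        ∫ t in Ioi (0 : ℝ), ‖(t : ℂ) ^ (s - 1) • cutHat t‖ := by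
  rcases eq_or_ne n 0 with rfl | hn
  · simp
  · have hn0 : (0 : ℝ) < n := Nat.cast_pos.2 (Nat.pos_of_ne_zero hn)
    have hnorm (t : ℝ) :
        ‖(t : ℂ) ^ (s - 1) • ((ArithmeticFunction.vonMangoldt n : ℂ) * cutHat (n * t))‖ =
          ‖(ArithmeticFunction.vonMangoldt n : ℂ)‖ * ‖(t : ℂ) ^ (s - 1) • cutHat (n * t)‖ := by
      rw [smul_eq_mul, smul_eq_mul, mul_left_comm, norm_mul]
    simp_rw [hnorm]
    rw [integral_const_mul, integral_norm_cpow_smul_comp_mul_left _ _ hn0, LSeries.norm_term_eq,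
      if_neg hn, Real.rpow_neg hn0.le]
    ring

theorem hasMellin_mangoldtHat {s : ℂ} (hs : 1 < s.re) :
    HasMellin (fun t => (mangoldtHat t : ℂ)) s
      (-(deriv riemannZeta s / riemannZeta s) / (s * (s + 1))) := by
  have hsum : ∀ t > 0, HasSum (fun n : ℕ =>
      (ArithmeticFunction.vonMangoldt n : ℂ) * cutHat (n * t)) (mangoldtHat t : ℂ) := by
    intro t ht
    convert Complex.hasSum_ofReal.2 (hasSum_mangoldtHat ht) using 2 with n
    rcases eq_or_ne n 0 with rfl | hn
    · simp
    · rw [cutHat_eq (by positivity), Complex.ofReal_mul]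
  convert hasMellin_of_hasSum (hasMellin_mangoldt_mul_cutHat (one_pos.trans hs)) ?_ hsum using 1
  · rw [tsum_mul_right, ← LSeries,
      ArithmeticFunction.LSeries_vonMangoldt_eq_deriv_riemannZeta_div hs]
    ring
  · simp_rw [integral_norm_mangoldt_mul_cutHat]
    exact (ArithmeticFunction.LSeriesSummable_vonMangoldt hs).norm.mul_right _

instance instCountableXiZero : Countable XiZero :=
  countable_univ_iff.1 <| (countable_iUnion fun n : ℕ => (xiZerosUpTo n).countable_toSet).mono
    fun i _ => mem_iUnion.2 ((exists_nat_ge ‖i.1.1‖).imp fun _ => mem_xiZerosUpTo.2)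

theorem summable_zeroPair_bound (hRH : RiemannHypothesis) :
    Summable fun i : XiZero => 12 * (1 / (1 + i.ordinate ^ 2)) :=
  (summable_one_div_one_add_ordinate_sq hRH).mul_left 12

theorem isCutoffPiece_zeroPair_ordinate (i : XiZero) :
    IsCutoffPiece (zeroPair i.ordinate) (12 * (1 / (1 + i.ordinate ^ 2))) :=
  isCutoffPiece_zeroPair i.ordinate

theorem hasMellin_tsum_zeroPair (hRH : RiemannHypothesis) {s : ℂ} (hs : 3 / 2 ≤ s.re) :
    HasMellin (fun t => ∑' i : XiZero, zeroPair i.ordinate t) s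
      (logDeriv entireXi s / (s * (s + 1))) := by
  have hs' : 1 / 2 < s.re := by linarith
  have h := (hasSum_logDeriv_entireXi hRH (w := s - 1 / 2) (by simpa using hs')).tsum_eq
  rw [add_sub_cancel] at h
  rw [← h, ← tsum_div_const]
  have hpair := fun i : XiZero => hasMellin_zeroPair i.ordinate hs'
  exact IsCutoffPiece.hasMellin_tsum isCutoffPiece_zeroPair_ordinate
    (summable_zeroPair_bound hRH) hs hpair

theorem hasMellin_tsum_trivialPiece {s : ℂ} (hs : 3 / 2 ≤ s.re) :
    HasMellin (fun t => ∑' j, trivialPiece j t) s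
      (1 / 2 * (Complex.digamma (s / 2 + 1) - Complex.digamma 1) / (s * (s + 1))) := by
  have hs0 : 0 < s.re := by linarith
  have hs' : 0 < (s / 2 + 1).re := by
    rw [Complex.add_re, Complex.div_ofNat_re, Complex.one_re]
    positivity
  have h := (hasSum_digamma_sub_digamma hs' (w := 1) (by simp)).tsum_eq
  rw [← h, ← tsum_mul_left, ← tsum_div_const]
  exact IsCutoffPiece.hasMellin_tsum isCutoffPiece_trivialPiece
    summable_one_div_natCast_add_one_sq hs fun j => hasMellin_trivialPiece j hs0

/-- The difference of the two sides of the explicit formula, with the constant `c` it contains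
still to be chosen. -/
noncomputable def explicitFormulaDefect (c : ℂ) (t : ℝ) : ℂ :=
  mangoldtHat t - (polePiece 1 t + c * cutHat t) - ∑' j, trivialPiece j t +
    ∑' i : XiZero, zeroPair i.ordinate t

theorem hasMellin_explicitFormulaDefect (hRH : RiemannHypothesis) {s : ℂ} (hs : 3 / 2 ≤ s.re) :
    HasMellin (explicitFormulaDefect (-(Real.log Real.pi / 2) + Complex.digamma 1 / 2)) s 0 := by
  have hs0 : 0 < s.re := by linarith
  have hs1 : 1 < s.re := by linarith
  set c : ℂ := -(Real.log Real.pi / 2) + Complex.digamma 1 / 2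
  have hzero : 0 = -(deriv riemannZeta s / riemannZeta s) / (s * (s + 1)) -
      (1 / (s - 1) / (s * (s + 1)) + c * (1 / (s * (s + 1)))) -
      1 / 2 * (Complex.digamma (s / 2 + 1) - Complex.digamma 1) / (s * (s + 1)) +
      logDeriv entireXi s / (s * (s + 1)) := by
    rw [logDeriv_entireXi_eq hs1]
    ring
  rw [hzero]
  exact hasMellin_add_of_hasMellin (hasMellin_sub_of_hasMellin (hasMellin_sub_of_hasMellin
    (hasMellin_mangoldtHat hs1) (hasMellin_add_of_hasMellin
      (hasMellin_polePiece (by simp) (by simpa using hs1))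
      (hasMellin_const_mul_of_hasMellin (hasMellin_cutHat hs0) c)))
    (hasMellin_tsum_trivialPiece hs)) (hasMellin_tsum_zeroPair hRH hs)

theorem continuousAt_explicitFormulaDefect (hRH : RiemannHypothesis) (c : ℂ) {t : ℝ}
    (ht0 : 0 < t) (ht1 : t < 1) : ContinuousAt (explicitFormulaDefect c) t := by
  have hmangoldt : ContinuousAt (fun t => (mangoldtHat t : ℂ)) t :=
    Complex.continuous_ofReal.continuousAt.comp (continuousAt_mangoldtHat ht0)
  have hpole : ContinuousAt (fun t => polePiece 1 t + c * cutHat t) t :=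
    (continuousAt_polePiece 1 ht0 ht1).add (continuousAt_const.mul (continuousAt_cutHat ht0 ht1))
  have htrivial : ContinuousAt (fun t => ∑' j, trivialPiece j t) t :=
    IsCutoffPiece.continuousAt_tsum isCutoffPiece_trivialPiece
      summable_one_div_natCast_add_one_sq ht0 ht1
  have hzeros : ContinuousAt (fun t => ∑' i : XiZero, zeroPair i.ordinate t) t :=
    IsCutoffPiece.continuousAt_tsum isCutoffPiece_zeroPair_ordinate
      (summable_zeroPair_bound hRH) ht0 ht1
  exact ((hmangoldt.sub hpole).sub htrivial).add hzeros

theorem exists_mangoldtHat_eq (hRH : RiemannHypothesis) :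
    ∃ c : ℂ, ∀ t : ℝ, 0 < t → t < 1 →
      (mangoldtHat t : ℂ) = 1 / 2 * (t : ℂ)⁻¹ - 1 + 1 / 2 * t + c * (1 - t) +
        ∑' j, trivialPiece j t - ∑' i : XiZero, zeroPair i.ordinate t := by
  refine ⟨-(Real.log Real.pi / 2) + Complex.digamma 1 / 2, fun t ht0 ht1 => ?_⟩
  have h := eq_zero_of_hasMellin_zero (σ := 3 / 2)
    (fun s hs => hasMellin_explicitFormulaDefect hRH hs.ge) ht0
    (continuousAt_explicitFormulaDefect hRH _ ht0 ht1)
  rw [explicitFormulaDefect, polePiece_of_mem 1 ht0 ht1.le, Complex.cpow_neg_one, cutHat,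
    cutPow_of_mem ht0 ht1.le, cutPow_of_mem ht0 ht1.le, Complex.cpow_zero, Complex.cpow_one] at h
  linear_combination h

/-! ### The explicit formula for averaged increments of `ψ` -/

/-- The error term of the prime number theorem for `∫₀ʸ ψ(u) du`. -/
noncomputable def integralPsiError (y : ℝ) : ℝ := ∫ u in (0 : ℝ)..y, (Chebyshev.psi u - u)

theorem integral_psi_eq_mul_mangoldtHat_inv {y : ℝ} (hy : 0 < y) :
    ∫ u in (0 : ℝ)..y, Chebyshev.psi u = y * mangoldtHat y⁻¹ := by
  have hderiv (u : ℝ) : HasDerivAt (fun u => y - u) (-1) u := (hasDerivAt_id u).const_sub y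
  have hderiv' : deriv (fun u => y - u) = fun _ => -1 := funext fun u => (hderiv u).deriv
  have habel := sum_mul_eq_sub_integral_mul ArithmeticFunction.vonMangoldt hy.le
    (fun u _ => (hderiv u).differentiableAt) (by rw [hderiv']; exact integrableOn_const (by simp))
  rw [hderiv', sub_self, zero_mul, zero_sub, ← integral_neg,
    ← intervalIntegral.integral_of_le hy.le] at habel
  simp only [neg_one_mul, neg_neg, ← Chebyshev.psi_eq_sum_Icc] at habel
  rw [← habel, mangoldtHat_eq_sum (N := ⌊y⌋₊ + 1) (inv_pos.2 hy).le, Finset.mul_sum,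
    Nat.range_succ_eq_Icc_zero]
  · refine Finset.sum_congr rfl fun n hn => ?_
    have hny : (n : ℝ) ≤ y := (Nat.le_floor_iff hy.le).1 (Finset.mem_Icc.1 hn).2
    rw [max_eq_left (sub_nonneg.2 (mul_inv_le_one_of_le₀ hny hy.le))]
    field_simp
  · rw [← div_eq_mul_inv, one_le_div hy]
    exact_mod_cast (Nat.lt_floor_add_one y).le

theorem intervalIntegrable_psi (p q : ℝ) : IntervalIntegrable Chebyshev.psi volume p q :=
  Chebyshev.psi_mono.intervalIntegrable

theorem integralPsiError_eq {y : ℝ} (hy : 0 < y) :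
    integralPsiError y = y * mangoldtHat y⁻¹ - y ^ 2 / 2 := by
  rw [integralPsiError, intervalIntegral.integral_sub (intervalIntegrable_psi _ _)
    intervalIntegral.intervalIntegrable_id, integral_psi_eq_mul_mangoldtHat_inv hy, integral_id]
  ring

theorem exists_integralPsiError_eq (hRH : RiemannHypothesis) :
    ∃ p q : ℂ, ∀ y : ℝ, 1 < y → (integralPsiError y : ℂ) = p + q * y +
      (∑' j, y * trivialPiece j y⁻¹ - ∑' i : XiZero, y * zeroPair i.ordinate y⁻¹) := by
  obtain ⟨c, hc⟩ := exists_mangoldtHat_eq hRH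
  refine ⟨1 / 2 - c, c - 1, fun y hy => ?_⟩
  have hy0 : 0 < y := one_pos.trans hy
  have hyc : (y : ℂ) ≠ 0 := Complex.ofReal_ne_zero.2 hy0.ne'
  rw [integralPsiError_eq hy0, Complex.ofReal_sub, Complex.ofReal_mul,
    hc _ (inv_pos.2 hy0) (inv_lt_one_of_one_lt₀ hy), tsum_mul_left, tsum_mul_left]
  push_cast
  field_simp
  ring

/-- The multiplicative second difference which turns a primitive `F` of `f` into the integral of
`f (a u) - f u` over `[y, b y]`. -/
noncomputable def secondDifference (a b : ℝ) (F : ℝ → ℂ) (y : ℝ) : ℂ :=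
  (F (a * (b * y)) - F (a * y)) / a - (F (b * y) - F y)

/-- The error in approximating the number of prime powers in `(u, a u]`, weighted by `Λ`, by the
length of the interval. -/
noncomputable def psiIncrement (a u : ℝ) : ℝ :=
  Chebyshev.psi (a * u) - Chebyshev.psi u - (a - 1) * u

theorem intervalIntegrable_psi_sub_id (p q : ℝ) :
    IntervalIntegrable (fun u => Chebyshev.psi u - u) volume p q :=
  (intervalIntegrable_psi p q).sub intervalIntegral.intervalIntegrable_id

theorem integral_psi_sub_id (p q : ℝ) :
    ∫ u in p..q, (Chebyshev.psi u - u) = integralPsiError q - integralPsiError p :=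
  (intervalIntegral.integral_interval_sub_left (intervalIntegrable_psi_sub_id _ _)
    (intervalIntegrable_psi_sub_id _ _)).symm

theorem intervalIntegrable_psi_comp_mul_sub {a : ℝ} (ha : a ≠ 0) (p q : ℝ) :
    IntervalIntegrable (fun u => Chebyshev.psi (a * u) - a * u) volume p q := by
  have h := (intervalIntegrable_psi_sub_id (a * p) (a * q)).comp_mul_left (c := a)
  rwa [mul_div_cancel_left₀ _ ha, mul_div_cancel_left₀ _ ha] at h

theorem psiIncrement_eq (a u : ℝ) :
    psiIncrement a u = Chebyshev.psi (a * u) - a * u - (Chebyshev.psi u - u) := by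
  rw [psiIncrement]
  ring

theorem intervalIntegrable_psiIncrement {a : ℝ} (ha : a ≠ 0) (p q : ℝ) :
    IntervalIntegrable (psiIncrement a) volume p q := by
  rw [funext (psiIncrement_eq a)]
  exact (intervalIntegrable_psi_comp_mul_sub ha p q).sub (intervalIntegrable_psi_sub_id p q)

theorem integral_psiIncrement {a : ℝ} (ha : a ≠ 0) (b y : ℝ) :
    ((∫ u in y..b * y, psiIncrement a u : ℝ) : ℂ) =
      secondDifference a b (fun u => integralPsiError u) y := by
  simp only [psiIncrement_eq]
  rw [intervalIntegral.integral_sub (intervalIntegrable_psi_comp_mul_sub ha _ _)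
    (intervalIntegrable_psi_sub_id _ _), integral_psi_sub_id,
    intervalIntegral.integral_comp_mul_left (fun u => Chebyshev.psi u - u) ha, integral_psi_sub_id,
    secondDifference, smul_eq_mul]
  push_cast
  ring

theorem hasSum_secondDifference {ι : Type*} {F : ι → ℝ → ℂ} (hF : ∀ u, 1 < u → Summable (F · u))
    {a b y : ℝ} (ha : 1 ≤ a) (hb : 1 ≤ b) (hy : 1 < y) :
    HasSum (fun i => secondDifference a b (F i) y)
      (secondDifference a b (fun u => ∑' i, F i u) y) := by
  have hby : 1 < b * y := one_lt_mul_of_le_of_lt hb hy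
  have hF' := fun u hu => (hF u hu).hasSum
  exact (((hF' _ (one_lt_mul_of_le_of_lt ha hby)).sub
    (hF' _ (one_lt_mul_of_le_of_lt ha hy))).div_const _).sub ((hF' _ hby).sub (hF' _ hy))

theorem secondDifference_ofReal_re (a b : ℝ) (F : ℝ → ℂ) (y : ℝ) :
    secondDifference a b (fun u => ((F u).re : ℂ)) y = ((secondDifference a b F y).re : ℂ) := by
  simp only [secondDifference, Complex.sub_re, Complex.div_ofReal_re]
  push_cast
  rfl

theorem arg_ofReal_ne_pi {u : ℝ} (hu : 0 ≤ u) : (u : ℂ).arg ≠ Real.pi := by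
  rw [Complex.arg_ofReal_of_nonneg hu]
  exact Real.pi_ne_zero.symm

theorem mul_polePiece_inv {y : ℝ} (hy : 1 < y) (ρ : ℂ) :
    y * polePiece ρ y⁻¹ = 1 / (ρ * (ρ + 1)) * (y * (y : ℂ) ^ ρ) - y / ρ + 1 / (ρ + 1) := by
  have hy0 : 0 < y := one_pos.trans hy
  have hyc : (y : ℂ) ≠ 0 := Complex.ofReal_ne_zero.2 hy0.ne'
  rw [polePiece_of_mem ρ (inv_pos.2 hy0) (inv_lt_one_of_one_lt₀ hy).le, Complex.ofReal_inv,
    Complex.inv_cpow _ _ (arg_ofReal_ne_pi hy0.le), Complex.cpow_neg, inv_inv]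
  field_simp

theorem secondDifference_polePiece {a b y : ℝ} (ha : 1 ≤ a) (hb : 1 ≤ b) (hy : 1 < y) {ρ : ℂ}
    (hρ0 : ρ ≠ 0) (hρ1 : ρ + 1 ≠ 0) :
    secondDifference a b (fun u => u * polePiece ρ u⁻¹) y =
      y * (((a : ℂ) ^ ρ - 1) / ρ * (((b : ℂ) ^ (ρ + 1) - 1) / (ρ + 1)) * (y : ℂ) ^ ρ) := by
  have ha0 : 0 < a := by linarith
  have hb0 : 0 < b := by linarith
  have hy0 : 0 < y := by linarith
  have hac : (a : ℂ) ≠ 0 := Complex.ofReal_ne_zero.2 ha0.ne'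
  have hbc : (b : ℂ) ≠ 0 := Complex.ofReal_ne_zero.2 hb0.ne'
  have hby : 1 < b * y := one_lt_mul_of_le_of_lt hb hy
  rw [secondDifference, mul_polePiece_inv (one_lt_mul_of_le_of_lt ha hby),
    mul_polePiece_inv (one_lt_mul_of_le_of_lt ha hy), mul_polePiece_inv hby, mul_polePiece_inv hy,
    Complex.ofReal_mul, Complex.mul_cpow_ofReal_nonneg ha0.le (by positivity),
    Complex.ofReal_mul, Complex.mul_cpow_ofReal_nonneg hb0.le hy0.le, Complex.ofReal_mul,
    Complex.mul_cpow_ofReal_nonneg ha0.le hy0.le, Complex.cpow_add _ _ hbc, Complex.cpow_one]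
  field_simp
  ring

theorem polePiece_conj (ρ : ℂ) (t : ℝ) :
    polePiece (starRingEnd ℂ ρ) t = starRingEnd ℂ (polePiece ρ t) := by
  have hcutPow (a : ℂ) : cutPow (starRingEnd ℂ a) t = starRingEnd ℂ (cutPow a t) := by
    by_cases ht : t ∈ Ioc 0 1
    · rw [cutPow_of_mem ht.1 ht.2, cutPow_of_mem ht.1 ht.2,
        Complex.cpow_conj _ _ (arg_ofReal_ne_pi ht.1.le), Complex.conj_ofReal]
    · rw [cutPow, cutPow, indicator_of_notMem ht, indicator_of_notMem ht, map_zero]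
  have h0 := hcutPow 0
  have h1 := hcutPow 1
  rw [map_zero] at h0
  rw [map_one] at h1
  simp only [polePiece, map_add, map_sub, map_mul, map_div₀, map_one, ← map_neg, hcutPow, ← h0,
    ← h1]

theorem zeroPair_eq_re (γ t : ℝ) :
    zeroPair γ t = ((polePiece (1 / 2 + γ * Complex.I) t).re : ℂ) := by
  have hconj : (1 / 2 - γ * Complex.I : ℂ) = starRingEnd ℂ (1 / 2 + γ * Complex.I) := by
    apply Complex.ext <;> simp
  rw [zeroPair, hconj, polePiece_conj, Complex.add_conj]
  push_cast
  ring

/-- The amplitude `((a ^ ρ - 1) / ρ) ((b ^ (ρ + 1) - 1) / (ρ + 1))` at the zero `ρ = 1 / 2 + iγ`. -/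
noncomputable def zeroCoeff (a b γ : ℝ) : ℂ :=
  ((a : ℂ) ^ (1 / 2 + γ * Complex.I : ℂ) - 1) / (1 / 2 + γ * Complex.I) *
    (((b : ℂ) ^ (3 / 2 + γ * Complex.I : ℂ) - 1) / (3 / 2 + γ * Complex.I))

theorem secondDifference_zeroPair {a b y : ℝ} (ha : 1 ≤ a) (hb : 1 ≤ b) (hy : 1 < y) (γ : ℝ) :
    secondDifference a b (fun u => u * zeroPair γ u⁻¹) y =
      ((y * (zeroCoeff a b γ * (y : ℂ) ^ (1 / 2 + γ * Complex.I : ℂ)).re : ℝ) : ℂ) := by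
  have hρ0 : (1 / 2 + γ * Complex.I : ℂ) ≠ 0 := Complex.ne_zero_of_re_pos (by simp)
  have hadd : (1 / 2 + γ * Complex.I + 1 : ℂ) = 3 / 2 + γ * Complex.I := by ring
  have hρ1 : (1 / 2 + γ * Complex.I + 1 : ℂ) ≠ 0 := by
    rw [hadd]
    exact Complex.ne_zero_of_re_pos (by simp)
  have hre (u : ℝ) : (u : ℂ) * zeroPair γ u⁻¹ =
      ((u * polePiece (1 / 2 + γ * Complex.I) u⁻¹).re : ℂ) := by
    rw [zeroPair_eq_re, Complex.re_ofReal_mul, Complex.ofReal_mul]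
  simp only [hre]
  rw [secondDifference_ofReal_re, secondDifference_polePiece ha hb hy hρ0 hρ1, hadd,
    Complex.re_ofReal_mul, zeroCoeff]

theorem mul_trivialPiece_inv {y : ℝ} (hy : 1 < y) (j : ℕ) :
    y * trivialPiece j y⁻¹ =
      ((1 / ((2 * (j + 1)) * (2 * j + 1)) * (1 - (y ^ (2 * j + 1))⁻¹) : ℝ) : ℂ) := by
  have hy0 : 0 < y := one_pos.trans hy
  rw [trivialPiece_of_mem j (inv_pos.2 hy0) (inv_lt_one_of_one_lt₀ hy).le, ← Complex.ofReal_mul,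
    mul_add_one 2 j, pow_succ _ (2 * j + 1), inv_pow]
  congr 1
  field_simp

/-- The contribution of the trivial zero `-2 (j + 1)` to the smoothed explicit formula. -/
noncomputable def trivialTerm (a b y : ℝ) (j : ℕ) : ℝ :=
  -(1 / ((2 * (j + 1)) * (2 * j + 1)) * (1 - (a ^ (2 * j + 2))⁻¹) *
    (1 - (b ^ (2 * j + 1))⁻¹) * (y ^ (2 * j + 1))⁻¹)

theorem secondDifference_trivialPiece {a b y : ℝ} (ha : 1 ≤ a) (hb : 1 ≤ b) (hy : 1 < y) (j : ℕ) :
    secondDifference a b (fun u => u * trivialPiece j u⁻¹) y = (trivialTerm a b y j : ℂ) := by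
  have ha0 : a ≠ 0 := by linarith
  have hb0 : b ≠ 0 := by linarith
  have hy0 : y ≠ 0 := by linarith
  have hby : 1 < b * y := one_lt_mul_of_le_of_lt hb hy
  rw [secondDifference, mul_trivialPiece_inv (one_lt_mul_of_le_of_lt ha hby),
    mul_trivialPiece_inv (one_lt_mul_of_le_of_lt ha hy), mul_trivialPiece_inv hby,
    mul_trivialPiece_inv hy, trivialTerm]
  norm_cast
  simp only [mul_pow, pow_succ a (2 * j + 1)]
  have := pow_ne_zero (2 * j + 1) ha0
  have := pow_ne_zero (2 * j + 1) hb0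
  have := pow_ne_zero (2 * j + 1) hy0
  field_simp
  ring

theorem one_sub_inv_pow_le {a : ℝ} (ha : 1 ≤ a) (m : ℕ) : 1 - (a ^ m)⁻¹ ≤ m * (a - 1) := by
  have ha0 : 0 < a := one_pos.trans_le ha
  have hbernoulli := one_add_mul_sub_le_pow (a := a⁻¹) (by linarith [inv_pos.2 ha0]) m
  rw [inv_pow] at hbernoulli
  have hinv : 1 - a⁻¹ ≤ a - 1 := by
    have heq : 1 - a⁻¹ = (a - 1) / a := by field_simp
    rw [heq]
    exact div_le_self (sub_nonneg.2 ha) ha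
  linarith [mul_le_mul_of_nonneg_left hinv (Nat.cast_nonneg (α := ℝ) m)]

theorem one_sub_inv_pow_nonneg {a : ℝ} (ha : 1 ≤ a) (m : ℕ) : 0 ≤ 1 - (a ^ m)⁻¹ :=
  sub_nonneg.2 (inv_le_one_of_one_le₀ (one_le_pow₀ ha))

theorem abs_trivialTerm_le {a b y : ℝ} (ha : 1 ≤ a) (hb : 1 ≤ b) (hy : 0 < y) (j : ℕ) :
    |trivialTerm a b y j| ≤ (a - 1) * (b - 1) * (y ^ (2 * j + 1))⁻¹ := by
  have ha0 := one_sub_inv_pow_nonneg ha (2 * j + 2)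
  have hb0 := one_sub_inv_pow_nonneg hb (2 * j + 1)
  have ha1 := one_sub_inv_pow_le ha (2 * j + 2)
  have hb1 := one_sub_inv_pow_le hb (2 * j + 1)
  push_cast at ha1 hb1
  rw [trivialTerm, abs_neg, abs_of_nonneg (by positivity)]
  calc 1 / ((2 * ((j : ℝ) + 1)) * (2 * j + 1)) * (1 - (a ^ (2 * j + 2))⁻¹) *
        (1 - (b ^ (2 * j + 1))⁻¹) * (y ^ (2 * j + 1))⁻¹
      ≤ 1 / ((2 * ((j : ℝ) + 1)) * (2 * j + 1)) * ((2 * j + 2) * (a - 1)) *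
        ((2 * j + 1) * (b - 1)) * (y ^ (2 * j + 1))⁻¹ := by gcongr
    _ = (a - 1) * (b - 1) * (y ^ (2 * j + 1))⁻¹ := by field_simp

theorem hasSum_inv_pow_two_mul_add_one {y : ℝ} (hy : 1 < y) :
    HasSum (fun j : ℕ => (y ^ (2 * j + 1))⁻¹) (y / (y ^ 2 - 1)) := by
  have hgeom := (hasSum_geometric_of_lt_one (inv_pos.2 (by positivity)).le
    (inv_lt_one_of_one_lt₀ (one_lt_pow₀ hy two_ne_zero))).mul_left y⁻¹
  have hsq : y ^ 2 - 1 ≠ 0 := (sub_pos.2 (one_lt_pow₀ hy two_ne_zero)).ne'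
  have hval : y / (y ^ 2 - 1) = y⁻¹ * (1 - (y ^ 2)⁻¹)⁻¹ := by field_simp
  rw [hval]
  refine hgeom.congr_fun fun j => ?_
  rw [pow_succ, pow_mul, mul_inv, inv_pow, mul_comm]

theorem abs_tsum_trivialTerm_le {a b y : ℝ} (ha : 1 ≤ a) (hb : 1 ≤ b) (hy : 1 < y) :
    |∑' j, trivialTerm a b y j| ≤ (a - 1) * (b - 1) * (y / (y ^ 2 - 1)) :=
  (Real.norm_eq_abs _).ge.trans <| tsum_of_norm_bounded
    ((hasSum_inv_pow_two_mul_add_one hy).mul_left ((a - 1) * (b - 1)))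
    (abs_trivialTerm_le ha hb (one_pos.trans hy))

theorem secondDifference_integralPsiError (hRH : RiemannHypothesis) {a b y : ℝ} (ha : 1 ≤ a)
    (hb : 1 ≤ b) (hy : 1 < y) :
    secondDifference a b (fun u => integralPsiError u) y =
      secondDifference a b (fun u => ∑' j, u * trivialPiece j u⁻¹) y -
        secondDifference a b (fun u => ∑' i : XiZero, u * zeroPair i.ordinate u⁻¹) y := by
  obtain ⟨p, q, hpq⟩ := exists_integralPsiError_eq hRH
  have hac : (a : ℂ) ≠ 0 := Complex.ofReal_ne_zero.2 (by linarith)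
  have hby : 1 < b * y := one_lt_mul_of_le_of_lt hb hy
  simp only [secondDifference]
  rw [hpq _ (one_lt_mul_of_le_of_lt ha hby), hpq _ (one_lt_mul_of_le_of_lt ha hy), hpq _ hby,
    hpq _ hy, Complex.ofReal_mul a (b * y), Complex.ofReal_mul a y]
  field_simp
  ring

theorem hasSum_secondDifference_trivialPiece {a b y : ℝ} (ha : 1 ≤ a) (hb : 1 ≤ b) (hy : 1 < y) :
    HasSum (fun j => (trivialTerm a b y j : ℂ))
      (secondDifference a b (fun u => ∑' j, u * trivialPiece j u⁻¹) y) := by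
  have hsummable : ∀ u : ℝ, 1 < u → Summable fun j => (u : ℂ) * trivialPiece j u⁻¹ :=
    fun u hu => (IsCutoffPiece.hasSum isCutoffPiece_trivialPiece
      summable_one_div_natCast_add_one_sq (inv_pos.2 (one_pos.trans hu))).summable.mul_left _
  simp only [← secondDifference_trivialPiece ha hb hy]
  exact hasSum_secondDifference hsummable ha hb hy

theorem hasSum_secondDifference_zeroPair (hRH : RiemannHypothesis) {a b y : ℝ} (ha : 1 ≤ a)
    (hb : 1 ≤ b) (hy : 1 < y) :
    HasSum (fun i : XiZero => ((y * (zeroCoeff a b i.ordinate *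
        (y : ℂ) ^ (1 / 2 + i.ordinate * Complex.I : ℂ)).re : ℝ) : ℂ))
      (secondDifference a b (fun u => ∑' i : XiZero, u * zeroPair i.ordinate u⁻¹) y) := by
  have hsummable : ∀ u : ℝ, 1 < u → Summable fun i : XiZero => (u : ℂ) * zeroPair i.ordinate u⁻¹ :=
    fun u hu => (IsCutoffPiece.hasSum isCutoffPiece_zeroPair_ordinate
      (summable_zeroPair_bound hRH) (inv_pos.2 (one_pos.trans hu))).summable.mul_left _
  simp only [← secondDifference_zeroPair ha hb hy]
  exact hasSum_secondDifference hsummable ha hb hy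

theorem hasSum_integral_psiIncrement (hRH : RiemannHypothesis) {a b y : ℝ} (ha : 1 ≤ a)
    (hb : 1 ≤ b) (hy : 1 < y) :
    HasSum (fun i : XiZero => y * (zeroCoeff a b i.ordinate *
        (y : ℂ) ^ (1 / 2 + i.ordinate * Complex.I : ℂ)).re)
      (∑' j, trivialTerm a b y j - ∫ u in y..b * y, psiIncrement a u) := by
  have hzeros := hasSum_secondDifference_zeroPair hRH ha hb hy
  have htrivial := (hasSum_secondDifference_trivialPiece ha hb hy).tsum_eq
  have hint := integral_psiIncrement (a := a) (by linarith) b y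
  rw [secondDifference_integralPsiError hRH ha hb hy, ← htrivial, ← Complex.ofReal_tsum] at hint
  rw [← Complex.hasSum_ofReal]
  convert hzeros using 1
  rw [Complex.ofReal_sub]
  linear_combination -hint

/-! ### Mean squares of sums of powers -/

section QuadraticForm

/-- The weight `x² exp (-2 |log (y / x)|) / y`, which agrees with `y` for `y ≤ x`. -/
noncomputable def tentWeight (x y : ℝ) : ℝ := if y ≤ x then y else x ^ 4 * y ^ (-3 : ℝ)

theorem tentWeight_of_le {x y : ℝ} (h : y ≤ x) : tentWeight x y = y := if_pos h

theorem tentWeight_of_lt {x y : ℝ} (h : x < y) : tentWeight x y = x ^ 4 * y ^ (-3 : ℝ) :=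
  if_neg h.not_ge

theorem tentWeight_nonneg (x : ℝ) {y : ℝ} (hy : 0 ≤ y) : 0 ≤ tentWeight x y := by
  unfold tentWeight
  split_ifs <;> positivity

variable {x : ℝ} (ξ : ℝ)

theorem tentWeight_mul_cpow_of_mem_Ioc {y : ℝ} (hy : y ∈ Ioc 0 x) :
    tentWeight x y * (y : ℂ) ^ (ξ * Complex.I : ℂ) = (y : ℂ) ^ (1 + ξ * Complex.I : ℂ) := by
  rw [tentWeight_of_le hy.2, Complex.cpow_add _ _ (Complex.ofReal_ne_zero.2 hy.1.ne'),
    Complex.cpow_one]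

theorem tentWeight_mul_cpow_of_mem_Ioi (hx : 0 < x) {y : ℝ} (hy : y ∈ Ioi x) :
    tentWeight x y * (y : ℂ) ^ (ξ * Complex.I : ℂ) =
      x ^ 4 * (y : ℂ) ^ (-3 + ξ * Complex.I : ℂ) := by
  have hy0 : 0 < y := hx.trans hy
  rw [tentWeight_of_lt hy, Complex.cpow_add _ _ (Complex.ofReal_ne_zero.2 hy0.ne'),
    Complex.ofReal_mul, Complex.ofReal_cpow hy0.le]
  push_cast
  ring

theorem integrableOn_Ioc_tentWeight_mul_cpow (hx : 0 < x) :
    IntegrableOn (fun y : ℝ => tentWeight x y * (y : ℂ) ^ (ξ * Complex.I : ℂ)) (Ioc 0 x) :=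
  ((intervalIntegrable_iff_integrableOn_Ioc_of_le hx.le).1
    (intervalIntegral.intervalIntegrable_cpow' (by simp))).congr_fun
      (fun _ hy => (tentWeight_mul_cpow_of_mem_Ioc ξ hy).symm) measurableSet_Ioc

theorem integrableOn_Ioi_tentWeight_mul_cpow (hx : 0 < x) :
    IntegrableOn (fun y : ℝ => tentWeight x y * (y : ℂ) ^ (ξ * Complex.I : ℂ)) (Ioi x) :=
  IntegrableOn.congr_fun (f := fun y : ℝ => (x : ℂ) ^ 4 * (y : ℂ) ^ (-3 + ξ * Complex.I : ℂ))
    (Integrable.const_mul (integrableOn_Ioi_cpow_of_lt (by simp) hx) _)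
    (fun _ hy => (tentWeight_mul_cpow_of_mem_Ioi ξ hx hy).symm) measurableSet_Ioi

theorem integrableOn_tentWeight_mul_cpow (hx : 0 < x) :
    IntegrableOn (fun y : ℝ => tentWeight x y * (y : ℂ) ^ (ξ * Complex.I : ℂ)) (Ioi 0) := by
  rw [← Ioc_union_Ioi_eq_Ioi hx.le]
  exact (integrableOn_Ioc_tentWeight_mul_cpow ξ hx).union
    (integrableOn_Ioi_tentWeight_mul_cpow ξ hx)

theorem integral_tentWeight_mul_cpow (hx : 0 < x) :
    ∫ y in Ioi 0, tentWeight x y * (y : ℂ) ^ (ξ * Complex.I : ℂ) =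
      (x : ℂ) ^ (2 + ξ * Complex.I : ℂ) * ((4 / (4 + ξ ^ 2) : ℝ) : ℂ) := by
  have hxc : (x : ℂ) ≠ 0 := Complex.ofReal_ne_zero.2 hx.ne'
  have hplus : (2 + ξ * Complex.I : ℂ) ≠ 0 := Complex.ne_zero_of_re_pos (by simp)
  have hminus : (2 - ξ * Complex.I : ℂ) ≠ 0 := Complex.ne_zero_of_re_pos (by simp)
  have hfactor : (4 + (ξ : ℂ) ^ 2) = (2 + ξ * Complex.I) * (2 - ξ * Complex.I) := by
    linear_combination (ξ : ℂ) ^ 2 * Complex.I_sq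
  have hexp : (1 + ξ * Complex.I + 1 : ℂ) = 2 + ξ * Complex.I := by ring
  have hexp' : (-3 + ξ * Complex.I + 1 : ℂ) = 2 + ξ * Complex.I - (4 : ℕ) := by
    push_cast
    ring
  have hneg : (2 + ξ * Complex.I - (4 : ℕ) : ℂ) = -(2 - ξ * Complex.I) := by
    push_cast
    ring
  rw [← Ioc_union_Ioi_eq_Ioi hx.le, setIntegral_union (Ioc_disjoint_Ioi le_rfl) measurableSet_Ioi
      (integrableOn_Ioc_tentWeight_mul_cpow ξ hx) (integrableOn_Ioi_tentWeight_mul_cpow ξ hx),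
    setIntegral_congr_fun measurableSet_Ioc fun y hy => tentWeight_mul_cpow_of_mem_Ioc ξ hy,
    setIntegral_congr_fun measurableSet_Ioi fun y hy => tentWeight_mul_cpow_of_mem_Ioi ξ hx hy,
    ← intervalIntegral.integral_of_le hx.le, integral_cpow (Or.inl (by simp)), integral_const_mul,
    integral_Ioi_cpow_of_lt (by simp) hx, hexp, hexp', Complex.cpow_sub _ _ hxc,
    Complex.cpow_natCast, hneg, Complex.ofReal_zero, Complex.zero_cpow hplus]
  push_cast
  rw [hfactor]
  field_simp
  ring

variable (z : ℂ)

theorem re_tentWeight_mul_cpow (x y : ℝ) :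
    RCLike.re (z * (tentWeight x y * (y : ℂ) ^ (ξ * Complex.I : ℂ))) =
      tentWeight x y * (z * (y : ℂ) ^ (ξ * Complex.I : ℂ)).re := by
  rw [mul_left_comm]
  exact Complex.re_ofReal_mul _ _

theorem integrableOn_tentWeight_mul_re (hx : 0 < x) :
    IntegrableOn (fun y : ℝ => tentWeight x y * (z * (y : ℂ) ^ (ξ * Complex.I : ℂ)).re)
      (Ioi 0) := by
  simp only [← re_tentWeight_mul_cpow]
  exact ((integrableOn_tentWeight_mul_cpow ξ hx).const_mul z).re

theorem integral_tentWeight_mul_re_le (hx : 0 < x) :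
    ∫ y in Ioi 0, tentWeight x y * (z * (y : ℂ) ^ (ξ * Complex.I : ℂ)).re ≤
      x ^ 2 * (‖z‖ * (4 / (4 + ξ ^ 2))) := by
  simp only [← re_tentWeight_mul_cpow]
  rw [integral_re ((integrableOn_tentWeight_mul_cpow ξ hx).const_mul z), integral_const_mul,
    integral_tentWeight_mul_cpow ξ hx]
  refine (RCLike.re_le_norm _).trans_eq ?_
  rw [norm_mul, norm_mul, Complex.norm_cpow_eq_rpow_re_of_pos hx, Complex.norm_real,
    Real.norm_of_nonneg (by positivity)]
  simp only [Complex.add_re, Complex.re_ofNat, Complex.re_ofReal_mul, Complex.I_re, mul_zero,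
    add_zero, Real.rpow_ofNat]
  ring

theorem re_mul_re (z w : ℂ) :
    z.re * w.re = 1 / 2 * ((z * starRingEnd ℂ w).re + (z * w).re) := by
  simp only [Complex.mul_re, Complex.conj_re, Complex.conj_im]
  ring

variable {ι : Type*} (c : ι → ℂ) (γ : ι → ℝ) (S : Finset ι)

theorem conj_ofReal_cpow_mul_I {y : ℝ} (hy : 0 ≤ y) (t : ℝ) :
    starRingEnd ℂ ((y : ℂ) ^ (t * Complex.I : ℂ)) = (y : ℂ) ^ (-(t * Complex.I) : ℂ) := by
  have h := Complex.cpow_conj (y : ℂ) (t * Complex.I) (arg_ofReal_ne_pi hy)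
  rw [Complex.conj_ofReal] at h
  rw [← h, map_mul, Complex.conj_ofReal, Complex.conj_I, mul_neg]

theorem sq_sum_re_cpow {y : ℝ} (hy : 0 < y) :
    (∑ i ∈ S, (c i * (y : ℂ) ^ (γ i * Complex.I : ℂ)).re) ^ 2 =
      ∑ i ∈ S, ∑ k ∈ S, 1 / 2 *
        ((c i * starRingEnd ℂ (c k) * (y : ℂ) ^ ((γ i - γ k : ℝ) * Complex.I : ℂ)).re +
          (c i * c k * (y : ℂ) ^ ((γ i + γ k : ℝ) * Complex.I : ℂ)).re) := by
  have hyc : (y : ℂ) ≠ 0 := Complex.ofReal_ne_zero.2 hy.ne'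
  rw [sq, Finset.sum_mul_sum]
  refine Finset.sum_congr rfl fun i _ => Finset.sum_congr rfl fun k _ => ?_
  rw [re_mul_re, map_mul, conj_ofReal_cpow_mul_I hy.le, Complex.ofReal_sub, Complex.ofReal_add,
    sub_mul, add_mul, sub_eq_add_neg, Complex.cpow_add _ _ hyc, Complex.cpow_add _ _ hyc]
  congr 3 <;> ring

/-- The Fourier transform of the two-sided exponential, symmetrised in the frequencies. -/
noncomputable def zeroKernel (s t : ℝ) : ℝ := 2 / (4 + (s - t) ^ 2) + 2 / (4 + (s + t) ^ 2)

theorem zeroKernel_nonneg (s t : ℝ) : 0 ≤ zeroKernel s t := by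
  unfold zeroKernel
  positivity

theorem zeroKernel_comm (s t : ℝ) : zeroKernel s t = zeroKernel t s := by
  rw [zeroKernel, zeroKernel, add_comm s t, ← neg_sub s t, neg_sq]

theorem integrableOn_tentWeight_mul_re_mul_re (hx : 0 < x) (i k : ι) :
    IntegrableOn (fun y : ℝ => 1 / 2 *
      (tentWeight x y *
          (c i * starRingEnd ℂ (c k) * (y : ℂ) ^ ((γ i - γ k : ℝ) * Complex.I : ℂ)).re +
        tentWeight x y *
          (c i * c k * (y : ℂ) ^ ((γ i + γ k : ℝ) * Complex.I : ℂ)).re)) (Ioi 0) :=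
  Integrable.const_mul ((integrableOn_tentWeight_mul_re _ _ hx).add
    (integrableOn_tentWeight_mul_re _ _ hx)) _

theorem integral_tentWeight_mul_sq_sum_le (hx : 0 < x) :
    ∫ y in Ioi 0, tentWeight x y * (∑ i ∈ S, (c i * (y : ℂ) ^ (γ i * Complex.I : ℂ)).re) ^ 2 ≤
      x ^ 2 * ∑ i ∈ S, ∑ k ∈ S, ‖c i‖ * ‖c k‖ * zeroKernel (γ i) (γ k) := by
  have hexpand : ∀ y ∈ Ioi (0 : ℝ),
      tentWeight x y * (∑ i ∈ S, (c i * (y : ℂ) ^ (γ i * Complex.I : ℂ)).re) ^ 2 =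
        ∑ i ∈ S, ∑ k ∈ S, 1 / 2 *
          (tentWeight x y *
              (c i * starRingEnd ℂ (c k) * (y : ℂ) ^ ((γ i - γ k : ℝ) * Complex.I : ℂ)).re +
            tentWeight x y *
              (c i * c k * (y : ℂ) ^ ((γ i + γ k : ℝ) * Complex.I : ℂ)).re) := fun y hy => by
    simp only [sq_sum_re_cpow c γ S hy, Finset.mul_sum, ← mul_add, mul_left_comm]
  have hint := integrableOn_tentWeight_mul_re_mul_re c γ hx
  rw [setIntegral_congr_fun measurableSet_Ioi hexpand,
    integral_finsetSum _ fun i _ => integrable_finsetSum _ fun k _ => hint i k, Finset.mul_sum]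
  refine Finset.sum_le_sum fun i _ => ?_
  rw [integral_finsetSum _ fun k _ => hint i k, Finset.mul_sum]
  refine Finset.sum_le_sum fun k _ => ?_
  rw [integral_const_mul, integral_add (integrableOn_tentWeight_mul_re _ _ hx)
    (integrableOn_tentWeight_mul_re _ _ hx)]
  have hsub := integral_tentWeight_mul_re_le (γ i - γ k) (c i * starRingEnd ℂ (c k)) hx
  have hadd := integral_tentWeight_mul_re_le (γ i + γ k) (c i * c k) hx
  rw [norm_mul, RCLike.norm_conj] at hsub
  rw [norm_mul] at hadd
  have hkernel : x ^ 2 * (‖c i‖ * ‖c k‖ * zeroKernel (γ i) (γ k)) = 1 / 2 *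
      (x ^ 2 * (‖c i‖ * ‖c k‖ * (4 / (4 + (γ i - γ k) ^ 2))) +
        x ^ 2 * (‖c i‖ * ‖c k‖ * (4 / (4 + (γ i + γ k) ^ 2)))) := by
    rw [zeroKernel]
    ring
  rw [hkernel]
  linarith

theorem integrableOn_tentWeight_mul_sq_sum (hx : 0 < x) :
    IntegrableOn (fun y : ℝ => tentWeight x y *
      (∑ i ∈ S, (c i * (y : ℂ) ^ (γ i * Complex.I : ℂ)).re) ^ 2) (Ioi 0) := by
  refine IntegrableOn.congr_fun (integrable_finsetSum S fun i _ => integrable_finsetSum S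
    fun k _ => integrableOn_tentWeight_mul_re_mul_re c γ hx i k) (fun y hy => ?_) measurableSet_Ioi
  simp only [sq_sum_re_cpow c γ S hy, Finset.mul_sum, ← mul_add, mul_left_comm]

theorem sum_mul_mul_le_of_symm {K : ι → ι → ℝ} (hK : ∀ i k, 0 ≤ K i k)
    (hsymm : ∀ i k, K i k = K k i) (a : ι → ℝ) :
    ∑ i ∈ S, ∑ k ∈ S, a i * a k * K i k ≤ ∑ i ∈ S, a i ^ 2 * ∑ k ∈ S, K i k := by
  have hswap : ∑ i ∈ S, ∑ k ∈ S, a k ^ 2 * K i k = ∑ i ∈ S, ∑ k ∈ S, a i ^ 2 * K i k := by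
    rw [Finset.sum_comm]
    exact Finset.sum_congr rfl fun i _ => Finset.sum_congr rfl fun k _ => by rw [hsymm]
  calc ∑ i ∈ S, ∑ k ∈ S, a i * a k * K i k
      ≤ ∑ i ∈ S, ∑ k ∈ S, 1 / 2 * (a i ^ 2 * K i k + a k ^ 2 * K i k) := by
        refine Finset.sum_le_sum fun i _ => Finset.sum_le_sum fun k _ => ?_
        nlinarith [mul_nonneg (sq_nonneg (a i - a k)) (hK i k)]
    _ = ∑ i ∈ S, a i ^ 2 * ∑ k ∈ S, K i k := by
        simp only [← Finset.mul_sum, Finset.sum_add_distrib] at hswap ⊢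
        rw [hswap]
        ring

theorem sum_re_mul_half_add_cpow {y : ℝ} (hy : 0 < y) :
    (∑ i ∈ S, (c i * (y : ℂ) ^ (1 / 2 + γ i * Complex.I : ℂ)).re) ^ 2 =
      y * (∑ i ∈ S, (c i * (y : ℂ) ^ (γ i * Complex.I : ℂ)).re) ^ 2 := by
  have hsqrt : ((y : ℂ) ^ (1 / 2 : ℂ)) = (√y : ℂ) := by
    rw [Real.sqrt_eq_rpow, Complex.ofReal_cpow hy.le]
    norm_num
  have hterm (i : ι) : (c i * (y : ℂ) ^ (1 / 2 + γ i * Complex.I : ℂ)).re =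
      √y * (c i * (y : ℂ) ^ (γ i * Complex.I : ℂ)).re := by
    rw [Complex.cpow_add _ _ (Complex.ofReal_ne_zero.2 hy.ne'), hsqrt, mul_left_comm,
      Complex.re_ofReal_mul]
  simp only [hterm]
  rw [← Finset.mul_sum, mul_pow, Real.sq_sqrt hy.le]

theorem integral_sq_finsetSum_le (hx : 1 ≤ x) :
    ∫ y in (1 : ℝ)..x, (∑ i ∈ S, (c i * (y : ℂ) ^ (1 / 2 + γ i * Complex.I : ℂ)).re) ^ 2 ≤
      x ^ 2 * ∑ i ∈ S, ‖c i‖ ^ 2 * ∑ k ∈ S, zeroKernel (γ i) (γ k) := by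
  have hx0 : 0 < x := one_pos.trans_le hx
  have hsubset : Ioc 1 x ⊆ Ioi (0 : ℝ) := fun y hy => one_pos.trans hy.1
  have hweight : ∀ y ∈ Ioc 1 x,
      (∑ i ∈ S, (c i * (y : ℂ) ^ (1 / 2 + γ i * Complex.I : ℂ)).re) ^ 2 =
        tentWeight x y * (∑ i ∈ S, (c i * (y : ℂ) ^ (γ i * Complex.I : ℂ)).re) ^ 2 :=
    fun y hy => by rw [sum_re_mul_half_add_cpow c γ S (hsubset hy), tentWeight_of_le hy.2]
  rw [intervalIntegral.integral_of_le hx, setIntegral_congr_fun measurableSet_Ioc hweight]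
  refine (setIntegral_mono_set (integrableOn_tentWeight_mul_sq_sum c γ S hx0) ?_
    hsubset.eventuallyLE).trans ((integral_tentWeight_mul_sq_sum_le c γ S hx0).trans ?_)
  · filter_upwards [ae_restrict_mem measurableSet_Ioi] with y hy
    exact mul_nonneg (tentWeight_nonneg x (mem_Ioi.1 hy).le) (sq_nonneg _)
  · exact mul_le_mul_of_nonneg_left (sum_mul_mul_le_of_symm S
      (fun i k => zeroKernel_nonneg (γ i) (γ k)) (fun i k => zeroKernel_comm (γ i) (γ k))
      fun i => ‖c i‖) (sq_nonneg x)

variable {c γ}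

theorem abs_sum_re_cpow_le (hc : Summable fun i => ‖c i‖) {y : ℝ} (hy : 0 < y) (hyx : y ≤ x) :
    |∑ i ∈ S, (c i * (y : ℂ) ^ (1 / 2 + γ i * Complex.I : ℂ)).re| ≤
      ∑' i, ‖c i‖ * x ^ (1 / 2 : ℝ) := by
  have hx : 0 < x := hy.trans_le hyx
  refine (Finset.abs_sum_le_sum_abs _ _).trans ((Finset.sum_le_sum fun i _ => ?_).trans
    ((hc.mul_right (x ^ (1 / 2 : ℝ))).sum_le_tsum S fun i _ => by positivity))
  have hre : (1 / 2 + γ i * Complex.I : ℂ).re = 1 / 2 := by simp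
  refine (Complex.abs_re_le_norm _).trans ?_
  rw [norm_mul, Complex.norm_cpow_eq_rpow_re_of_pos hy, hre]
  gcongr

theorem aestronglyMeasurable_sum_re_cpow (x : ℝ) :
    AEStronglyMeasurable
      (fun y : ℝ => ∑ i ∈ S, (c i * (y : ℂ) ^ (1 / 2 + γ i * Complex.I : ℂ)).re)
      (volume.restrict (Ioc 1 x)) := by
  refine ContinuousOn.aestronglyMeasurable (fun y hy => ContinuousAt.continuousWithinAt ?_)
    measurableSet_Ioc
  exact tendsto_finsetSum _ fun i _ => Complex.continuous_re.continuousAt.comp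
    (continuousAt_const.mul (Complex.continuousAt_ofReal_cpow_const _ _
      (Or.inr (one_pos.trans hy.1).ne')))

theorem intervalIntegrable_sq_of_hasSum [Countable ι] (hc : Summable fun i => ‖c i‖)
    (hx : 1 ≤ x) {f : ℝ → ℝ} (hf : ∀ y : ℝ, 1 < y →
      HasSum (fun i => (c i * (y : ℂ) ^ (1 / 2 + γ i * Complex.I : ℂ)).re) (f y)) :
    IntervalIntegrable (fun y => f y ^ 2) volume 1 x := by
  have hmeas : AEStronglyMeasurable f (volume.restrict (Ioc 1 x)) :=
    aestronglyMeasurable_of_tendsto_ae atTop (fun S => aestronglyMeasurable_sum_re_cpow S x)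
      ((ae_restrict_iff' measurableSet_Ioc).2 (ae_of_all _ fun y hy => hf y hy.1))
  rw [intervalIntegrable_iff_integrableOn_Ioc_of_le hx]
  refine Integrable.of_bound (hmeas.pow 2) ((∑' i, ‖c i‖ * x ^ (1 / 2 : ℝ)) ^ 2)
    ((ae_restrict_iff' measurableSet_Ioc).2 (ae_of_all _ fun y hy => ?_))
  rw [norm_pow]
  gcongr
  exact le_of_tendsto' (hf y hy.1).abs fun S => abs_sum_re_cpow_le S hc (one_pos.trans hy.1) hy.2

theorem integral_sq_le_of_hasSum [Countable ι] (hc : Summable fun i => ‖c i‖) {D : ℝ}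
    (hD : ∀ S : Finset ι, ∑ i ∈ S, ‖c i‖ ^ 2 * ∑ k ∈ S, zeroKernel (γ i) (γ k) ≤ D)
    (hx : 1 ≤ x) {f : ℝ → ℝ} (hf : ∀ y : ℝ, 1 < y →
      HasSum (fun i => (c i * (y : ℂ) ^ (1 / 2 + γ i * Complex.I : ℂ)).re) (f y)) :
    ∫ y in (1 : ℝ)..x, f y ^ 2 ≤ x ^ 2 * D := by
  have hlim : Tendsto (fun S : Finset ι => ∫ y in (1 : ℝ)..x,
      (∑ i ∈ S, (c i * (y : ℂ) ^ (1 / 2 + γ i * Complex.I : ℂ)).re) ^ 2) atTop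
      (𝓝 (∫ y in (1 : ℝ)..x, f y ^ 2)) := by
    refine intervalIntegral.tendsto_integral_filter_of_dominated_convergence
      (fun _ => (∑' i, ‖c i‖ * x ^ (1 / 2 : ℝ)) ^ 2) (Eventually.of_forall fun S => ?_)
      (Eventually.of_forall fun S => ae_of_all _ fun y hy => ?_) intervalIntegrable_const
      (ae_of_all _ fun y hy => ?_) <;> rw [uIoc_of_le hx] at *
    · exact (aestronglyMeasurable_sum_re_cpow S x).pow 2
    · rw [norm_pow]
      gcongr
      exact abs_sum_re_cpow_le S hc (one_pos.trans hy.1) hy.2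
    · exact (hf y hy.1).pow 2
  refine le_of_tendsto' hlim fun S => (integral_sq_finsetSum_le c γ S hx).trans ?_
  gcongr
  exact hD S

end QuadraticForm

/-! ### The diagonal sum over the zeros -/

section ZeroCoeff

theorem norm_cpow_sub_one_div_le {a C : ℝ} (ha : 1 ≤ a) {s : ℂ} (hs : 0 < s.re)
    (hC : ∀ u, 1 < u → u ≤ a → u ^ (s.re - 1) ≤ C) :
    ‖((a : ℂ) ^ s - 1) / s‖ ≤ C * (a - 1) := by
  have hint := integral_cpow (a := 1) (b := a) (r := s - 1) (Or.inl (by simpa using hs))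
  rw [sub_add_cancel, Complex.ofReal_one, Complex.one_cpow] at hint
  rw [← hint, ← abs_of_nonneg (sub_nonneg.2 ha)]
  refine intervalIntegral.norm_integral_le_of_norm_le_const fun u hu => ?_
  rw [uIoc_of_le ha] at hu
  rw [Complex.norm_cpow_eq_rpow_re_of_pos (one_pos.trans hu.1)]
  exact hC u hu.1 hu.2

theorem norm_cpow_sub_one_div_le_div {a m : ℝ} (ha : 1 ≤ a) {s : ℂ} (n : ℕ)
    (hsn : s.re ≤ n) (hm : 0 < m) (hms : m ≤ ‖s‖) :
    ‖((a : ℂ) ^ s - 1) / s‖ ≤ (a ^ n + 1) / m := by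
  rw [norm_div]
  gcongr
  refine (norm_sub_le _ _).trans ?_
  rw [norm_one, Complex.norm_cpow_eq_rpow_re_of_pos (by linarith), ← Real.rpow_natCast]
  gcongr

theorem re_half_add_mul_I (γ : ℝ) : (1 / 2 + γ * Complex.I : ℂ).re = 1 / 2 := by simp

theorem re_three_halves_add_mul_I (γ : ℝ) : (3 / 2 + γ * Complex.I : ℂ).re = 3 / 2 := by simp

variable {a b δ : ℝ} (γ : ℝ)

theorem sq_norm_cpow_three_halves_sub_one_div_le (hb : 1 ≤ b) :
    ‖((b : ℂ) ^ (3 / 2 + γ * Complex.I : ℂ) - 1) / (3 / 2 + γ * Complex.I)‖ ^ 2 ≤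
      (b - 1) ^ 2 * b := by
  have hnorm : ‖((b : ℂ) ^ (3 / 2 + γ * Complex.I : ℂ) - 1) / (3 / 2 + γ * Complex.I)‖ ≤
      √b * (b - 1) := by
    refine norm_cpow_sub_one_div_le hb (by simp) fun u hu hub => ?_
    rw [re_three_halves_add_mul_I, Real.sqrt_eq_rpow]
    norm_num only
    exact Real.rpow_le_rpow (one_pos.trans hu).le hub (by norm_num)
  refine (pow_le_pow_left₀ (norm_nonneg _) hnorm 2).trans_eq ?_
  rw [mul_pow, Real.sq_sqrt (by linarith), mul_comm]

theorem norm_cpow_half_sub_one_div_le (ha : 1 ≤ a) :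
    ‖((a : ℂ) ^ (1 / 2 + γ * Complex.I : ℂ) - 1) / (1 / 2 + γ * Complex.I)‖ ≤ a - 1 := by
  refine (norm_cpow_sub_one_div_le (C := 1) ha (by simp) fun u hu _ => ?_).trans_eq (one_mul _)
  rw [re_half_add_mul_I]
  exact Real.rpow_le_one_of_one_le_of_nonpos hu.le (by norm_num)

theorem norm_cpow_half_sub_one_div_mul_abs_le (ha : 1 ≤ a) :
    ‖((a : ℂ) ^ (1 / 2 + γ * Complex.I : ℂ) - 1) / (1 / 2 + γ * Complex.I)‖ * |γ| ≤ a + 1 := by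
  rcases eq_or_ne γ 0 with rfl | hγ
  · rw [abs_zero, mul_zero]
    linarith
  have hdiv := norm_cpow_sub_one_div_le_div (s := 1 / 2 + γ * Complex.I) ha 1
    (by norm_num) (abs_pos.2 hγ) (by simpa using Complex.abs_im_le_norm (1 / 2 + γ * Complex.I))
  rwa [pow_one, le_div_iff₀ (abs_pos.2 hγ)] at hdiv

theorem sq_norm_cpow_half_sub_one_div_le (ha : 1 ≤ a) (haδ : a ≤ 1 + δ) (hδ : 0 < δ) :
    ‖((a : ℂ) ^ (1 / 2 + γ * Complex.I : ℂ) - 1) / (1 / 2 + γ * Complex.I)‖ ^ 2 ≤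
      2 * (2 + δ) ^ 2 / ((2 / δ + 1) ^ 2 + γ ^ 2) := by
  have hsmall := norm_cpow_half_sub_one_div_le γ ha
  have hlarge := norm_cpow_half_sub_one_div_mul_abs_le γ ha
  set w := ‖((a : ℂ) ^ (1 / 2 + γ * Complex.I : ℂ) - 1) / (1 / 2 + γ * Complex.I)‖
  have : 0 ≤ w := norm_nonneg _
  have hcut : w * (2 / δ + 1) ≤ 2 + δ := by
    calc w * (2 / δ + 1) ≤ δ * (2 / δ + 1) := by gcongr; linarith
      _ = 2 + δ := by field_simp
  have hcut_sq := pow_le_pow_left₀ (by positivity) hcut 2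
  have hlarge_sq := pow_le_pow_left₀ (by positivity) (hlarge.trans (by linarith : _ ≤ 2 + δ)) 2
  rw [mul_pow] at hcut_sq hlarge_sq
  rw [sq_abs] at hlarge_sq
  rw [le_div_iff₀ (by positivity)]
  linarith

theorem sq_norm_zeroCoeff_le (ha : 1 ≤ a) (haδ : a ≤ 1 + δ) (hδ : 0 < δ) (hb : 1 ≤ b) :
    ‖zeroCoeff a b γ‖ ^ 2 ≤
      2 * (2 + δ) ^ 2 / ((2 / δ + 1) ^ 2 + γ ^ 2) * ((b - 1) ^ 2 * b) := by
  rw [zeroCoeff, norm_mul, mul_pow]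
  exact mul_le_mul (sq_norm_cpow_half_sub_one_div_le γ ha haδ hδ)
    (sq_norm_cpow_three_halves_sub_one_div_le γ hb) (sq_nonneg _) (by positivity)

theorem norm_zeroCoeff_le (ha : 1 ≤ a) (hb : 1 ≤ b) :
    ‖zeroCoeff a b γ‖ ≤ (a + 1) * (b ^ 2 + 1) * (1 / ((1 / 2) ^ 2 + γ ^ 2)) := by
  have hpos : 0 < √((1 / 2) ^ 2 + γ ^ 2) := by positivity
  have hhalf := norm_cpow_sub_one_div_le_div (s := 1 / 2 + γ * Complex.I) ha 1 (by norm_num) hpos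
    (by
      rw [Complex.norm_eq_sqrt_sq_add_sq]
      simp)
  have hthree := norm_cpow_sub_one_div_le_div (s := 3 / 2 + γ * Complex.I) hb 2 (by norm_num) hpos
    (by
      rw [Complex.norm_eq_sqrt_sq_add_sq, re_three_halves_add_mul_I]
      refine Real.sqrt_le_sqrt (add_le_add (by norm_num) ?_)
      simp)
  rw [zeroCoeff, norm_mul]
  refine (mul_le_mul hhalf hthree (norm_nonneg _) (by positivity)).trans_eq ?_
  rw [div_mul_div_comm, ← sq, Real.sq_sqrt (by positivity), pow_one, mul_one_div]

theorem summable_norm_zeroCoeff (hRH : RiemannHypothesis) (ha : 1 ≤ a) (hb : 1 ≤ b) :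
    Summable fun i : XiZero => ‖zeroCoeff a b i.ordinate‖ := by
  refine Summable.of_nonneg_of_le (fun _ => norm_nonneg _)
    (fun i => norm_zeroCoeff_le i.ordinate ha hb) (Summable.mul_left _ ?_)
  have hsum := (hasSum_div_sq_add_ordinate_sq hRH (A := 1 / 2) (by norm_num)).summable.mul_left 2
  simpa only [mul_div_assoc', mul_one_div_cancel (two_ne_zero' ℝ)] using hsum

end ZeroCoeff

section LogSum

theorem hasDerivAt_log_one_add_div_sq (g : ℝ) {r : ℝ} (hr : 0 < r) :
    HasDerivAt (fun r => Real.log (1 + g ^ 2 / r ^ 2))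
      (-(2 / r * (g ^ 2 / (r ^ 2 + g ^ 2)))) r := by
  have hinner : HasDerivAt (fun r : ℝ => 1 + g ^ 2 / r ^ 2) (-(2 * g ^ 2 / r ^ 3)) r := by
    refine (((hasDerivAt_const r (g ^ 2)).fun_div (hasDerivAt_pow 2 r)
      (by positivity)).const_add 1).congr_deriv ?_
    push_cast
    field_simp
    ring
  have hpos : r ^ 2 + g ^ 2 ≠ 0 := by positivity
  refine (hinner.log (by positivity)).congr_deriv ?_
  field_simp

theorem hasDerivAt_log_add_one_div {r : ℝ} (hr : 0 < r) :
    HasDerivAt (fun r => (Real.log r + 1) / r) (-(Real.log r / r ^ 2)) r := by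
  refine (((Real.hasDerivAt_log hr.ne').add_const 1).fun_div (hasDerivAt_id' r)
    hr.ne').congr_deriv ?_
  field_simp
  ring

theorem tendsto_log_one_add_div_sq (g : ℝ) :
    Tendsto (fun r : ℝ => Real.log (1 + g ^ 2 / r ^ 2)) atTop (𝓝 0) := by
  have hinner : Tendsto (fun r : ℝ => 1 + g ^ 2 / r ^ 2) atTop (𝓝 (1 + 0)) :=
    (tendsto_const_nhds.div_atTop (tendsto_pow_atTop two_ne_zero)).const_add 1
  rw [add_zero] at hinner
  simpa only [Real.log_one] using hinner.log one_ne_zero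

theorem tendsto_log_add_one_div : Tendsto (fun r : ℝ => (Real.log r + 1) / r) atTop (𝓝 0) := by
  have h := Real.isLittleO_log_id_atTop.tendsto_div_nhds_zero.add tendsto_inv_atTop_zero
  rw [add_zero] at h
  refine h.congr fun r => ?_
  rw [id, add_div, one_div]

variable {ι : Type*} {γ : ι → ℝ} {A : ℝ} (S : Finset ι)

-- `log (1 + g² / A²) / g²` is the integral of `2 / (r (r² + g²))` over `r > A`, so the bound
-- `hγ` at all heights integrates to the claim.
theorem sum_log_one_add_div_sq_div_sq_le (hA : 0 < A)
    (hγ : ∀ r, A ≤ r → ∑ i ∈ S, 1 / (r ^ 2 + γ i ^ 2) ≤ 1 / 2 * Real.log r / r) :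
    ∑ i ∈ S, Real.log (1 + γ i ^ 2 / A ^ 2) / γ i ^ 2 ≤ (Real.log A + 1) / A := by
  set G : ℝ → ℝ := fun r =>
    (Real.log r + 1) / r - ∑ i ∈ S, Real.log (1 + γ i ^ 2 / r ^ 2) / γ i ^ 2
  set G' : ℝ → ℝ := fun r => -(Real.log r / r ^ 2) -
    ∑ i ∈ S, -(2 / r * (γ i ^ 2 / (r ^ 2 + γ i ^ 2))) / γ i ^ 2
  have hderiv : ∀ r, 0 < r → HasDerivAt G (G' r) r := fun r hr =>
    (hasDerivAt_log_add_one_div hr).fun_sub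
      (HasDerivAt.fun_sum fun i _ => (hasDerivAt_log_one_add_div_sq (γ i) hr).div_const _)
  have hterm (r : ℝ) (hr : 0 < r) (i : ι) :
      -(2 / r * (1 / (r ^ 2 + γ i ^ 2))) ≤
        -(2 / r * (γ i ^ 2 / (r ^ 2 + γ i ^ 2))) / γ i ^ 2 := by
    rcases eq_or_ne (γ i) 0 with hi | hi
    · rw [hi, neg_div, neg_le_neg_iff]
      simp only [ne_eq, OfNat.ofNat_ne_zero, not_false_eq_true, zero_pow, zero_div, mul_zero]
      positivity
    · have : r ^ 2 + γ i ^ 2 ≠ 0 := by positivity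
      exact le_of_eq (by field_simp)
  have hG' : ∀ r, A ≤ r → G' r ≤ 0 := fun r hr => by
    have hr0 : 0 < r := hA.trans_le hr
    have hsum := Finset.sum_le_sum fun i (_ : i ∈ S) => hterm r hr0 i
    rw [Finset.sum_neg_distrib, ← Finset.mul_sum] at hsum
    have hbound := mul_le_mul_of_nonneg_left (hγ r hr) (by positivity : 0 ≤ 2 / r)
    have hr_eq : 2 / r * (1 / 2 * Real.log r / r) = Real.log r / r ^ 2 := by field_simp
    simp only [G']
    linarith
  have hanti : AntitoneOn G (Ici A) :=
    antitoneOn_of_hasDerivWithinAt_nonpos (convex_Ici A)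
      (fun r hr => (hderiv r (hA.trans_le hr)).continuousAt.continuousWithinAt)
      (fun r hr => (hderiv r (hA.trans_le (interior_subset hr))).hasDerivWithinAt)
      fun r hr => hG' r (interior_subset hr)
  have hlim : Tendsto G atTop (𝓝 0) := by
    simpa using tendsto_log_add_one_div.sub (tendsto_finsetSum S fun i _ =>
      (tendsto_log_one_add_div_sq (γ i)).div_const (γ i ^ 2))
  refine sub_nonneg.1 (le_of_tendsto hlim ?_)
  filter_upwards [eventually_ge_atTop A] with r hr using hanti self_mem_Ici hr hr

theorem sum_half_log_one_add_div_sq_div_le (hA : 0 < A)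
    (hγ : ∀ r, A ≤ r → ∑ i ∈ S, 1 / (r ^ 2 + γ i ^ 2) ≤ 1 / 2 * Real.log r / r) :
    ∑ i ∈ S, 1 / 2 * Real.log (1 + γ i ^ 2 / A ^ 2) / (A ^ 2 + γ i ^ 2) ≤
      (Real.log A + 1) / (2 * A) := by
  have hterm (i : ι) : 1 / 2 * Real.log (1 + γ i ^ 2 / A ^ 2) / (A ^ 2 + γ i ^ 2) ≤
      1 / 2 * (Real.log (1 + γ i ^ 2 / A ^ 2) / γ i ^ 2) := by
    rcases eq_or_ne (γ i) 0 with hi | hi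
    · simp [hi]
    · have : 0 ≤ Real.log (1 + γ i ^ 2 / A ^ 2) :=
        Real.log_nonneg (le_add_of_nonneg_right (by positivity))
      rw [mul_div_assoc]
      gcongr
      exact le_add_of_nonneg_left (sq_nonneg A)
  calc ∑ i ∈ S, 1 / 2 * Real.log (1 + γ i ^ 2 / A ^ 2) / (A ^ 2 + γ i ^ 2)
      ≤ 1 / 2 * ∑ i ∈ S, Real.log (1 + γ i ^ 2 / A ^ 2) / γ i ^ 2 := by
        rw [Finset.mul_sum]
        exact Finset.sum_le_sum fun i _ => hterm i
    _ ≤ 1 / 2 * ((Real.log A + 1) / A) := by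
        gcongr
        exact sum_log_one_add_div_sq_div_sq_le S hA hγ
    _ = (Real.log A + 1) / (2 * A) := by field_simp

end LogSum

/-- The bound for the mean square of the sum over zeros in the explicit formula for `ψ` increments
of relative length `δ`; the first factor comes from `2 / δ + 1`, the height at which the
coefficients start to decay. -/
noncomputable def zeroEnergy (δ : ℝ) : ℝ :=
  δ * (2 + δ) * (Real.log (2 / δ + 1) ^ 2 + 2.22 * Real.log (2 / δ + 1) + 1)

theorem sum_zeroKernel_ordinate_le (hRH : RiemannHypothesis) {A : ℝ} (hA : 5 ≤ A) (t : ℝ)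
    (S : Finset XiZero) :
    ∑ k ∈ S, zeroKernel t k.ordinate ≤
      Real.log A + 1.22 + 1 / 2 * Real.log (1 + t ^ 2 / A ^ 2) := by
  have hfactor : A ^ 2 + t ^ 2 = A ^ 2 * (1 + t ^ 2 / A ^ 2) := by field_simp
  have hsum := sum_two_div_four_add_le hRH hA t S
  rw [hfactor, Real.log_mul (by positivity) (by positivity), Real.log_pow] at hsum
  push_cast at hsum
  simp only [zeroKernel]
  linarith

theorem sum_sq_zeroCoeff_mul_le (hRH : RiemannHypothesis) {a b δ : ℝ} (ha : 1 ≤ a)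
    (haδ : a ≤ 1 + δ) (hδ : 0 < δ) (hδ1 : δ ≤ 1 / 10) (hb : 1 ≤ b) (S : Finset XiZero) :
    ∑ i ∈ S, ‖zeroCoeff a b i.ordinate‖ ^ 2 * ∑ k ∈ S, zeroKernel i.ordinate k.ordinate ≤
      (b - 1) ^ 2 * b * zeroEnergy δ := by
  have hcut : 20 ≤ 2 / δ := by
    rw [le_div_iff₀ hδ]
    linarith
  set A := 2 / δ + 1 with hA
  have hA20 : 20 ≤ A := by linarith
  have : 0 ≤ Real.log A := Real.log_nonneg (by linarith)
  have hAδ : A * δ = 2 + δ := by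
    rw [hA]
    field_simp
  have hterm (i : XiZero) :
      ‖zeroCoeff a b i.ordinate‖ ^ 2 * ∑ k ∈ S, zeroKernel i.ordinate k.ordinate ≤
        (b - 1) ^ 2 * b * (2 * (2 + δ) ^ 2) *
          ((Real.log A + 1.22) * (1 / (A ^ 2 + i.ordinate ^ 2)) +
            1 / 2 * Real.log (1 + i.ordinate ^ 2 / A ^ 2) / (A ^ 2 + i.ordinate ^ 2)) := by
    refine (mul_le_mul (sq_norm_zeroCoeff_le i.ordinate ha haδ hδ hb)
      (sum_zeroKernel_ordinate_le hRH (by linarith : 5 ≤ A) i.ordinate S)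
      (Finset.sum_nonneg fun k _ => zeroKernel_nonneg _ _) (by positivity)).trans_eq ?_
    rw [← hA]
    ring
  refine (Finset.sum_le_sum fun i _ => hterm i).trans ?_
  rw [← Finset.mul_sum, Finset.sum_add_distrib, ← Finset.mul_sum]
  calc _ ≤ (b - 1) ^ 2 * b * (2 * (2 + δ) ^ 2) *
        ((Real.log A + 1.22) * (1 / 2 * Real.log A / A) + (Real.log A + 1) / (2 * A)) := by
        gcongr
        · exact sum_one_div_sq_add_ordinate_sq_le hRH hA20 S
        · exact sum_half_log_one_add_div_sq_div_le S (by positivity) fun r hr =>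
            sum_one_div_sq_add_ordinate_sq_le hRH (hA20.trans hr) S
    _ = (b - 1) ^ 2 * b * zeroEnergy δ := by
        rw [zeroEnergy, ← hA, ← hAδ]
        field_simp
        ring

/-! ### Removing the average -/

section ZeroSum

/-- The sum over zeros in the explicit formula for the increments of `ψ` over `[u, a u]`,
averaged over `u ∈ [y, b y]`. -/
noncomputable def zeroSum (a b y : ℝ) : ℝ :=
  ∑' i : XiZero, (zeroCoeff a b i.ordinate * (y : ℂ) ^ (1 / 2 + i.ordinate * Complex.I : ℂ)).re

variable {a b δ x y : ℝ}

theorem hasSum_zeroSum (hRH : RiemannHypothesis) (ha : 1 ≤ a) (hb : 1 ≤ b) (hy : 1 < y) :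
    HasSum (fun i : XiZero =>
      (zeroCoeff a b i.ordinate * (y : ℂ) ^ (1 / 2 + i.ordinate * Complex.I : ℂ)).re)
      (zeroSum a b y) :=
  ((summable_mul_left_iff (by positivity)).1
    (hasSum_integral_psiIncrement hRH ha hb hy).summable).hasSum

theorem mul_zeroSum_eq (hRH : RiemannHypothesis) (ha : 1 ≤ a) (hb : 1 ≤ b) (hy : 1 < y) :
    y * zeroSum a b y = ∑' j, trivialTerm a b y j - ∫ u in y..b * y, psiIncrement a u :=
  ((hasSum_zeroSum hRH ha hb hy).mul_left y).unique (hasSum_integral_psiIncrement hRH ha hb hy)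

theorem intervalIntegrable_sq_zeroSum (hRH : RiemannHypothesis) (ha : 1 ≤ a) (hb : 1 ≤ b)
    (hx : 1 ≤ x) : IntervalIntegrable (fun y => zeroSum a b y ^ 2) volume 1 x :=
  intervalIntegrable_sq_of_hasSum (summable_norm_zeroCoeff hRH ha hb) hx
    fun _ hy => hasSum_zeroSum hRH ha hb hy

theorem integral_sq_zeroSum_le (hRH : RiemannHypothesis) (ha : 1 ≤ a) (haδ : a ≤ 1 + δ)
    (hδ : 0 < δ) (hδ1 : δ ≤ 1 / 10) (hb : 1 ≤ b) (hx : 1 ≤ x) :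
    ∫ y in (1 : ℝ)..x, zeroSum a b y ^ 2 ≤ x ^ 2 * ((b - 1) ^ 2 * b * zeroEnergy δ) :=
  integral_sq_le_of_hasSum (summable_norm_zeroCoeff hRH ha hb)
    (sum_sq_zeroCoeff_mul_le hRH ha haδ hδ hδ1 hb) hx fun _ hy => hasSum_zeroSum hRH ha hb hy

end ZeroSum

section Smoothing

variable {a b δ x y : ℝ}

theorem continuousWithinAt_psi_Ici (y : ℝ) : ContinuousWithinAt Chebyshev.psi (Ici y) y := by
  have hfloor := tendsto_floor_right_pure_floor y
  rw [tendsto_pure] at hfloor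
  refine (continuousWithinAt_const (b := Chebyshev.psi y)).congr_of_eventuallyEq ?_ rfl
  filter_upwards [hfloor] with u hu
  rw [Chebyshev.psi_eq_psi_coe_floor u, Chebyshev.psi_eq_psi_coe_floor y, ← Int.floor_toNat,
    ← Int.floor_toNat, hu]

theorem continuousWithinAt_psiIncrement (ha : 0 ≤ a) (y : ℝ) :
    ContinuousWithinAt (psiIncrement a) (Ici y) y :=
  (((continuousWithinAt_psi_Ici (a * y)).comp (by fun_prop)
    fun _ hu => mul_le_mul_of_nonneg_left hu ha).sub (continuousWithinAt_psi_Ici y)).sub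
      (by fun_prop)

theorem measurable_psiIncrement (a : ℝ) : Measurable (psiIncrement a) :=
  ((Chebyshev.psi_mono.measurable.comp (measurable_const_mul a)).sub
    Chebyshev.psi_mono.measurable).sub (measurable_const_mul (a - 1))

theorem abs_psiIncrement_le {u v : ℝ} (ha : 1 ≤ a) (hu : 0 ≤ u) (huv : u ≤ v) :
    |psiIncrement a u| ≤ Chebyshev.psi (a * v) + (a - 1) * v := by
  have hle : Chebyshev.psi u ≤ Chebyshev.psi (a * u) :=
    Chebyshev.psi_mono (le_mul_of_one_le_left hu ha)
  have hmono : Chebyshev.psi (a * u) ≤ Chebyshev.psi (a * v) := Chebyshev.psi_mono (by gcongr)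
  have hmain : 0 ≤ (a - 1) * u := mul_nonneg (by linarith) hu
  have hmain_le : (a - 1) * u ≤ (a - 1) * v := mul_le_mul_of_nonneg_left huv (by linarith)
  rw [psiIncrement, abs_le]
  constructor <;> linarith [Chebyshev.psi_nonneg u]

theorem intervalIntegrable_sq_psiIncrement (ha : 1 ≤ a) {p q : ℝ} (hp : 0 ≤ p) (hpq : p ≤ q) :
    IntervalIntegrable (fun y => psiIncrement a y ^ 2) volume p q := by
  rw [intervalIntegrable_iff_integrableOn_Ioc_of_le hpq]
  refine Integrable.of_bound ((measurable_psiIncrement a).pow_const 2).aestronglyMeasurable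
    ((Chebyshev.psi (a * q) + (a - 1) * q) ^ 2)
    ((ae_restrict_iff' measurableSet_Ioc).2 (ae_of_all _ fun y hy => ?_))
  rw [norm_pow]
  gcongr
  exact abs_psiIncrement_le ha (hp.trans hy.1.le) hy.2

/-- The average of `psiIncrement a` over `[y, b y]`. -/
noncomputable def smoothedIncrement (a b y : ℝ) : ℝ :=
  ((b - 1) * y)⁻¹ * ∫ u in y..b * y, psiIncrement a u

theorem continuousOn_smoothedIncrement (ha : a ≠ 0) (hb : 1 < b) :
    ContinuousOn (smoothedIncrement a b) (Ioi 0) := by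
  have hprimitive : Continuous fun y => ∫ u in (0 : ℝ)..y, psiIncrement a u :=
    intervalIntegral.continuous_primitive (intervalIntegrable_psiIncrement ha) 0
  have hsplit (y : ℝ) : ∫ u in y..b * y, psiIncrement a u =
      (∫ u in (0 : ℝ)..b * y, psiIncrement a u) - ∫ u in (0 : ℝ)..y, psiIncrement a u :=
    (intervalIntegral.integral_interval_sub_left (intervalIntegrable_psiIncrement ha _ _)
      (intervalIntegrable_psiIncrement ha _ _)).symm
  refine ContinuousOn.mul (ContinuousOn.inv₀ (by fun_prop) fun y hy => ?_) ?_
  · exact (mul_pos (sub_pos.2 hb) hy).ne'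
  · simp only [hsplit]
    exact ((hprimitive.comp (continuous_const_mul b)).sub hprimitive).continuousOn

theorem abs_smoothedIncrement_le (ha : 1 ≤ a) (hb : 1 < b) (hb2 : b ≤ 2) (hy : 0 < y)
    (hyx : y ≤ x) :
    |smoothedIncrement a b y| ≤ Chebyshev.psi (a * (2 * x)) + (a - 1) * (2 * x) := by
  have hpos : 0 < (b - 1) * y := mul_pos (sub_pos.2 hb) hy
  have hyb : y ≤ b * y := le_mul_of_one_le_left hy.le hb.le
  have hint := intervalIntegral.norm_integral_le_of_norm_le_const (a := y) (b := b * y)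
    (f := psiIncrement a) (C := Chebyshev.psi (a * (2 * x)) + (a - 1) * (2 * x)) fun u hu => by
      rw [uIoc_of_le hyb] at hu
      exact abs_psiIncrement_le ha (hy.le.trans hu.1.le) (hu.2.trans (by gcongr))
  rw [abs_of_nonneg (by linarith), Real.norm_eq_abs] at hint
  rw [smoothedIncrement, abs_mul, abs_of_pos (inv_pos.2 hpos), inv_mul_le_iff₀ hpos]
  linarith

theorem tendsto_smoothedIncrement (ha : 0 < a) (hy : 0 < y) :
    Tendsto (fun b => smoothedIncrement a b y) (𝓝[>] 1) (𝓝 (psiIncrement a y)) := by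
  have hderiv : HasDerivWithinAt (fun v => ∫ u in y..v, psiIncrement a u) (psiIncrement a y)
      (Ioi y) y :=
    hasDerivWithinAt_Ioi_iff_Ici.2 <| intervalIntegral.integral_hasDerivWithinAt_right (t := Ioi y)
      (intervalIntegrable_psiIncrement ha.ne' _ _)
      (measurable_psiIncrement a).stronglyMeasurable.stronglyMeasurableAtFilter
      ((continuousWithinAt_psiIncrement ha.le y).mono Ioi_subset_Ici_self)
  have hlim : Tendsto (fun b => b * y) (𝓝[>] 1) (𝓝[>] y) := by
    refine tendsto_nhdsWithin_iff.2 ⟨?_, ?_⟩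
    · exact tendsto_nhdsWithin_of_tendsto_nhds
        (by simpa only [id, one_mul] using (tendsto_id (x := 𝓝 (1 : ℝ))).mul_const y)
    · filter_upwards [self_mem_nhdsWithin] with b hb using lt_mul_left hy hb
  rw [hasDerivWithinAt_iff_tendsto_slope' self_notMem_Ioi] at hderiv
  refine (hderiv.comp hlim).congr fun b => ?_
  rw [Function.comp_apply, slope_def_field, intervalIntegral.integral_same, smoothedIncrement,
    sub_zero, div_eq_inv_mul, sub_one_mul]

theorem smoothedIncrement_eq (hRH : RiemannHypothesis) (ha : 1 ≤ a) (hb : 1 < b) (hy : 1 < y) :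
    smoothedIncrement a b y =
      (∑' j, trivialTerm a b y j) / ((b - 1) * y) - (b - 1)⁻¹ * zeroSum a b y := by
  have hformula : ∫ u in y..b * y, psiIncrement a u =
      ∑' j, trivialTerm a b y j - y * zeroSum a b y := by
    rw [mul_zeroSum_eq hRH ha hb.le hy, sub_sub_cancel]
  have : b - 1 ≠ 0 := (sub_pos.2 hb).ne'
  have : y ≠ 0 := (one_pos.trans hy).ne'
  rw [smoothedIncrement, hformula]
  field_simp

theorem abs_tsum_trivialTerm_div_le (ha : 1 ≤ a) (haδ : a ≤ 1 + δ) (hb : 1 < b)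
    (hy : 3 / 2 ≤ y) : |(∑' j, trivialTerm a b y j) / ((b - 1) * y)| ≤ δ := by
  have hpos : 0 < (b - 1) * y := mul_pos (sub_pos.2 hb) (by linarith)
  have hdiv : y / (y ^ 2 - 1) ≤ y := div_le_self (by linarith) (by nlinarith)
  rw [abs_div, abs_of_pos hpos, div_le_iff₀ hpos]
  calc |∑' j, trivialTerm a b y j| ≤ (a - 1) * (b - 1) * (y / (y ^ 2 - 1)) :=
        abs_tsum_trivialTerm_le ha hb.le (by linarith)
    _ ≤ (a - 1) * (b - 1) * y :=
        mul_le_mul_of_nonneg_left hdiv (mul_nonneg (by linarith) (by linarith))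
    _ ≤ δ * ((b - 1) * y) := by
        rw [mul_assoc]
        gcongr
        linarith

theorem sq_smoothedIncrement_le (hRH : RiemannHypothesis) (ha : 1 ≤ a) (haδ : a ≤ 1 + δ)
    (hb : 1 < b) (hy : 3 / 2 ≤ y) :
    smoothedIncrement a b y ^ 2 ≤
      1001 / 1000 * ((b - 1) ^ 2)⁻¹ * zeroSum a b y ^ 2 + 1001 * δ ^ 2 := by
  have hyoung (p q : ℝ) : (p - q) ^ 2 ≤ 1001 / 1000 * q ^ 2 + 1001 * p ^ 2 := by
    nlinarith [sq_nonneg (q + 1000 * p)]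
  have htrivial := sq_le_sq.2 ((abs_tsum_trivialTerm_div_le ha haδ hb hy).trans (le_abs_self δ))
  rw [smoothedIncrement_eq hRH ha hb (by linarith)]
  refine (hyoung _ _).trans ?_
  rw [mul_pow, inv_pow, ← mul_assoc]
  gcongr

theorem intervalIntegrable_sq_smoothedIncrement (ha : a ≠ 0) (hb : 1 < b) {p q : ℝ} (hp : 0 < p)
    (hq : 0 < q) : IntervalIntegrable (fun y => smoothedIncrement a b y ^ 2) volume p q :=
  (((continuousOn_smoothedIncrement ha hb).mono
    fun _ hy => (lt_min hp hq).trans_le hy.1).pow 2).intervalIntegrable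

theorem integral_sq_smoothedIncrement_le (hRH : RiemannHypothesis) (ha : 1 ≤ a)
    (haδ : a ≤ 1 + δ) (hδ : 0 < δ) (hδ1 : δ ≤ 1 / 10) (hb : 1 < b) (hx : 3 / 2 ≤ x) :
    ∫ y in (3 / 2 : ℝ)..x, smoothedIncrement a b y ^ 2 ≤
      1001 / 1000 * (x ^ 2 * (b * zeroEnergy δ)) + 1001 * δ ^ 2 * x := by
  have hx1 : 1 ≤ x := by linarith
  have hzero := intervalIntegrable_sq_zeroSum hRH ha hb.le hx1
  have hzero' : IntervalIntegrable (fun y => zeroSum a b y ^ 2) volume (3 / 2) x :=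
    hzero.mono_set (by
      rw [uIcc_of_le hx, uIcc_of_le hx1]
      exact Icc_subset_Icc_left (by norm_num))
  have hmono : ∫ y in (3 / 2 : ℝ)..x, zeroSum a b y ^ 2 ≤
      x ^ 2 * ((b - 1) ^ 2 * b * zeroEnergy δ) :=
    (intervalIntegral.integral_mono_interval (by norm_num) hx le_rfl
      (ae_of_all _ fun y => sq_nonneg _) hzero).trans
        (integral_sq_zeroSum_le hRH ha haδ hδ hδ1 hb.le hx1)
  have : b - 1 ≠ 0 := (sub_pos.2 hb).ne'
  calc ∫ y in (3 / 2 : ℝ)..x, smoothedIncrement a b y ^ 2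
      ≤ ∫ y in (3 / 2 : ℝ)..x,
          (1001 / 1000 * ((b - 1) ^ 2)⁻¹ * zeroSum a b y ^ 2 + 1001 * δ ^ 2) :=
        intervalIntegral.integral_mono_on hx
          (intervalIntegrable_sq_smoothedIncrement (by positivity) hb (by norm_num) (by linarith))
          ((hzero'.const_mul _).add intervalIntegrable_const)
          fun y hy => sq_smoothedIncrement_le hRH ha haδ hb hy.1
    _ = 1001 / 1000 * ((b - 1) ^ 2)⁻¹ * (∫ y in (3 / 2 : ℝ)..x, zeroSum a b y ^ 2) +
          (x - 3 / 2) * (1001 * δ ^ 2) := by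
        rw [intervalIntegral.integral_add (hzero'.const_mul _) intervalIntegrable_const,
          intervalIntegral.integral_const_mul, intervalIntegral.integral_const, smul_eq_mul]
    _ ≤ 1001 / 1000 * ((b - 1) ^ 2)⁻¹ * (x ^ 2 * ((b - 1) ^ 2 * b * zeroEnergy δ)) +
          x * (1001 * δ ^ 2) := by
        gcongr
        linarith
    _ = 1001 / 1000 * (x ^ 2 * (b * zeroEnergy δ)) + 1001 * δ ^ 2 * x := by
        field_simp

theorem tendsto_integral_sq_smoothedIncrement (ha : 1 ≤ a) {p q : ℝ} (hp : 0 < p)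
    (hpq : p ≤ q) :
    Tendsto (fun b => ∫ y in p..q, smoothedIncrement a b y ^ 2) (𝓝[>] 1)
      (𝓝 (∫ y in p..q, psiIncrement a y ^ 2)) := by
  have hb : ∀ᶠ b in 𝓝[>] (1 : ℝ), b ∈ Ioc 1 2 := Ioc_mem_nhdsGT one_lt_two
  refine intervalIntegral.tendsto_integral_filter_of_dominated_convergence
    (fun _ => (Chebyshev.psi (a * (2 * q)) + (a - 1) * (2 * q)) ^ 2) ?_ ?_
    intervalIntegrable_const (ae_of_all _ fun y hy => ?_)
  · filter_upwards [hb] with b hb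
    exact (intervalIntegrable_iff.1 (intervalIntegrable_sq_smoothedIncrement (by positivity) hb.1
      hp (hp.trans_le hpq))).aestronglyMeasurable
  · filter_upwards [hb] with b hb
    refine ae_of_all _ fun y hy => ?_
    rw [uIoc_of_le hpq] at hy
    rw [norm_pow]
    gcongr
    exact abs_smoothedIncrement_le ha hb.1 hb.2 (hp.trans hy.1) hy.2
  · rw [uIoc_of_le hpq] at hy
    exact (tendsto_smoothedIncrement (by positivity) (hp.trans hy.1)).pow 2

theorem integral_sq_psiIncrement_le_of_three_halves_le (hRH : RiemannHypothesis) (ha : 1 ≤ a)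
    (haδ : a ≤ 1 + δ) (hδ : 0 < δ) (hδ1 : δ ≤ 1 / 10) (hx : 3 / 2 ≤ x) :
    ∫ y in (3 / 2 : ℝ)..x, psiIncrement a y ^ 2 ≤
      1001 / 1000 * (x ^ 2 * zeroEnergy δ) + 1001 * δ ^ 2 * x := by
  have hbound : Tendsto (fun b => 1001 / 1000 * (x ^ 2 * (b * zeroEnergy δ)) + 1001 * δ ^ 2 * x)
      (𝓝[>] 1) (𝓝 (1001 / 1000 * (x ^ 2 * (1 * zeroEnergy δ)) + 1001 * δ ^ 2 * x)) :=
    tendsto_nhdsWithin_of_tendsto_nhds (Continuous.tendsto (by fun_prop) 1)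
  rw [one_mul] at hbound
  refine le_of_tendsto_of_tendsto
    (tendsto_integral_sq_smoothedIncrement ha (by norm_num) hx) hbound ?_
  filter_upwards [self_mem_nhdsWithin] with b hb
  exact integral_sq_smoothedIncrement_le hRH ha haδ hδ hδ1 hb hx

theorem sq_psiIncrement_le_of_mul_lt_two (ha : 1 ≤ a) (haδ : a ≤ 1 + δ) (hy : 0 ≤ y)
    (hay : a * y < 2) : psiIncrement a y ^ 2 ≤ (δ * y) ^ 2 := by
  rw [psiIncrement, Chebyshev.psi_eq_zero_of_lt_two hay,
    Chebyshev.psi_eq_zero_of_lt_two ((le_mul_of_one_le_left hy ha).trans_lt hay), sub_zero,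
    zero_sub, neg_sq]
  have : 0 ≤ a - 1 := sub_nonneg.2 ha
  gcongr
  linarith

theorem integral_sq_psiIncrement_le (hRH : RiemannHypothesis) (ha : 1 ≤ a) (haδ : a ≤ 1 + δ)
    (hδ : 0 < δ) (hδ1 : δ ≤ 1 / 10) (hx : 3 / 2 ≤ x) :
    ∫ y in (1 : ℝ)..x, psiIncrement a y ^ 2 ≤
      1001 / 1000 * (x ^ 2 * zeroEnergy δ) + 1003 * δ ^ 2 * x := by
  have hlow := intervalIntegrable_sq_psiIncrement ha zero_le_one (by norm_num : (1 : ℝ) ≤ 3 / 2)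
  have hinit : ∫ y in (1 : ℝ)..(3 / 2), psiIncrement a y ^ 2 ≤ 2 * δ ^ 2 * x := by
    refine (intervalIntegral.integral_mono_on (by norm_num) hlow
      (intervalIntegrable_const (c := (δ * (3 / 2)) ^ 2)) fun y hy => ?_).trans ?_
    · refine (sq_psiIncrement_le_of_mul_lt_two ha haδ (by linarith [hy.1])
        (by nlinarith [hy.1, hy.2])).trans ?_
      have : 0 ≤ y := zero_le_one.trans hy.1
      gcongr
      exact hy.2
    · rw [intervalIntegral.integral_const, smul_eq_mul]
      nlinarith [sq_nonneg δ]
  rw [← intervalIntegral.integral_add_adjacent_intervals hlow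
    (intervalIntegrable_sq_psiIncrement ha (by norm_num) hx)]
  linarith [integral_sq_psiIncrement_le_of_three_halves_le hRH ha haδ hδ hδ1 hx]

end Smoothing

/-! ### From `ψ` to `θ` -/

section MonotoneIncrement

variable {R : ℝ → ℝ} {a x : ℝ}

theorem sq_increment_le_of_monotone (hR : Monotone R) (hR0 : ∀ y, 0 ≤ R y) (ha : 1 ≤ a) {y : ℝ}
    (hy : 0 ≤ y) (hyx : y ≤ x) : (R (a * y) - R y) ^ 2 ≤ R (a * x) * (R (a * y) - R y) := by
  have hle : R y ≤ R (a * y) := hR (le_mul_of_one_le_left hy ha)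
  have hle_right : R (a * y) ≤ R (a * x) := hR (by gcongr)
  rw [sq]
  exact mul_le_mul_of_nonneg_right (by linarith [hR0 y]) (sub_nonneg.2 hle)

theorem intervalIntegrable_comp_mul_of_monotone (hR : Monotone R) (ha : 0 ≤ a) (p q : ℝ) :
    IntervalIntegrable (fun y => R (a * y)) volume p q :=
  (hR.comp (monotone_mul_left_of_nonneg ha)).intervalIntegrable

theorem intervalIntegrable_sq_increment_of_monotone (hR : Monotone R) (hR0 : ∀ y, 0 ≤ R y)
    (ha : 1 ≤ a) {p q : ℝ} (hp : 0 ≤ p) (hpq : p ≤ q) :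
    IntervalIntegrable (fun y => (R (a * y) - R y) ^ 2) volume p q := by
  have hmeas : Measurable fun y => R (a * y) - R y :=
    (hR.measurable.comp (measurable_const_mul a)).sub hR.measurable
  refine (((intervalIntegrable_comp_mul_of_monotone hR (zero_le_one.trans ha) p q).sub
    hR.intervalIntegrable).const_mul (R (a * q))).mono_fun'
      (hmeas.pow_const 2).aestronglyMeasurable
      ((ae_restrict_iff' measurableSet_uIoc).2 (ae_of_all _ fun y hy => ?_))
  rw [uIoc_of_le hpq] at hy
  beta_reduce
  rw [Real.norm_of_nonneg (sq_nonneg _)]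
  exact sq_increment_le_of_monotone hR hR0 ha (hp.trans hy.1.le) hy.2

-- `a ∫₁^x R(a y) dy = ∫_a^{a x} R`, so the integral of the increment telescopes to the short
-- range `[x, a x]`.
theorem integral_increment_le_of_monotone (hR : Monotone R) (hR0 : ∀ y, 0 ≤ R y) (ha : 1 ≤ a)
    (hx : 1 ≤ x) : ∫ y in (1 : ℝ)..x, (R (a * y) - R y) ≤ (a - 1) * x * R (a * x) := by
  have ha0 : 0 < a := one_pos.trans_le ha
  have hint (p q : ℝ) : IntervalIntegrable R volume p q := hR.intervalIntegrable
  have hscale : a * ∫ y in (1 : ℝ)..x, R (a * y) = ∫ y in a..a * x, R y := by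
    rw [intervalIntegral.mul_integral_comp_mul_left, mul_one]
  have hsplit : ∫ y in a..a * x, R y =
      (∫ y in (1 : ℝ)..x, R y) + (∫ y in x..a * x, R y) - ∫ y in (1 : ℝ)..a, R y := by
    rw [intervalIntegral.integral_add_adjacent_intervals (hint _ _) (hint _ _),
      eq_sub_iff_add_eq',
      intervalIntegral.integral_add_adjacent_intervals (hint _ _) (hint _ _)]
  have htail : ∫ y in x..a * x, R y ≤ (a * x - x) * R (a * x) := by
    have hax : x ≤ a * x := le_mul_of_one_le_left (zero_le_one.trans hx) ha
    have hconst := intervalIntegral.integral_mono_on hax (hint x (a * x))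
      (intervalIntegrable_const (c := R (a * x))) fun y hy => hR hy.2
    rwa [intervalIntegral.integral_const, smul_eq_mul] at hconst
  have hinit : 0 ≤ ∫ y in (1 : ℝ)..a, R y :=
    intervalIntegral.integral_nonneg ha fun y _ => hR0 y
  have hshift : 0 ≤ (a - 1) * ∫ y in (1 : ℝ)..x, R (a * y) :=
    mul_nonneg (sub_nonneg.2 ha) (intervalIntegral.integral_nonneg hx fun y _ => hR0 _)
  rw [intervalIntegral.integral_sub (intervalIntegrable_comp_mul_of_monotone hR ha0.le 1 x)
    (hint 1 x)]
  linarith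

theorem integral_sq_increment_le_of_monotone (hR : Monotone R) (hR0 : ∀ y, 0 ≤ R y)
    (ha : 1 ≤ a) (hx : 1 ≤ x) :
    ∫ y in (1 : ℝ)..x, (R (a * y) - R y) ^ 2 ≤ (a - 1) * x * R (a * x) ^ 2 :=
  calc ∫ y in (1 : ℝ)..x, (R (a * y) - R y) ^ 2
      ≤ ∫ y in (1 : ℝ)..x, R (a * x) * (R (a * y) - R y) :=
        intervalIntegral.integral_mono_on hx
          (intervalIntegrable_sq_increment_of_monotone hR hR0 ha zero_le_one hx)
          (((intervalIntegrable_comp_mul_of_monotone hR (zero_le_one.trans ha) 1 x).sub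
            hR.intervalIntegrable).const_mul _)
          fun y hy => sq_increment_le_of_monotone hR hR0 ha (zero_le_one.trans hy.1) hy.2
    _ = R (a * x) * ∫ y in (1 : ℝ)..x, (R (a * y) - R y) :=
        intervalIntegral.integral_const_mul _ _
    _ ≤ R (a * x) * ((a - 1) * x * R (a * x)) :=
        mul_le_mul_of_nonneg_left (integral_increment_le_of_monotone hR hR0 ha hx) (hR0 _)
    _ = (a - 1) * x * R (a * x) ^ 2 := by ring

end MonotoneIncrement

section PrimePowers

/-- The contribution `ψ - θ` of the proper prime powers to the Chebyshev function `ψ`. -/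
noncomputable def psiSubTheta (y : ℝ) : ℝ := Chebyshev.psi y - Chebyshev.theta y

theorem psiSubTheta_nonneg (y : ℝ) : 0 ≤ psiSubTheta y :=
  sub_nonneg.2 (Chebyshev.theta_le_psi y)

theorem monotone_psiSubTheta : Monotone psiSubTheta := by
  intro y z hyz
  simp only [psiSubTheta, Chebyshev.psi_sub_theta_eq_sum_not_prime]
  refine Finset.sum_le_sum_of_subset_of_nonneg (fun n hn => ?_) fun _ _ _ =>
    ArithmeticFunction.vonMangoldt_nonneg
  simp only [Finset.mem_filter, Finset.mem_Ioc] at hn ⊢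
  exact ⟨⟨hn.1.1, hn.1.2.trans (Nat.floor_le_floor hyz)⟩, hn.2⟩

theorem log_four_le : Real.log 4 ≤ 1.3863 := by
  have hfour : Real.log 4 = 2 * Real.log 2 := by
    rw [(by norm_num : (4 : ℝ) = 2 ^ 2), Real.log_pow, Nat.cast_ofNat]
  rw [hfour]
  linarith [Real.log_two_lt_d9]

theorem two_mul_sqrt_mul_log_le {t : ℝ} (ht : 10 ^ 6 ≤ t) :
    2 * √t * Real.log t ≤ 4 / 5 * t := by
  have ht0 : 0 < t := by linarith
  have hsq : √√t ^ 2 = √t := Real.sq_sqrt (Real.sqrt_nonneg t)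
  have hten : 10 ≤ √√t := Real.le_sqrt_of_sq_le (Real.le_sqrt_of_sq_le (by linarith))
  have hlog_sqrt : Real.log √√t ≤ √t / 10 := by
    have := Real.log_le_sub_one_of_pos (by positivity : 0 < √√t)
    nlinarith
  calc 2 * √t * Real.log t = 2 * √t * (4 * Real.log √√t) := by
        rw [Real.log_sqrt (Real.sqrt_nonneg _), Real.log_sqrt ht0.le]
        ring
    _ ≤ 2 * √t * (4 * (√t / 10)) := by gcongr
    _ = 4 / 5 * √t ^ 2 := by ring
    _ = 4 / 5 * t := by rw [Real.sq_sqrt ht0.le]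

theorem psi_le_of_ten_pow_six_le {t : ℝ} (ht : 10 ^ 6 ≤ t) : Chebyshev.psi t ≤ 11 / 5 * t := by
  have hlog := mul_le_mul_of_nonneg_right log_four_le (by linarith : 0 ≤ t)
  linarith [Chebyshev.psi_le (by linarith : 1 ≤ t), two_mul_sqrt_mul_log_le ht]

theorem psi_le_six_mul {v : ℝ} (hv : 0 ≤ v) : Chebyshev.psi v ≤ 6 * v :=
  (Chebyshev.psi_le_const_mul_self hv).trans
    (mul_le_mul_of_nonneg_right (by linarith [log_four_le]) hv)

theorem psiSubTheta_le_sqrt {z : ℝ} (hz : 10 ^ 12 ≤ z) : psiSubTheta z ≤ 5 / 2 * √z := by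
  have hz0 : 0 < z := by linarith
  have hsqrt_eq : z ^ (2 : ℝ)⁻¹ = √z := by rw [Real.sqrt_eq_rpow, one_div]
  have hsqrt : 10 ^ 6 ≤ √z := Real.le_sqrt_of_sq_le (by linarith)
  have hsixth : 100 ≤ z ^ (6 : ℝ)⁻¹ := by
    rw [Real.le_rpow_inv_iff_of_pos (by norm_num) hz0.le (by norm_num), Real.rpow_ofNat]
    linarith
  have hthird : 100 * z ^ (3 : ℝ)⁻¹ ≤ √z :=
    calc 100 * z ^ (3 : ℝ)⁻¹ ≤ z ^ (6 : ℝ)⁻¹ * z ^ (3 : ℝ)⁻¹ := by gcongr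
      _ = √z := by
        rw [← Real.rpow_add hz0, ← hsqrt_eq]
        norm_num
  have hfifth : z ^ (5 : ℝ)⁻¹ ≤ z ^ (3 : ℝ)⁻¹ :=
    Real.rpow_le_rpow_of_exponent_le (by linarith) (by norm_num)
  have hsum := Chebyshev.psi_sub_theta_le_psi_add_psi_add_psi z
  rw [hsqrt_eq] at hsum
  rw [psiSubTheta]
  linarith [psi_le_of_ten_pow_six_le hsqrt,
    psi_le_six_mul (by positivity : 0 ≤ z ^ (3 : ℝ)⁻¹),
    psi_le_six_mul (by positivity : 0 ≤ z ^ (5 : ℝ)⁻¹)]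

theorem integral_sq_psiSubTheta_increment_le {x δ : ℝ} (hx : 10 ^ 12 ≤ x) (hδ0 : 0 ≤ δ)
    (hδ1 : δ ≤ 1 / 10000) :
    ∫ y in (1 : ℝ)..x, (psiSubTheta ((1 + δ) * y) - psiSubTheta y) ^ 2 ≤ 6.26 * (δ * x ^ 2) := by
  have hx0 : 0 ≤ x := by linarith
  have hxδ : x ≤ (1 + δ) * x := le_mul_of_one_le_left hx0 (by linarith)
  have hsq := pow_le_pow_left₀ (psiSubTheta_nonneg _) (psiSubTheta_le_sqrt (hx.trans hxδ)) 2
  rw [mul_pow, Real.sq_sqrt (hx0.trans hxδ)] at hsq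
  have hend : psiSubTheta ((1 + δ) * x) ^ 2 ≤ 6.26 * x := by nlinarith
  calc ∫ y in (1 : ℝ)..x, (psiSubTheta ((1 + δ) * y) - psiSubTheta y) ^ 2
      ≤ (1 + δ - 1) * x * psiSubTheta ((1 + δ) * x) ^ 2 :=
        integral_sq_increment_le_of_monotone monotone_psiSubTheta psiSubTheta_nonneg
          (by linarith) (by linarith)
    _ ≤ (1 + δ - 1) * x * (6.26 * x) := by
        gcongr
        linarith
    _ = 6.26 * (δ * x ^ 2) := by ring

theorem theta_increment_eq (a y : ℝ) :
    Chebyshev.theta (a * y) - Chebyshev.theta y - (a - 1) * y =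
      psiIncrement a y - (psiSubTheta (a * y) - psiSubTheta y) := by
  rw [psiIncrement, psiSubTheta, psiSubTheta]
  ring

theorem sub_sq_le_mul_sq_add_mul_sq {η : ℝ} (hη : 0 < η) (p q : ℝ) :
    (p - q) ^ 2 ≤ (1 + η) * p ^ 2 + (1 + η⁻¹) * q ^ 2 := by
  have hsquare : (1 + η) * p ^ 2 + (1 + η⁻¹) * q ^ 2 = (p - q) ^ 2 + η⁻¹ * (η * p + q) ^ 2 := by
    field_simp
    ring
  rw [hsquare]
  exact le_add_of_nonneg_right (by positivity)

theorem integral_sq_theta_increment_le {a x η : ℝ} (ha : 1 ≤ a) (hx : 1 ≤ x) (hη : 0 < η) :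
    ∫ y in (1 : ℝ)..x, (Chebyshev.theta (a * y) - Chebyshev.theta y - (a - 1) * y) ^ 2 ≤
      (1 + η) * (∫ y in (1 : ℝ)..x, psiIncrement a y ^ 2) +
        (1 + η⁻¹) * ∫ y in (1 : ℝ)..x, (psiSubTheta (a * y) - psiSubTheta y) ^ 2 := by
  have hpsi := (intervalIntegrable_sq_psiIncrement ha zero_le_one hx).const_mul (1 + η)
  have hpowers := (intervalIntegrable_sq_increment_of_monotone monotone_psiSubTheta
    psiSubTheta_nonneg ha zero_le_one hx).const_mul (1 + η⁻¹)
  have hmeas : Measurable fun y => psiIncrement a y - (psiSubTheta (a * y) - psiSubTheta y) :=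
    (measurable_psiIncrement a).sub ((monotone_psiSubTheta.measurable.comp
      (measurable_const_mul a)).sub monotone_psiSubTheta.measurable)
  have hpoint (y : ℝ) := sub_sq_le_mul_sq_add_mul_sq hη (psiIncrement a y)
    (psiSubTheta (a * y) - psiSubTheta y)
  simp only [theta_increment_eq]
  rw [← intervalIntegral.integral_const_mul, ← intervalIntegral.integral_const_mul,
    ← intervalIntegral.integral_add hpsi hpowers]
  refine intervalIntegral.integral_mono_on hx ((hpsi.add hpowers).mono_fun'
    (hmeas.pow_const 2).aestronglyMeasurable (ae_of_all _ fun y => ?_))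
    (hpsi.add hpowers) fun y _ => hpoint y
  beta_reduce
  rw [Real.norm_of_nonneg (sq_nonneg _)]
  exact hpoint y

end PrimePowers

section Numerics

theorem log_two_div_add_one_le {δ : ℝ} (hδ0 : 0 < δ) (hδ1 : δ ≤ 1 / 10000) :
    Real.log (2 / δ + 1) ≤ Real.log (2.0001 / δ) := by
  refine Real.log_le_log (by positivity) ?_
  rw [le_div_iff₀ hδ0, add_mul, div_mul_cancel₀ _ hδ0.ne']
  linarith

theorem le_log_of_two_pow_le {v : ℝ} (hv : 2 ^ 34 ≤ v) : 23.5 ≤ Real.log v := by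
  have hlog := Real.log_le_log (by norm_num) hv
  rw [Real.log_pow, Nat.cast_ofNat] at hlog
  linarith [Real.log_two_gt_d9]

theorem zeroEnergy_le {δ L : ℝ} (hδ0 : 0 < δ) (hδ1 : δ ≤ 1 / 10000) (hL : 23.5 ≤ L)
    (hlog : Real.log (2 / δ + 1) ≤ L) : zeroEnergy δ ≤ 2.193 * (δ * L ^ 2) := by
  have hlog0 : 0 ≤ Real.log (2 / δ + 1) := Real.log_nonneg (le_add_of_nonneg_left (by positivity))
  have hquad : Real.log (2 / δ + 1) ^ 2 + 2.22 * Real.log (2 / δ + 1) + 1 ≤ 1.0963 * L ^ 2 := by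
    nlinarith
  calc zeroEnergy δ ≤ δ * (2 + 1 / 10000) * (1.0963 * L ^ 2) := by
        rw [zeroEnergy]
        gcongr
    _ ≤ 2.193 * (δ * L ^ 2) := by nlinarith [mul_nonneg hδ0.le (sq_nonneg L)]

theorem integral_sq_psiIncrement_one_add_le (hRH : RiemannHypothesis) {x δ L : ℝ}
    (hx : 10 ^ 12 ≤ x) (hδ0 : 0 < δ) (hδ1 : δ ≤ 1 / 10000) (hL : 23.5 ≤ L)
    (hlog : Real.log (2 / δ + 1) ≤ L) :
    ∫ y in (1 : ℝ)..x, psiIncrement (1 + δ) y ^ 2 ≤ 2.1953 * (δ * x ^ 2 * L ^ 2) := by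
  have hpsi := integral_sq_psiIncrement_le hRH (x := x) (by linarith) (le_refl (1 + δ)) hδ0
    (by linarith) (by linarith)
  have : 0 < x := by linarith
  have henergy : x ^ 2 * zeroEnergy δ ≤ 2.193 * (δ * x ^ 2 * L ^ 2) :=
    (mul_le_mul_of_nonneg_left (zeroEnergy_le hδ0 hδ1 hL hlog) (sq_nonneg x)).trans_eq (by ring)
  have hsmall : 1003 * δ ^ 2 * x ≤ 1 / 10 ^ 6 * (δ * x ^ 2) := by
    have hδx : 1003 * δ ≤ 1 / 10 ^ 6 * x := by linarith
    nlinarith [mul_le_mul_of_nonneg_right hδx (by positivity : 0 ≤ δ * x)]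
  have hL_sq : δ * x ^ 2 ≤ δ * x ^ 2 * L ^ 2 :=
    le_mul_of_one_le_right (by positivity) (by nlinarith)
  linarith [(by positivity : 0 ≤ δ * x ^ 2)]

end Numerics

theorem chebyshevTheta_eq (x : ℝ) : chebyshevTheta x = Chebyshev.theta x := by
  rw [chebyshevTheta, Chebyshev.theta_eq_sum_Icc]
  rfl

theorem Jtheta_explicit_bound_general (hRH : RiemannHypothesis) {x δ : ℝ} (hx : 10 ^ 12 ≤ x)
    (hδ0 : 0 < δ) (hδ1 : δ ≤ 1 / 10 ^ 10) :
    ∫ y in (1 : ℝ)..x, (chebyshevTheta ((1 + δ) * y) - chebyshevTheta y - δ * y) ^ 2 ≤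
      2.5571 * δ * Real.log (2.0001 / δ) ^ 2 * x ^ 2 := by
  have hδ2 : δ ≤ 1 / 10000 := by linarith
  have hL : 23.5 ≤ Real.log (2.0001 / δ) :=
    le_log_of_two_pow_le ((le_div_iff₀ hδ0).2 (by linarith))
  have hpsi := integral_sq_psiIncrement_one_add_le hRH hx hδ0 hδ2 hL
    (log_two_div_add_one_le hδ0 hδ2)
  have hpowers := integral_sq_psiSubTheta_increment_le hx hδ0.le hδ2
  -- The two terms are in the ratio `6.26 / 23.5 ^ 2 : 2.1953`, which this `η` balances.
  have htheta := integral_sq_theta_increment_le (a := 1 + δ) (x := x) (η := 7 / 100)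
    (by linarith) (by linarith) (by norm_num)
  have hL_sq : 23.5 ^ 2 * (δ * x ^ 2) ≤ δ * x ^ 2 * Real.log (2.0001 / δ) ^ 2 := by
    rw [mul_comm]
    gcongr
  simp only [chebyshevTheta_eq]
  rw [add_sub_cancel_left] at htheta
  linarith [(by positivity : 0 ≤ δ * x ^ 2)]

/-- Assuming RH, for `x ≥ 10^13` and `δ ∈ (0, 10^{-13}]` we have
`J_θ(x,δ) = ∫₁^x (θ((1+δ)y) − θ(y) − δy)² dy ≤ 2.5571 δ (log(2.0001/δ))² x²`. -/
theorem Jtheta_explicit_bound (hRH : RiemannHypothesis) (x δ : ℝ)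
    (hx : (10 : ℝ) ^ (13 : ℕ) ≤ x) (hδ0 : 0 < δ) (hδ1 : δ ≤ (10 : ℝ) ^ (-13 : ℤ)) :
    ∫ y in (1 : ℝ)..x, (chebyshevTheta ((1 + δ) * y) - chebyshevTheta y - δ * y) ^ 2 ≤
      2.5571 * δ * Real.log (2.0001 / δ) ^ 2 * x ^ 2 := by
  exact Jtheta_explicit_bound_general hRH (le_trans (by norm_num) hx) hδ0
    (hδ1.trans (by norm_num))
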